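/- arXiv:1909.13320 — 2 statements merged into one kernel-verified Lean document; each statement's English description precedes it below -/
import Mathlib

section
/- Fix 0 < ε < 1, let δ = ε^6/10^20 and N = 10^16/ε^4, and let p be a probability distribution on a countable alphabet Σ with p(σ) < δ for all σ ∈ Σ. For i ∈ ℕ let Σ_i = {σ ∈ Σ : δ/2^i < p(σ) ≤ δ/2^{i−1}}, let I = {i ∈ ℕ : |Σ_i| > N}, and let Σ_I = ∪_{i∈I} Σ_i; assume Σ_I is nonempty. Then there exists a coloring {g_σ}_{σ∈Σ_I} of ℕ such that for all σ ∈ Σ_I: (1) g_σ is well-distributed with d(g_σ) = p(σ)/(∑_{τ∈Σ_I} p(τ)), (2) QR_1(g_σ) ≤ 1 + 1000/N^{1/4} = 1 + ε/10, and (3) g_σ(n+1) − g_σ(n) ≥ N/4 for all n ∈ ℕ. -/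
open scoped ENNReal

/-- The `k`-quasi-regularity of a strictly increasing `f : ℕ → ℕ`:
`QRk k f = ⨆_{q,r ≥ k, n,m} (q/r) · (f(n+r) − f(n)) / (f(m+q) − f(m))`. -/
noncomputable def QRk (k : ℕ) (f : ℕ → ℕ) : ℝ≥0∞ :=
  ⨆ (q : ℕ) (r : ℕ) (_ : k ≤ q) (_ : k ≤ r) (n : ℕ) (m : ℕ),
    ((q : ℝ≥0∞) / (r : ℝ≥0∞)) *
      (((f (n + r) - f n : ℕ) : ℝ≥0∞) / ((f (m + q) - f m : ℕ) : ℝ≥0∞))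

/-- The quasi-regularity of a strictly increasing `f : ℕ → ℕ`:
the supremum of ratios of consecutive gaps. -/
noncomputable def QRfun (f : ℕ → ℕ) : ℝ≥0∞ :=
  ⨆ (n : ℕ) (m : ℕ),
    ((f (n + 1) - f n : ℕ) : ℝ≥0∞) / ((f (m + 1) - f m : ℕ) : ℝ≥0∞)

/-- `f` is well-distributed with density `d`: `|f⁻¹({1,…,n})| / n → d`. -/
def HasDensityFun (f : ℕ → ℕ) (d : ℝ) : Prop :=
  Filter.Tendsto
    (fun n : ℕ => ({m : ℕ | 1 ≤ f m ∧ f m ≤ n}.ncard : ℝ) / (n : ℝ))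
    Filter.atTop (nhds d)

/-- A coloring of `ℕ` with color set `C`: a family of strictly increasing functions `ℕ → ℕ`
such that every natural number is hit exactly once by the whole family. -/
def IsColoring {C : Type*} (f : C → ℕ → ℕ) : Prop :=
  (∀ c, StrictMono (f c)) ∧ ∀ m : ℕ, ∃! ci : C × ℕ, f ci.1 ci.2 = m


/-- Earliest-deadline-first scheduling. -/
theorem edf_aux {J : Type*} (r D : J → ℕ)
    (h1 : ∀ s t : ℕ, s ≤ t → ∀ F : Finset J, (∀ j ∈ F, s ≤ r j ∧ D j < t) → F.card ≤ t - s)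
    (h2 : ∀ n : ℕ, ∃ F : Finset J, n < F.card ∧ ∀ j ∈ F, r j ≤ n) :
    ∃ T : J → ℕ, Function.Bijective T ∧ ∀ j, r j ≤ T j ∧ T j ≤ D j := by
  classical
  have hpick : ∀ (n : ℕ) (U : Finset J), ∃ x : J, U.card ≤ n →
      (x ∉ U ∧ r x ≤ n ∧ ∀ y, y ∉ U → r y ≤ n → D x ≤ D y) := by
    intro n U
    obtain ⟨F, hF, hFr⟩ := h2 n
    have hFne : F.Nonempty := Finset.card_pos.mp (by omega)
    by_cases hU : U.card ≤ n
    · obtain ⟨z, hz, hzU⟩ : ∃ z ∈ F, z ∉ U := Finset.exists_mem_notMem_of_card_lt_card (by omega)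
      have hne : ({y | y ∉ U ∧ r y ≤ n} : Set J).Nonempty := ⟨z, hzU, hFr z hz⟩
      refine ⟨Function.argminOn D {y | y ∉ U ∧ r y ≤ n} hne, fun _ => ?_⟩
      have := Function.argminOn_mem D {y | y ∉ U ∧ r y ≤ n} hne
      refine ⟨this.1, this.2, fun y hy hry => ?_⟩
      exact Function.argminOn_le D {y | y ∉ U ∧ r y ≤ n} (a := y) ⟨hy, hry⟩
    · exact ⟨hFne.choose, fun h => absurd h hU⟩
  choose pick hpick using hpick
  let used : ℕ → Finset J := fun n => Nat.rec ∅ (fun n U => insert (pick n U) U) n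
  have used_succ : ∀ n, used (n+1) = insert (pick n (used n)) (used n) := fun n => rfl
  have hcard : ∀ n, (used n).card ≤ n := by
    intro n
    induction n with
    | zero => exact le_of_eq (Finset.card_empty)
    | succ n ih =>
      rw [used_succ]
      exact (Finset.card_insert_le _ _).trans (by omega)
  let e : ℕ → J := fun n => pick n (used n)
  have he : ∀ n, e n ∉ used n ∧ r (e n) ≤ n ∧ ∀ y, y ∉ used n → r y ≤ n → D (e n) ≤ D y :=
    fun n => hpick n (used n) (hcard n)
  have hmono : ∀ a b, a ≤ b → used a ⊆ used b := by
    intro a b hab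
    induction b, hab using Nat.le_induction with
    | base => exact subset_rfl
    | succ b _ ih => rw [used_succ]; exact ih.trans (Finset.subset_insert _ _)
  have hmem : ∀ n x, x ∈ used n → ∃ k < n, e k = x := by
    intro n
    induction n with
    | zero => intro x hx; exact absurd hx (Finset.notMem_empty _)
    | succ n ih =>
      intro x hx
      rw [used_succ, Finset.mem_insert] at hx
      rcases hx with hx | hx
      · exact ⟨n, by omega, hx.symm⟩
      · obtain ⟨k, hk, h⟩ := ih x hx
        exact ⟨k, by omega, h⟩
  have hin : ∀ a b, a < b → e a ∈ used b := by
    intro a b hab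
    apply hmono (a+1) b hab
    rw [used_succ]; exact Finset.mem_insert_self _ _
  have hinj : Function.Injective e := by
    intro a b hab
    rcases lt_trichotomy a b with h | h | h
    · exact absurd (hab ▸ hin a b h) (he b).1
    · exact h
    · exact absurd (hab ▸ hin b a h) (he a).1
  have hdl : ∀ j, j ∈ used (D j + 1) := by
    intro j
    by_contra hj
    have hex : ∃ s, s ≤ D j + 1 ∧ ∀ n, s ≤ n → n ≤ D j → D (e n) ≤ D j :=
      ⟨D j + 1, le_rfl, fun n h1 h2 => by omega⟩
    obtain ⟨hs1, hs2⟩ := Nat.find_spec hex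
    set s := Nat.find hex with hs
    have hrel : ∀ y, y ∉ used (s - 1) → D y ≤ D j → s ≤ r y := by
      intro y hy hDy
      by_contra hlt
      push Not at hlt
      have hspos : 0 < s := by omega
      have := Nat.find_min hex (m := s - 1) (by omega)
      push Not at this
      obtain ⟨n, hn1, hn2, hn3⟩ := this (by omega)
      have hns : n = s - 1 := by
        by_contra hne
        have := hs2 n (by omega) hn2
        omega
      subst hns
      have := (he (s-1)).2.2 y hy (by omega)
      omega
    have hb := h1 s (D j + 1) hs1 (insert j ((Finset.Ico s (D j + 1)).image e)) ?_
    · rw [Finset.card_insert_of_notMem, Finset.card_image_of_injective _ hinj, Nat.card_Ico] at hb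
      · omega
      · intro h
        obtain ⟨n, hn, hne⟩ := Finset.mem_image.mp h
        rw [Finset.mem_Ico] at hn
        exact hj (hne ▸ hin n _ hn.2)
    · intro x hx
      rw [Finset.mem_insert] at hx
      rcases hx with rfl | hx
      · exact ⟨hrel x (fun h => hj (hmono (s-1) (D x + 1) (by omega) h)) le_rfl, by omega⟩
      · obtain ⟨n, hn, rfl⟩ := Finset.mem_image.mp hx
        rw [Finset.mem_Ico] at hn
        have h3 := hs2 n hn.1 (by omega)
        exact ⟨hrel _ (fun h => (he n).1 (hmono (s-1) n (by omega) h)) h3, by omega⟩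
  have hT : ∀ j, ∃ k, k < D j + 1 ∧ e k = j := fun j => hmem _ j (hdl j)
  choose T hT1 hT2 using hT
  refine ⟨T, ⟨?_, ?_⟩, ?_⟩
  · intro a b hab
    rw [← hT2 a, ← hT2 b, hab]
  · intro n
    exact ⟨e n, hinj (hT2 _)⟩
  · intro j
    have := (he (T j)).2.1
    rw [hT2] at this
    exact ⟨this, by have := hT1 j; omega⟩

theorem floor_sum_aux (m : ℕ) (hm : 0 < m) (y : ℝ) (hy : 0 ≤ y) :
    ∑ i : Fin m, ⌊y + (i : ℕ) / (m : ℝ)⌋₊ = ⌊(m : ℝ) * y⌋₊ := by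
  have key : ∀ q : ℕ, ∑ i ∈ Finset.range m, (q + i) / m = q := by
    intro q
    induction q with
    | zero =>
      apply Finset.sum_eq_zero
      intro i hi
      rw [Finset.mem_range] at hi
      exact Nat.div_eq_of_lt (by omega)
    | succ q ih =>
      have e1 := Finset.sum_range_succ (fun i => (q + i) / m) m
      have e2 := Finset.sum_range_succ' (fun i => (q + i) / m) m
      have e3 : (q + m) / m = q / m + 1 := Nat.add_div_right _ hm
      have e4 : ∑ i ∈ Finset.range m, (q + 1 + i) / m = ∑ i ∈ Finset.range m, (q + (i + 1)) / m :=
        Finset.sum_congr rfl (fun i _ => by congr 1; omega)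
      simp only [Nat.add_zero] at e2
      omega
  rw [Fin.sum_univ_eq_sum_range (fun i => ⌊y + (i : ℕ) / (m : ℝ)⌋₊) m]
  conv_rhs => rw [← key ⌊(m : ℝ) * y⌋₊]
  apply Finset.sum_congr rfl
  intro i _
  have hm' : (0:ℝ) < m := by exact_mod_cast hm
  have : y + (i : ℝ) / m = ((m:ℝ) * y + i) / m := by field_simp
  rw [this, Nat.floor_div_natCast, Nat.floor_add_natCast (by positivity)]

/-- interpolation -/
noncomputable def interpAux (k : ℕ → ℝ) (u : ℝ) : ℝ :=
  k ⌊u⌋₊ + (u - ⌊u⌋₊) * (k (⌊u⌋₊ + 1) - k ⌊u⌋₊)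

theorem interp_mono (k : ℕ → ℝ) (hk : ∀ n, k n ≤ k (n+1)) (u v : ℝ) (hu : 0 ≤ u) (huv : u ≤ v) :
    interpAux k u ≤ interpAux k v := by
  have hm : Monotone k := monotone_nat_of_le_succ hk
  have a1 := Nat.floor_le hu
  have a2 := Nat.lt_floor_add_one u
  have b1 := Nat.floor_le (hu.trans huv)
  have b2 := Nat.lt_floor_add_one v
  unfold interpAux
  rcases (Nat.floor_mono huv).eq_or_lt with h | h
  · rw [← h]
    have := hk ⌊u⌋₊
    nlinarith
  · have c1 := hk ⌊u⌋₊
    have c2 := hk ⌊v⌋₊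
    have c3 := hm (Nat.succ_le_of_lt h)
    rw [Nat.succ_eq_add_one] at c3
    have d1 : k ⌊u⌋₊ + (u - ⌊u⌋₊) * (k (⌊u⌋₊ + 1) - k ⌊u⌋₊) ≤ k (⌊u⌋₊+1) := by nlinarith
    have d2 : k ⌊v⌋₊ ≤ k ⌊v⌋₊ + (v - ⌊v⌋₊) * (k (⌊v⌋₊ + 1) - k ⌊v⌋₊) := by nlinarith
    linarith

theorem interp_bounds (k : ℕ → ℝ) (a b : ℝ) (hk : ∀ n, k n + a ≤ k (n+1) ∧ k (n+1) ≤ k n + b)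
    (u v : ℝ) (hu : 0 ≤ u) (huv : u ≤ v) :
    a * (v - u) ≤ interpAux k v - interpAux k u ∧ interpAux k v - interpAux k u ≤ b * (v - u) := by
  have h1 := interp_mono (fun n => k n - a * n) (fun n => by have := (hk n).1; push_cast; linarith)
    u v hu huv
  have h2 := interp_mono (fun n => b * n - k n) (fun n => by have := (hk n).2; push_cast; linarith)
    u v hu huv
  unfold interpAux at *
  push_cast at h1 h2
  constructor <;> nlinarith

/-- Sequence with prescribed frequencies. -/
theorem type_seq {m : ℕ} (f : Fin (m+1) → ℝ) (hf : ∀ i, 0 ≤ f i) (hs : ∑ i, f i = 1) :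
    ∃ (a : ℕ → Fin (m+1)) (k : ℕ → Fin (m+1) → ℕ), (∀ i, k 0 i = 0) ∧
      (∀ n i, k (n+1) i = k n i + if i = a n then 1 else 0) ∧
      (∀ n, ∑ i, k n i = n) ∧
      ∀ n i, |(k n i : ℝ) - n * f i| ≤ m + 1 := by
  classical
  have hpick : ∀ (n : ℕ) (c : Fin (m+1) → ℕ), ∃ i, ∀ j,
      ((n:ℝ)+1) * f j - c j ≤ ((n:ℝ)+1) * f i - c i := by
    intro n c
    obtain ⟨i, -, hi⟩ := Finset.exists_max_image Finset.univ
      (fun j => ((n:ℝ)+1) * f j - c j) Finset.univ_nonempty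
    exact ⟨i, fun j => hi j (Finset.mem_univ _)⟩
  choose pick hpick using hpick
  obtain ⟨k, k0, ks⟩ : ∃ k : ℕ → Fin (m+1) → ℕ, (∀ i, k 0 i = 0) ∧
      ∀ n i, k (n+1) i = k n i + if i = pick n (k n) then 1 else 0 :=
    ⟨fun n => Nat.rec (fun _ => 0)
      (fun n c => fun i => c i + if i = pick n c then 1 else 0) n, fun i => rfl, fun n i => rfl⟩
  have ksum : ∀ n, ∑ i, k n i = n := by
    intro n
    induction n with
    | zero => simp [k0]
    | succ n ih => simp [ks, Finset.sum_add_distrib, ih]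
  have ksumR : ∀ n : ℕ, ∑ i : Fin (m+1), (k n i : ℝ) = (n : ℝ) := fun n => by exact_mod_cast ksum n
  have hlow : ∀ (n : ℕ) i, -1 ≤ (n:ℝ) * f i - k n i := by
    intro n
    induction n with
    | zero => intro i; simp [k0]
    | succ n ih =>
      intro i
      rw [ks]
      by_cases hi : i = pick n (k n)
      · rw [if_pos hi]
        have hmax := hpick n (k n)
        rw [← hi] at hmax
        have hsum : ∑ j, (((n:ℝ)+1) * f j - k n j) = 1 := by
          rw [Finset.sum_sub_distrib, ← Finset.mul_sum, hs, ksumR]; ring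
        have : 0 ≤ ((n:ℝ)+1) * f i - k n i := by
          by_contra hneg
          push Not at hneg
          have : ∑ j, (((n:ℝ)+1) * f j - k n j) ≤ 0 :=
            Finset.sum_nonpos (fun j _ => (hmax j).trans hneg.le)
          linarith
        push_cast
        linarith
      · rw [if_neg hi]
        have := ih i
        have := hf i
        push_cast
        linarith
  refine ⟨fun n => pick n (k n), k, k0, ks, ksum, fun n i => ?_⟩
  rw [abs_le]
  constructor
  · have hsum : ∑ j, ((n:ℝ) * f j - k n j) = 0 := by
      rw [Finset.sum_sub_distrib, ← Finset.mul_sum, hs, ksumR]; ring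
    have h3 : ∑ j, ((n:ℝ) * f j - k n j + 1) = m + 1 := by
      rw [Finset.sum_add_distrib, hsum]; simp
    have h4 := Finset.single_le_sum (f := fun j => ((n:ℝ) * f j - k n j + 1))
      (fun j _ => by have := hlow n j; linarith) (Finset.mem_univ i)
    rw [h3] at h4
    linarith
  · have := hlow n i
    have : (0:ℝ) ≤ m := by positivity
    linarith

/-- A phase function of mean slope `d` and relative slope error `κ`. -/
def GoodPhase (κ d : ℝ) (ψ : ℝ → ℝ) : Prop :=
  0 ≤ ψ 0 ∧ ψ 0 ≤ 1 ∧
  (∀ s t, 0 ≤ s → s ≤ t →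
    d * (1 - κ) * (t - s) ≤ ψ t - ψ s ∧ ψ t - ψ s ≤ d * (1 + κ) * (t - s)) ∧
  ∃ B, ∀ t, 0 ≤ t → |ψ t - d * t| ≤ B

theorem group_fin (M : ℕ) (hM : 2 ≤ M) (d : Fin (M+1) → ℝ) (W : ℝ) (hW : ∑ i, d i = W)
    (hW0 : 0 < W) (hd : ∀ i, W * (M - 1) / M ^ 2 ≤ d i) :
    ∃ ψ : Fin (M+1) → ℝ → ℝ, (∀ i, GoodPhase (1 / (M - 1)) (d i) (ψ i)) ∧
      ∀ t, 0 ≤ t → |∑ i, (⌊ψ i t⌋₊ : ℝ) - W * t| ≤ 2 := by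
  have hM' : (2:ℝ) ≤ M := by exact_mod_cast hM
  have hM0 : (0:ℝ) < M := by linarith
  have hM1 : (0:ℝ) < (M:ℝ) - 1 := by linarith
  set f : Fin (M+1) → ℝ := fun i => d i * M ^ 2 / W - (M - 1) with hfdef
  have hf0 : ∀ i, 0 ≤ f i := by
    intro i
    have := hd i
    rw [div_le_iff₀ (by positivity)] at this
    simp only [hfdef]
    rw [sub_nonneg, le_div_iff₀ hW0]
    linarith
  have hfs : ∑ i, f i = 1 := by
    simp only [hfdef]
    rw [Finset.sum_sub_distrib, ← Finset.sum_div, ← Finset.sum_mul, hW]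
    simp
    field_simp
    ring
  have hf1 : ∀ i, f i ≤ 1 := by
    intro i
    rw [← hfs]
    exact Finset.single_le_sum (fun j _ => hf0 j) (Finset.mem_univ i)
  have hdf : ∀ i, d i = W / M ^ 2 * ((M - 1) + f i) := by
    intro i
    simp only [hfdef]
    field_simp
    ring
  obtain ⟨a, k, k0, ks, ksum, kd⟩ := type_seq f hf0 hfs
  set Φ : Fin (M+1) → ℕ → ℝ := fun i n => n * ((M:ℝ) - 1) + k n i with hΦ
  have hΦ0 : ∀ i, Φ i 0 = 0 := by intro i; simp [hΦ, k0]
  have hΦs : ∀ i n, Φ i (n+1) = Φ i n + (((M:ℝ)-1) + if i = a n then 1 else 0) := by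
    intro i n
    simp only [hΦ, ks]
    push_cast
    split_ifs <;> ring
  have hinc : ∀ i n, Φ i n + ((M:ℝ)-1) ≤ Φ i (n+1) ∧ Φ i (n+1) ≤ Φ i n + M := by
    intro i n
    rw [hΦs]
    split_ifs <;> constructor <;> linarith
  have hI : ∀ i u, interpAux (Φ i) u = ⌊u⌋₊ * ((M:ℝ) - 1) + k ⌊u⌋₊ i +
      (u - ⌊u⌋₊) * (((M:ℝ)-1) + if i = a ⌊u⌋₊ then 1 else 0) := by
    intro i u
    unfold interpAux
    rw [hΦs]
    simp only [hΦ]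
    ring
  have hidiv : ∀ i : Fin (M+1), 0 ≤ ((i:ℕ):ℝ) / ((M+1 : ℕ) : ℝ) ∧
      ((i:ℕ):ℝ) / ((M+1 : ℕ) : ℝ) ≤ 1 := by
    intro i
    refine ⟨by positivity, ?_⟩
    rw [div_le_one (by positivity)]
    exact_mod_cast i.2.le
  refine ⟨fun i t => interpAux (Φ i) (W * t / M ^ 2) + ((i:ℕ):ℝ) / ((M+1 : ℕ) : ℝ), ?_, ?_⟩
  · intro i
    have h0 : interpAux (Φ i) (W * 0 / M ^ 2) = 0 := by
      simp [interpAux, hΦ0]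
    refine ⟨?_, ?_, ?_, ?_⟩
    · simp only [h0]; linarith [(hidiv i).1]
    · simp only [h0]; linarith [(hidiv i).2]
    · intro s t hs hst
      have hu : 0 ≤ W * s / M ^ 2 := by positivity
      have huv : W * s / M ^ 2 ≤ W * t / M ^ 2 := by gcongr
      obtain ⟨b1, b2⟩ := interp_bounds (Φ i) ((M:ℝ)-1) M (hinc i) _ _ hu huv
      have e : W * t / M ^ 2 - W * s / M ^ 2 = W / M ^ 2 * (t - s) := by ring
      rw [e] at b1 b2
      have hts : 0 ≤ t - s := by linarith
      have c1 : d i * (1 - 1 / (M - 1)) ≤ W / M ^ 2 * (M - 1) := by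
        rw [hdf i, mul_assoc]
        apply mul_le_mul_of_nonneg_left _ (by positivity)
        have : (1:ℝ) - 1 / (M - 1) = (M - 2) / (M - 1) := by field_simp; ring
        rw [this, mul_div_assoc', div_le_iff₀ hM1]
        nlinarith [hf1 i, hf0 i]
      have c2 : W / M ^ 2 * M ≤ d i * (1 + 1 / (M - 1)) := by
        rw [hdf i, mul_assoc]
        apply mul_le_mul_of_nonneg_left _ (by positivity)
        have : (1:ℝ) + 1 / (M - 1) = M / (M - 1) := by field_simp; ring
        rw [this, mul_div_assoc', le_div_iff₀ hM1]
        nlinarith [hf1 i, hf0 i]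
      have c3 := mul_le_mul_of_nonneg_right c1 hts
      have c4 := mul_le_mul_of_nonneg_right c2 hts
      constructor
      · linarith
      · linarith
    · refine ⟨M + 4, fun t ht => ?_⟩
      set u := W * t / M ^ 2 with hu
      have hu0 : 0 ≤ u := by positivity
      have hdt : d i * t = u * ((M - 1) + f i) := by rw [hdf i, hu]; ring
      simp only
      rw [hI, hdt]
      have a1 := Nat.floor_le hu0
      have a2 := Nat.lt_floor_add_one u
      have a3 := abs_le.mp (kd ⌊u⌋₊ i)
      have a4 := hidiv i
      have a5 := hf0 i
      have a6 := hf1 i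
      have a7 : 0 ≤ (u - ⌊u⌋₊) * f i := mul_nonneg (by linarith) a5
      have a8 : (u - ⌊u⌋₊) * f i ≤ 1 := by nlinarith
      rw [abs_le]
      split_ifs <;> constructor <;> nlinarith [a3.1, a3.2, a4.1, a4.2]
  · intro t ht
    set u := W * t / M ^ 2 with hu
    have hu0 : 0 ≤ u := by positivity
    have hWt : W * t = M ^ 2 * u := by rw [hu]; field_simp
    have a1 := Nat.floor_le hu0
    have a2 := Nat.lt_floor_add_one u
    set n := ⌊u⌋₊ with hn
    set x := u - n with hx
    have hx0 : 0 ≤ x := by linarith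
    have hx1 : x ≤ 1 := by linarith
    have hy0 : 0 ≤ x * ((M:ℝ)-1) := by positivity
    have hfl : ∀ i : Fin (M+1), ∃ e : ℕ, (e = 0 ∨ (e = 1 ∧ i = a n)) ∧
        (⌊interpAux (Φ i) u + ((i:ℕ):ℝ) / ((M+1 : ℕ) : ℝ)⌋₊ : ℝ) =
        (n * (M - 1) + k n i) + (⌊x * ((M:ℝ)-1) + ((i:ℕ):ℝ) / ((M+1 : ℕ) : ℝ)⌋₊ : ℝ) + e := by
      intro i
      have hz0 : 0 ≤ x * ((M:ℝ)-1) + ((i:ℕ):ℝ) / ((M+1 : ℕ) : ℝ) := by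
        have := (hidiv i).1; linarith
      set z := x * ((M:ℝ)-1) + ((i:ℕ):ℝ) / ((M+1 : ℕ) : ℝ) with hz
      have hcast : ((n * (M - 1) + k n i : ℕ) : ℝ) = n * ((M:ℝ) - 1) + k n i := by
        push_cast [Nat.cast_sub (show 1 ≤ M by omega)]; ring
      rw [hI, ← hn, ← hx]
      by_cases hi : i = a n
      · rw [if_pos hi]
        have e1 : n * ((M:ℝ) - 1) + k n i + x * ((M:ℝ) - 1 + 1) + ((i:ℕ):ℝ) / ((M+1 : ℕ) : ℝ)
            = (z + x) + ((n * (M - 1) + k n i : ℕ) : ℝ) := by rw [hcast, hz]; ring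
        rw [e1, Nat.floor_add_natCast (by linarith), ← hcast]
        have l1 : ⌊z⌋₊ ≤ ⌊z + x⌋₊ := Nat.floor_mono (by linarith)
        have l2 : ⌊z + x⌋₊ ≤ ⌊z⌋₊ + 1 := by
          rw [← Nat.floor_add_one hz0]; exact Nat.floor_mono (by linarith)
        rcases l1.eq_or_lt with h | h
        · exact ⟨0, Or.inl rfl, by rw [← h]; push_cast; ring⟩
        · refine ⟨1, Or.inr ⟨rfl, hi⟩, ?_⟩
          have : ⌊z + x⌋₊ = ⌊z⌋₊ + 1 := by omega
          rw [this]; push_cast; ring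
      · rw [if_neg hi]
        have e1 : n * ((M:ℝ) - 1) + k n i + x * ((M:ℝ) - 1 + 0) + ((i:ℕ):ℝ) / ((M+1 : ℕ) : ℝ)
            = z + ((n * (M - 1) + k n i : ℕ) : ℝ) := by rw [hcast, hz]; ring
        rw [e1, Nat.floor_add_natCast hz0, ← hcast]
        exact ⟨0, Or.inl rfl, by push_cast; ring⟩
    choose e he1 he2 using hfl
    have hE : ∑ i, (e i : ℝ) ≤ 1 := by
      have : ∑ i, (e i : ℝ) ≤ ∑ i, (if i = a n then (1:ℝ) else 0) := by
        apply Finset.sum_le_sum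
        intro i _
        rcases he1 i with h | ⟨h, h'⟩
        · rw [h]; split_ifs <;> simp
        · rw [h, if_pos h']; simp
      simpa using this
    have hE0 : 0 ≤ ∑ i, (e i : ℝ) := Finset.sum_nonneg (fun i _ => by positivity)
    have hH := floor_sum_aux (M+1) (by omega) (x * ((M:ℝ)-1)) hy0
    have hH' : ∑ i : Fin (M+1), (⌊x * ((M:ℝ)-1) + ((i:ℕ):ℝ) / ((M+1 : ℕ) : ℝ)⌋₊ : ℝ)
        = ⌊((M+1:ℕ):ℝ) * (x * ((M:ℝ)-1))⌋₊ := by exact_mod_cast hH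
    have g1 := Nat.floor_le (show 0 ≤ ((M+1:ℕ):ℝ) * (x * ((M:ℝ)-1)) by positivity)
    have g2 := Nat.lt_floor_add_one (((M+1:ℕ):ℝ) * (x * ((M:ℝ)-1)))
    have hk : ∑ i, (k n i : ℝ) = n := by exact_mod_cast ksum n
    simp only [← hu, he2]
    rw [Finset.sum_add_distrib, Finset.sum_add_distrib, Finset.sum_add_distrib, hH', hk, hWt]
    simp only [Finset.sum_const, Finset.card_univ, Fintype.card_fin, nsmul_eq_mul]
    have hux : u = n + x := by rw [hx]; ring
    rw [hux]
    push_cast at g1 g2 ⊢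
    rw [abs_le]
    constructor <;> nlinarith

theorem group_finset {C : Type*} (M : ℕ) (hM : 2 ≤ M) (T : Finset C) (hT : T.card = M + 1)
    (d : C → ℝ) (hd0 : ∀ σ ∈ T, 0 < d σ)
    (hd : ∀ σ ∈ T, ∀ τ ∈ T, d τ * (1 - 1 / (M:ℝ) ^ 2) ≤ d σ) :
    ∃ ψ : C → ℝ → ℝ, (∀ σ ∈ T, GoodPhase (1 / (M - 1)) (d σ) (ψ σ)) ∧
      ∀ t, 0 ≤ t → |∑ σ ∈ T, (⌊ψ σ t⌋₊ : ℝ) - (∑ σ ∈ T, d σ) * t| ≤ 2 := by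
  classical
  have hM' : (2:ℝ) ≤ M := by exact_mod_cast hM
  let e : T ≃ Fin (M+1) := T.equivFinOfCardEq hT
  have hsum : ∀ F : C → ℝ, ∑ i, F (e.symm i) = ∑ σ ∈ T, F σ := by
    intro F
    rw [← Finset.sum_coe_sort T F]
    exact Equiv.sum_comp e.symm (fun σ : T => F σ)
  have hTne : T.Nonempty := Finset.card_pos.mp (by omega)
  obtain ⟨ψ, h1, h2⟩ := group_fin M hM (fun i => d (e.symm i)) (∑ σ ∈ T, d σ) (hsum d)
    (Finset.sum_pos hd0 hTne) (by
      intro i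
      have h3 : ∑ τ ∈ T, d τ * (1 - 1 / (M:ℝ) ^ 2) ≤ ∑ τ ∈ T, d (e.symm i) :=
        Finset.sum_le_sum (fun τ hτ => hd _ (e.symm i).2 τ hτ)
      rw [← Finset.sum_mul, Finset.sum_const, hT, nsmul_eq_mul] at h3
      have h4 : (1:ℝ) - 1 / (M:ℝ) ^ 2 = (M - 1) / M ^ 2 * (M + 1) := by field_simp; ring
      rw [h4] at h3
      push_cast at h3
      have h5 : (0:ℝ) < M + 1 := by positivity
      rw [mul_div_assoc]
      refine le_of_mul_le_mul_right ?_ h5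
      linarith)
  refine ⟨fun σ => if h : σ ∈ T then ψ (e ⟨σ, h⟩) else 0, ?_, ?_⟩
  · intro σ hσ
    have := h1 (e ⟨σ, hσ⟩)
    simp only [Equiv.symm_apply_apply] at this
    simpa [hσ] using this
  · intro t ht
    have := h2 t ht
    rw [← hsum (fun σ => (⌊(if h : σ ∈ T then ψ (e ⟨σ, h⟩) else 0) t⌋₊ : ℝ))]
    simpa using this

theorem goodPhase_linear (κ d : ℝ) (hκ : 0 ≤ κ) (hd : 0 < d) : GoodPhase κ d (fun t => d * t) := by
  refine ⟨by simp, by simp, ?_, 0, fun t _ => by simp⟩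
  intro s t hs hst
  have : 0 ≤ d * κ * (t - s) := mul_nonneg (by positivity) (by linarith)
  constructor <;> nlinarith

theorem bucket_phase {C : Type*} (M : ℕ) (hM : 2 ≤ M) (d : C → ℝ) (b : ℝ) (hb : 0 < b)
    (n : ℕ) : ∀ S : Finset C, S.card = n → (∀ σ ∈ S, b < d σ ∧ d σ ≤ 2 * b) →
    ∃ ψ : C → ℝ → ℝ, (∀ σ ∈ S, GoodPhase (1 / (M - 1)) (d σ) (ψ σ)) ∧
      ∀ t, 0 ≤ t → |∑ σ ∈ S, (⌊ψ σ t⌋₊ : ℝ) - (∑ σ ∈ S, d σ) * t| ≤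
        2 * S.card / (M + 1) + M ^ 3 := by
  classical
  have hM' : (2:ℝ) ≤ M := by exact_mod_cast hM
  have hM0 : (0:ℝ) < M := by linarith
  induction n using Nat.strong_induction_on with
  | _ n ih =>
  intro S hSn hS
  by_cases hbig : M ^ 3 < S.card
  · have hmaps : ∀ σ ∈ S, ⌈(d σ / b - 1) * (M:ℝ) ^ 2⌉₊ ∈ Finset.Icc 1 (M ^ 2) := by
      intro σ hσ
      obtain ⟨h1, h2⟩ := hS σ hσ
      rw [Finset.mem_Icc]
      constructor
      · rw [Nat.one_le_ceil_iff]
        have : 1 < d σ / b := by rw [lt_div_iff₀ hb]; linarith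
        apply mul_pos (by linarith) (by positivity)
      · rw [Nat.ceil_le]
        have : d σ / b ≤ 2 := by rw [div_le_iff₀ hb]; linarith
        push_cast
        nlinarith [sq_nonneg (M:ℝ)]
    obtain ⟨y, hy, hcard⟩ := Finset.exists_lt_card_fiber_of_mul_lt_card_of_maps_to hmaps
      (n := M) (by rw [Nat.card_Icc]; simpa [pow_succ] using hbig)
    obtain ⟨T, hTsub, hTcard⟩ := Finset.exists_subset_card_eq (Nat.succ_le_of_lt hcard)
    have hTS : T ⊆ S := fun σ hσ => (Finset.mem_filter.mp (hTsub hσ)).1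
    have hTy : ∀ σ ∈ T, ⌈(d σ / b - 1) * (M:ℝ) ^ 2⌉₊ = y :=
      fun σ hσ => (Finset.mem_filter.mp (hTsub hσ)).2
    rw [Nat.succ_eq_add_one] at hTcard
    obtain ⟨ψ₁, p1, p2⟩ := group_finset M hM T hTcard d
      (fun σ hσ => hb.trans (hS σ (hTS hσ)).1) (by
        intro σ hσ τ hτ
        have e1 := hTy σ hσ
        have e2 := hTy τ hτ
        have hy1 : 1 ≤ y := (Finset.mem_Icc.mp hy).1
        have u1 : (d τ / b - 1) * (M:ℝ) ^ 2 ≤ y := by rw [← e2]; exact Nat.le_ceil _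
        have u2 : (y:ℝ) < (d σ / b - 1) * (M:ℝ) ^ 2 + 1 := by
          rw [← e1]; apply Nat.ceil_lt_add_one
          have : 1 < d σ / b := by rw [lt_div_iff₀ hb]; linarith [(hS σ (hTS hσ)).1]
          apply mul_nonneg (by linarith) (by positivity)
        have u3 : (d τ / b - d σ / b) * (M:ℝ) ^ 2 ≤ 1 := by linarith
        rw [← le_div_iff₀ (by positivity), ← sub_div, div_le_iff₀ hb] at u3
        have u4 : (1 / (M:ℝ)^2) * b ≤ (1 / (M:ℝ)^2) * d τ :=
          mul_le_mul_of_nonneg_left (hS τ (hTS hτ)).1.le (by positivity)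
        linarith)
    have hsd : (S \ T).card = S.card - (M + 1) := by
      rw [Finset.card_sdiff_of_subset hTS, hTcard]
    have hle : M + 1 ≤ S.card := hTcard ▸ Finset.card_le_card hTS
    obtain ⟨ψ₂, q1, q2⟩ := ih (S \ T).card (by omega) (S \ T) rfl
      (fun σ hσ => hS σ (Finset.mem_sdiff.mp hσ).1)
    refine ⟨fun σ => if σ ∈ T then ψ₁ σ else ψ₂ σ, ?_, ?_⟩
    · intro σ hσ
      by_cases h : σ ∈ T
      · simpa [h] using p1 σ h
      · simpa [h] using q1 σ (Finset.mem_sdiff.mpr ⟨hσ, h⟩)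
    · intro t ht
      rw [← Finset.sum_sdiff hTS, ← Finset.sum_sdiff hTS]
      have s1 : ∑ σ ∈ T, (⌊(if σ ∈ T then ψ₁ σ else ψ₂ σ) t⌋₊ : ℝ) = ∑ σ ∈ T, (⌊ψ₁ σ t⌋₊ : ℝ) :=
        Finset.sum_congr rfl (fun σ hσ => by rw [if_pos hσ])
      have s2 : ∑ σ ∈ S \ T, (⌊(if σ ∈ T then ψ₁ σ else ψ₂ σ) t⌋₊ : ℝ)
          = ∑ σ ∈ S \ T, (⌊ψ₂ σ t⌋₊ : ℝ) :=
        Finset.sum_congr rfl (fun σ hσ => by rw [if_neg (Finset.mem_sdiff.mp hσ).2])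
      rw [s1, s2]
      have v1 := abs_le.mp (p2 t ht)
      have v2 := abs_le.mp (q2 t ht)
      have v3 : ((S \ T).card : ℝ) = S.card - (M + 1) := by
        rw [hsd, Nat.cast_sub hle]; push_cast; ring
      have v4 : 2 * ((S \ T).card : ℝ) / (M + 1) = 2 * S.card / (M + 1) - 2 := by
        rw [v3]; field_simp
      rw [v4] at v2
      rw [abs_le]
      constructor <;> linarith [v1.1, v1.2, v2.1, v2.2]
  · refine ⟨fun σ t => d σ * t, ?_, ?_⟩
    · intro σ hσ
      exact goodPhase_linear _ _ (div_nonneg zero_le_one (by linarith)) (hb.trans (hS σ hσ).1)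
    · intro t ht
      rw [Finset.sum_mul, ← Finset.sum_sub_distrib]
      have h1 : |∑ σ ∈ S, ((⌊d σ * t⌋₊ : ℝ) - d σ * t)| ≤ ∑ σ ∈ S, (1:ℝ) := by
        refine (Finset.abs_sum_le_sum_abs _ _).trans (Finset.sum_le_sum fun σ hσ => ?_)
        have h0 : 0 ≤ d σ * t := mul_nonneg (hb.trans (hS σ hσ).1).le ht
        have a1 := Nat.floor_le h0
        have a2 := Nat.lt_floor_add_one (d σ * t)
        rw [abs_le]; constructor <;> linarith
      have h2 : (S.card : ℝ) ≤ M ^ 3 := by exact_mod_cast not_lt.mp hbig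
      have h3 : (0:ℝ) ≤ 2 * S.card / (M + 1) := by positivity
      simp only [Finset.sum_const, nsmul_eq_mul, mul_one] at h1
      linarith

theorem goodPhase_hit (κ d : ℝ) (hκ0 : 0 ≤ κ) (hκ : κ < 1) (hd : 0 < d) (ψ : ℝ → ℝ)
    (h : GoodPhase κ d ψ) (j : ℕ) : ∃ τ, 0 ≤ τ ∧ ψ τ = (j:ℝ) + 1 := by
  obtain ⟨h0, h1, hs, -⟩ := h
  have hlo : 0 < d * (1 - κ) := mul_pos hd (by linarith)
  have hX : 0 ≤ ((j:ℝ) + 1) / (d * (1 - κ)) := by positivity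
  have hcont : ContinuousOn ψ (Set.Icc 0 (((j:ℝ) + 1) / (d * (1 - κ)))) := by
    have : LipschitzOnWith (Real.toNNReal (d * (1 + κ))) ψ
        (Set.Icc 0 (((j:ℝ) + 1) / (d * (1 - κ)))) := by
      apply LipschitzOnWith.of_le_add_mul
      intro x hx y hy
      rw [Real.coe_toNNReal _ (by positivity), Real.dist_eq]
      rcases le_total x y with hxy | hxy
      · have a := (hs x y hx.1 hxy).1
        have : 0 ≤ d * (1 - κ) * (y - x) := mul_nonneg hlo.le (by linarith)
        have : 0 ≤ d * (1 + κ) * |x - y| := by positivity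
        linarith
      · have a := (hs y x hy.1 hxy).2
        rw [abs_of_nonneg (by linarith)]
        linarith
    exact this.continuousOn
  have hmem : ((j:ℝ) + 1) ∈ Set.Icc (ψ 0) (ψ (((j:ℝ) + 1) / (d * (1 - κ)))) := by
    refine ⟨by have : (0:ℝ) ≤ j := by positivity
               linarith, ?_⟩
    have a := (hs 0 _ le_rfl hX).1
    rw [sub_zero, mul_div_cancel₀ _ hlo.ne'] at a
    linarith
  obtain ⟨τ, hτ, e⟩ := intermediate_value_Icc hX hcont hmem
  exact ⟨τ, hτ.1, e⟩

theorem schedule_core {C ι : Type*} (b : C → ι) (S : ι → Finset C) (hS : ∀ i σ, σ ∈ S i ↔ b σ = i)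
    (d : C → ℝ) (hd : ∀ σ, 0 < d σ) (hsum : HasSum d 1) (κ : ℝ) (hκ0 : 0 ≤ κ) (hκ : κ < 1)
    (ψ : C → ℝ → ℝ) (hψ : ∀ σ, GoodPhase κ (d σ) (ψ σ)) (c : ι → ℝ) (hc : ∀ i, 0 < c i)
    (hdisc : ∀ i t, 0 ≤ t →
      |∑ σ ∈ S i, (⌊ψ σ t⌋₊ : ℝ) - (∑ σ ∈ S i, d σ) * t| ≤ (∑ σ ∈ S i, d σ) * c i) :
    ∃ (τ : C → ℕ → ℝ) (T : (_ : C) × ℕ → ℕ), Function.Bijective T ∧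
      ∀ σ j, 0 ≤ τ σ j ∧ ψ σ (τ σ j) = (j:ℝ) + 1 ∧ τ σ j - c (b σ) - 1 ≤ T ⟨σ, j⟩ ∧
        T ⟨σ, j⟩ ≤ τ σ j + c (b σ) := by
  classical
  have hτ : ∀ σ j, ∃ τ, 0 ≤ τ ∧ ψ σ τ = ((j:ℕ):ℝ) + 1 := fun σ j =>
    goodPhase_hit κ (d σ) hκ0 hκ (hd σ) (ψ σ) (hψ σ) j
  choose τ hτ0 hτ1 using hτ
  have hmono : ∀ σ s t, 0 ≤ s → s < t → ψ σ s < ψ σ t := by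
    intro σ s t hs hst
    have a := ((hψ σ).2.2.1 s t hs hst.le).1
    have : 0 < d σ * (1 - κ) * (t - s) :=
      mul_pos (mul_pos (hd σ) (by linarith)) (by linarith)
    linarith
  have hle : ∀ σ j t, 0 ≤ t → (τ σ j ≤ t ↔ j < ⌊ψ σ t⌋₊) := by
    intro σ j t ht
    rw [← Nat.add_one_le_iff, Nat.le_floor_iff' (by omega)]
    push_cast
    rw [← hτ1 σ j]
    constructor
    · intro h
      rcases h.eq_or_lt with h | h
      · rw [h]
      · exact (hmono σ _ _ (hτ0 σ j) h).le
    · intro h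
      by_contra hlt
      push Not at hlt
      exact absurd (hmono σ _ _ ht hlt) (not_lt.mpr h)
  have hdisj : ∀ I' : Finset ι, (I' : Set ι).PairwiseDisjoint S := by
    intro I' i _ j _ hij
    rw [Function.onFun, Finset.disjoint_left]
    intro σ h1 h2
    exact hij (((hS i σ).mp h1).symm.trans ((hS j σ).mp h2))
  have hedf := edf_aux (J := (_ : C) × ℕ)
    (fun x => ⌈τ x.1 x.2 - c (b x.1)⌉₊ - 1) (fun x => ⌈τ x.1 x.2 + c (b x.1)⌉₊ - 1) ?_ ?_
  · obtain ⟨T, hT, hTw⟩ := hedf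
    refine ⟨τ, T, hT, fun σ j => ⟨hτ0 σ j, hτ1 σ j, ?_, ?_⟩⟩
    · have h1 := (hTw ⟨σ, j⟩).1
      simp only at h1
      have h2 := Nat.le_ceil (τ σ j - c (b σ))
      have h3 : ((⌈τ σ j - c (b σ)⌉₊ : ℕ) : ℝ) ≤ T ⟨σ, j⟩ + 1 := by
        exact_mod_cast (by omega : ⌈τ σ j - c (b σ)⌉₊ ≤ T ⟨σ, j⟩ + 1)
      linarith
    · have h1 := (hTw ⟨σ, j⟩).2
      simp only at h1
      have hpos : 0 < τ σ j + c (b σ) := by have := hτ0 σ j; have := hc (b σ); linarith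
      have h2 := Nat.ceil_lt_add_one hpos.le
      have h4 : 1 ≤ ⌈τ σ j + c (b σ)⌉₊ := Nat.one_le_ceil_iff.mpr hpos
      have h3 : ((T ⟨σ, j⟩ : ℕ) : ℝ) + 1 ≤ ⌈τ σ j + c (b σ)⌉₊ := by
        exact_mod_cast (by omega : T ⟨σ, j⟩ + 1 ≤ ⌈τ σ j + c (b σ)⌉₊)
      linarith
  · intro s t hst F hF
    have hF' : ∀ x ∈ F, τ x.1 x.2 ≤ t - c (b x.1) ∧ (s = 0 ∨ (s:ℝ) + c (b x.1) < τ x.1 x.2) := by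
      intro x hx
      obtain ⟨h1, h2⟩ := hF x hx
      have hpos : 0 < τ x.1 x.2 + c (b x.1) := by
        have := hτ0 x.1 x.2; have := hc (b x.1); linarith
      have h4 : 1 ≤ ⌈τ x.1 x.2 + c (b x.1)⌉₊ := Nat.one_le_ceil_iff.mpr hpos
      constructor
      · have : ⌈τ x.1 x.2 + c (b x.1)⌉₊ ≤ t := by omega
        rw [Nat.ceil_le] at this
        linarith
      · rcases Nat.eq_zero_or_pos s with h | h
        · exact Or.inl h
        · right
          have : s < ⌈τ x.1 x.2 - c (b x.1)⌉₊ := by omega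
          rw [Nat.lt_ceil] at this
          linarith
    have hst' : (s:ℝ) ≤ t := by exact_mod_cast hst
    have hfib : ∀ i, ((F.filter (fun x => b x.1 = i)).card : ℝ) ≤
        (∑ σ ∈ S i, d σ) * ((t:ℝ) - s) := by
      intro i
      have hW : 0 ≤ ∑ σ ∈ S i, d σ := Finset.sum_nonneg (fun σ _ => (hd σ).le)
      rcases (F.filter (fun x => b x.1 = i)).eq_empty_or_nonempty with h | ⟨x, hx⟩
      · rw [h]; simp only [Finset.card_empty, Nat.cast_zero]
        exact mul_nonneg hW (by linarith)
      · rw [Finset.mem_filter] at hx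
        obtain ⟨hxF, hxi⟩ := hx
        obtain ⟨g1, g2⟩ := hF' x hxF
        rw [hxi] at g1 g2
        have g0 := hτ0 x.1 x.2
        have htc : 0 ≤ (t:ℝ) - c i := by linarith
        have hu := abs_le.mp (hdisc i _ htc)
        rcases Nat.eq_zero_or_pos s with hs0 | hs0
        · have hsub : F.filter (fun x => b x.1 = i) ⊆
              (S i).sigma (fun σ => Finset.range ⌊ψ σ (t - c i)⌋₊) := by
            intro y hy
            rw [Finset.mem_filter] at hy
            rw [Finset.mem_sigma, Finset.mem_range]
            refine ⟨(hS i _).mpr hy.2, (hle _ _ _ htc).mp ?_⟩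
            have := (hF' y hy.1).1
            rwa [hy.2] at this
          have hcard := Finset.card_le_card hsub
          rw [Finset.card_sigma] at hcard
          simp only [Finset.card_range] at hcard
          have hcard' : ((F.filter (fun x => b x.1 = i)).card : ℝ) ≤
            ∑ σ ∈ S i, (⌊ψ σ (t - c i)⌋₊ : ℝ) := by exact_mod_cast hcard
          rw [hs0]
          push_cast
          linarith [hu.2]
        · have g3 : (s:ℝ) + c i < τ x.1 x.2 := by
            rcases g2 with h | h
            · omega
            · exact h
          have hsc : 0 ≤ (s:ℝ) + c i := by have := hc i; positivity
          have hv := abs_le.mp (hdisc i _ hsc)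
          have hsub : F.filter (fun x => b x.1 = i) ⊆
              (S i).sigma (fun σ => Finset.Ico ⌊ψ σ (s + c i)⌋₊ ⌊ψ σ (t - c i)⌋₊) := by
            intro y hy
            rw [Finset.mem_filter] at hy
            rw [Finset.mem_sigma, Finset.mem_Ico]
            obtain ⟨f1, f2⟩ := hF' y hy.1
            rw [hy.2] at f1 f2
            refine ⟨(hS i _).mpr hy.2, ?_, (hle _ _ _ htc).mp f1⟩
            rcases f2 with h | h
            · omega
            · by_contra hlt
              push Not at hlt
              exact absurd ((hle _ _ _ hsc).mpr hlt) (not_le.mpr h)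
          have hcard := Finset.card_le_card hsub
          rw [Finset.card_sigma] at hcard
          simp only [Nat.card_Ico] at hcard
          have hcard' : ((F.filter (fun x => b x.1 = i)).card : ℝ) ≤
            ∑ σ ∈ S i, ((⌊ψ σ (t - c i)⌋₊ - ⌊ψ σ (s + c i)⌋₊ : ℕ) : ℝ) := by exact_mod_cast hcard
          have he : ∀ σ ∈ S i, ((⌊ψ σ (t - c i)⌋₊ - ⌊ψ σ (s + c i)⌋₊ : ℕ) : ℝ) =
              (⌊ψ σ (t - c i)⌋₊ : ℝ) - (⌊ψ σ (s + c i)⌋₊ : ℝ) := by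
            intro σ _
            rw [Nat.cast_sub]
            exact Nat.floor_mono (hmono σ _ _ hsc (by linarith)).le
          rw [Finset.sum_congr rfl he, Finset.sum_sub_distrib] at hcard'
          linarith [hu.2, hv.1]
    have h1 := Finset.card_eq_sum_card_image (fun x : (_ : C) × ℕ => b x.1) F
    have h2 : (F.card : ℝ) ≤ ∑ i ∈ F.image (fun x : (_ : C) × ℕ => b x.1),
        (∑ σ ∈ S i, d σ) * ((t:ℝ) - s) := by
      rw [h1]
      push_cast
      exact Finset.sum_le_sum (fun i _ => hfib i)
    rw [← Finset.sum_mul, ← Finset.sum_biUnion (hdisj _)] at h2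
    have h3 := sum_le_hasSum ((F.image (fun x : (_ : C) × ℕ => b x.1)).biUnion S)
      (fun σ _ => (hd σ).le) hsum
    have h4 : (F.card : ℝ) ≤ ((t - s : ℕ) : ℝ) := by
      rw [Nat.cast_sub hst]
      nlinarith
    exact_mod_cast h4
  · intro n
    have hlt : (n:ℝ) / (n + 1) < 1 := by rw [div_lt_one (by positivity)]; linarith
    obtain ⟨A, hA⟩ := (hsum.eventually (lt_mem_nhds hlt)).exists
    refine ⟨((A.image b).biUnion S).sigma (fun σ => Finset.range ⌊ψ σ (n + 1 + c (b σ))⌋₊), ?_, ?_⟩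
    · rw [Finset.card_sigma, Finset.sum_biUnion (hdisj _)]
      simp only [Finset.card_range]
      have h1 : ∀ i ∈ A.image b, (∑ σ ∈ S i, d σ) * ((n:ℝ) + 1) ≤
          ∑ σ ∈ S i, (⌊ψ σ (n + 1 + c (b σ))⌋₊ : ℝ) := by
        intro i _
        have e : ∑ σ ∈ S i, (⌊ψ σ (n + 1 + c (b σ))⌋₊ : ℝ)
            = ∑ σ ∈ S i, (⌊ψ σ (n + 1 + c i)⌋₊ : ℝ) :=
          Finset.sum_congr rfl (fun σ hσ => by rw [(hS i σ).mp hσ])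
        rw [e]
        have := hc i
        have hv := abs_le.mp (hdisc i (n + 1 + c i) (by positivity))
        linarith [hv.1]
      have h2 := Finset.sum_le_sum h1
      rw [← Finset.sum_mul, ← Finset.sum_biUnion (hdisj _)] at h2
      have h3 : ∑ σ ∈ A, d σ ≤ ∑ σ ∈ (A.image b).biUnion S, d σ := by
        apply Finset.sum_le_sum_of_subset_of_nonneg
        · intro σ hσ
          rw [Finset.mem_biUnion]
          exact ⟨b σ, Finset.mem_image_of_mem _ hσ, (hS _ _).mpr rfl⟩
        · intro σ _ _; exact (hd σ).le
      have hn : (0:ℝ) < (n:ℝ) + 1 := by positivity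
      rw [div_lt_iff₀ hn] at hA
      have h4 := mul_le_mul_of_nonneg_right h3 hn.le
      have h5 := (hA.trans_le h4).trans_le h2
      exact_mod_cast h5
    · intro x hx
      rw [Finset.mem_sigma, Finset.mem_range] at hx
      have hcb := hc (b x.1)
      have := (hle x.1 x.2 (n + 1 + c (b x.1)) (by positivity)).mpr hx.2
      have h2 : ⌈τ x.1 x.2 - c (b x.1)⌉₊ ≤ n + 1 := by
        rw [Nat.ceil_le]; push_cast; linarith
      omega

theorem density_of_bounded (g : ℕ → ℕ) (hg : StrictMono g) (d B : ℝ) (hd : 0 < d)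
    (h : ∀ j : ℕ, |d * g j - j| ≤ B) : HasDensityFun g d := by
  have hB : 0 ≤ B := (abs_nonneg _).trans (h 0)
  have key : ∀ n : ℕ, |({m : ℕ | 1 ≤ g m ∧ g m ≤ n}.ncard : ℝ) - d * n| ≤ B + 1 := by
    intro n
    have hsub : {m : ℕ | 1 ≤ g m ∧ g m ≤ n} ⊆ ↑(Finset.range (⌊d * n + B⌋₊ + 1)) := by
      intro m hm
      rw [Finset.coe_range, Set.mem_Iio, Nat.lt_add_one_iff, Nat.le_floor_iff (by positivity)]
      have h1 := abs_le.mp (h m)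
      have h2 : (g m : ℝ) ≤ n := by exact_mod_cast hm.2
      have h3 := mul_le_mul_of_nonneg_left h2 hd.le
      linarith [h1.1]
    have hfin : {m : ℕ | 1 ≤ g m ∧ g m ≤ n}.Finite := (Finset.finite_toSet _).subset hsub
    have hup := Set.ncard_le_ncard hsub (Finset.finite_toSet _)
    rw [Set.ncard_coe_finset, Finset.card_range] at hup
    have hup' : ({m : ℕ | 1 ≤ g m ∧ g m ≤ n}.ncard : ℝ) ≤ ⌊d * n + B⌋₊ + 1 := by
      exact_mod_cast hup
    have hfl := Nat.floor_le (show 0 ≤ d * n + B by positivity)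
    have hsub2 : ↑(Finset.Icc 1 ⌊d * n - B⌋₊) ⊆ {m : ℕ | 1 ≤ g m ∧ g m ≤ n} := by
      intro m hm
      rw [Finset.coe_Icc, Set.mem_Icc] at hm
      refine ⟨hm.1.trans (hg.id_le m), ?_⟩
      have h4 := (Nat.le_floor_iff' (by omega)).mp hm.2
      have h1 := abs_le.mp (h m)
      have h5 : d * g m ≤ d * n := by linarith [h1.2]
      exact_mod_cast le_of_mul_le_mul_left h5 hd
    have hlo := Set.ncard_le_ncard hsub2 hfin
    rw [Set.ncard_coe_finset, Nat.card_Icc] at hlo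
    have hlo' : (⌊d * n - B⌋₊ : ℝ) ≤ {m : ℕ | 1 ≤ g m ∧ g m ≤ n}.ncard := by
      exact_mod_cast (by omega)
    have hfl2 := Nat.sub_one_lt_floor (d * n - B)
    rw [abs_le]
    constructor <;> linarith
  unfold HasDensityFun
  rw [tendsto_iff_norm_sub_tendsto_zero]
  have hlim : Filter.Tendsto (fun n : ℕ => (B + 1) / (n:ℝ)) Filter.atTop (nhds 0) :=
    tendsto_const_div_atTop_nhds_zero_nat (B + 1)
  refine squeeze_zero' (Filter.Eventually.of_forall (fun n => norm_nonneg _)) ?_ hlim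
  filter_upwards [Filter.eventually_gt_atTop 0] with n hn
  have hn' : (0:ℝ) < n := by exact_mod_cast hn
  rw [Real.norm_eq_abs, le_div_iff₀ hn', ← abs_of_pos hn', ← abs_mul, abs_of_pos hn', sub_mul,
    div_mul_cancel₀ _ hn'.ne']
  exact key n

theorem qr_of_gaps (g : ℕ → ℕ) (hg : StrictMono g) (A B x : ℝ) (hA : 0 < A) (hx : 0 ≤ x)
    (hAB : B ≤ A * (1 + x)) (h : ∀ n, A ≤ (g (n+1) : ℝ) - g n ∧ (g (n+1) : ℝ) - g n ≤ B) :
    QRk 1 g ≤ ENNReal.ofReal (1 + x) := by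
  have hr : ∀ n r : ℕ, r * A ≤ (g (n+r) : ℝ) - g n ∧ (g (n+r) : ℝ) - g n ≤ r * B := by
    intro n r
    induction r with
    | zero => simp
    | succ r ih =>
      have := h (n + r)
      rw [← add_assoc]
      push_cast
      constructor <;> linarith [ih.1, ih.2, this.1, this.2]
  unfold QRk
  refine iSup_le fun q => iSup_le fun r => iSup_le fun hq => iSup_le fun hr1 => iSup_le fun n =>
    iSup_le fun m => ?_
  have hq0 : (0:ℝ) < q := by exact_mod_cast hq
  have hr0 : (0:ℝ) < r := by exact_mod_cast hr1
  have c1 : ((g (n+r) - g n : ℕ) : ℝ) = (g (n+r) : ℝ) - g n :=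
    Nat.cast_sub (hg.monotone (by omega))
  have c2 : ((g (m+q) - g m : ℕ) : ℝ) = (g (m+q) : ℝ) - g m :=
    Nat.cast_sub (hg.monotone (by omega))
  have hY : 0 < ((g (m+q) - g m : ℕ) : ℝ) := by
    rw [c2]; have := (hr m q).1; have : 0 < q * A := by positivity
    linarith
  rw [← ENNReal.ofReal_natCast q, ← ENNReal.ofReal_natCast r,
    ← ENNReal.ofReal_natCast (g (n+r) - g n), ← ENNReal.ofReal_natCast (g (m+q) - g m),
    ← ENNReal.ofReal_div_of_pos hr0, ← ENNReal.ofReal_div_of_pos hY,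
    ← ENNReal.ofReal_mul (by positivity)]
  apply ENNReal.ofReal_le_ofReal
  rw [div_mul_div_comm, div_le_iff₀ (by positivity), c1, c2]
  have h1 := (hr n r).2
  have h2 := (hr m q).1
  calc (q:ℝ) * ((g (n+r) : ℝ) - g n) ≤ q * (r * B) := by gcongr
    _ ≤ q * (r * (A * (1 + x))) := by gcongr
    _ = (1 + x) * (r * (q * A)) := by ring
    _ ≤ (1 + x) * (r * ((g (m+q) : ℝ) - g m)) := by gcongr

theorem gap_bounds (d κ c η : ℝ) (ψ : ℝ → ℝ) (hd : 0 < d) (hη : 0 < η) (hη1 : η ≤ 1 / 10 ^ 4)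
    (hκ0 : 0 ≤ κ) (hκ : κ ≤ 2 * η) (hψ : GoodPhase κ d ψ) (hc : c * d ≤ 6 * η) (hdη : d ≤ η)
    (τ : ℕ → ℝ) (g : ℕ → ℕ)
    (h : ∀ j : ℕ, 0 ≤ τ j ∧ ψ (τ j) = (j:ℝ) + 1 ∧ τ j - c - 1 ≤ g j ∧ (g j : ℝ) ≤ τ j + c) (j : ℕ) :
    (1 - 15 * η) / d ≤ (g (j+1) : ℝ) - g j ∧ (g (j+1) : ℝ) - g j ≤ (1 + 17 * η) / d := by
  obtain ⟨a0, a1, a2, a3⟩ := h j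
  obtain ⟨b0, b1, b2, b3⟩ := h (j+1)
  have hlt : τ j ≤ τ (j+1) := by
    by_contra hlt
    push Not at hlt
    have := (hψ.2.2.1 _ _ b0 hlt.le).1
    have h2 : 0 ≤ d * (1 - κ) * (τ j - τ (j+1)) :=
      mul_nonneg (mul_nonneg hd.le (by linarith)) (by linarith)
    rw [a1, b1] at this
    push_cast at this
    linarith
  obtain ⟨s1, s2⟩ := hψ.2.2.1 _ _ a0 hlt
  rw [a1, b1] at s1 s2
  push_cast at s1 s2 b1
  set x := d * (τ (j+1) - τ j) with hx
  have s1' : (1 - κ) * x ≤ 1 := by rw [hx]; linarith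
  have s2' : 1 ≤ (1 + κ) * x := by rw [hx]; linarith
  have hx1 : 1 - κ ≤ x := by nlinarith
  have hx2 : x ≤ 1 + 2 * κ := by nlinarith
  have e1 : d * ((g (j+1) : ℝ) - g j) ≥ x - 2 * (c * d) - d := by
    have := mul_le_mul_of_nonneg_left (show τ (j+1) - τ j - 2 * c - 1 ≤ (g (j+1) : ℝ) - g j by linarith)
      hd.le
    rw [hx]; linarith
  have e2 : d * ((g (j+1) : ℝ) - g j) ≤ x + 2 * (c * d) + d := by
    have := mul_le_mul_of_nonneg_left (show (g (j+1) : ℝ) - g j ≤ τ (j+1) - τ j + 2 * c + 1 by linarith)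
      hd.le
    rw [hx]; linarith
  rw [div_le_iff₀ hd, le_div_iff₀ hd]
  constructor <;> linarith

theorem density_of_phase (d κ c : ℝ) (ψ : ℝ → ℝ) (hd : 0 < d) (hψ : GoodPhase κ d ψ)
    (τ : ℕ → ℝ) (g : ℕ → ℕ) (hg : StrictMono g) (hc : 0 < c)
    (h : ∀ j : ℕ, 0 ≤ τ j ∧ ψ (τ j) = (j:ℝ) + 1 ∧ τ j - c - 1 ≤ g j ∧ (g j : ℝ) ≤ τ j + c) :
    HasDensityFun g d := by
  obtain ⟨B, hB⟩ := hψ.2.2.2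
  apply density_of_bounded g hg d (B + 1 + d * (c + 1)) hd
  intro j
  obtain ⟨a0, a1, a2, a3⟩ := h j
  have h1 := abs_le.mp (hB _ a0)
  rw [a1] at h1
  have h2 := mul_le_mul_of_nonneg_left a2 hd.le
  have h3 := mul_le_mul_of_nonneg_left a3 hd.le
  rw [abs_le]
  constructor <;> nlinarith [h1.1, h1.2]

/-- **Claim.** Fix `0 < ε < 1`, `δ = ε⁶/10²⁰`, `N = 10¹⁶/ε⁴`, and a probability distribution `p`
on a countable alphabet with `p σ < δ` for all `σ`. Bucket the alphabet by
`Σ_i = {σ : δ/2^i < p σ ≤ δ/2^(i−1)}`, let `I` be the set of indices of buckets with more than `N`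
characters and `Σ_I` the union of those buckets; assume `Σ_I ≠ ∅`. Then there is a coloring
`{g σ}_{σ ∈ Σ_I}` of `ℕ` such that each `g σ` has density `p σ / ∑_{τ ∈ Σ_I} p τ`,
`QR₁(g σ) ≤ 1 + 1000/N^(1/4)`, and all gaps of `g σ` are at least `N/4`. -/
theorem exists_coloring_on_big_buckets (α : Type) [Countable α]
    (ε δ N : ℝ) (hε0 : 0 < ε) (hε1 : ε < 1)
    (hδ : δ = ε ^ 6 / 10 ^ 20) (hN : N = 10 ^ 16 / ε ^ 4)
    (p : α → ℝ) (hp0 : ∀ σ, 0 ≤ p σ) (hp1 : HasSum p 1)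
    (hsmall : ∀ σ, p σ < δ)
    (Sig : ℕ → Set α)
    (hSig : ∀ i : ℕ, Sig i = {σ | δ / 2 ^ i < p σ ∧ p σ ≤ δ / 2 ^ (i - 1)})
    (I : Set ℕ) (hI : I = {i : ℕ | N < ((Sig i).ncard : ℝ)})
    (SigI : Set α) (hSigI : SigI = ⋃ i ∈ I, Sig i)
    (hne : SigI.Nonempty) :
    ∃ g : SigI → ℕ → ℕ, IsColoring g ∧
      ∀ σ : SigI,
        HasDensityFun (g σ) (p σ / ∑' τ : SigI, p τ) ∧
        QRk 1 (g σ) ≤ ENNReal.ofReal (1 + 1000 / N ^ ((1 : ℝ) / 4)) ∧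
        ∀ n : ℕ, N / 4 ≤ ((g σ (n + 1) - g σ n : ℕ) : ℝ) := by
  classical
  -- the parameter R = N^(1/4)
  set R : ℝ := 10 ^ 4 / ε with hR
  have hRbig : (10:ℝ) ^ 4 ≤ R := by
    rw [hR, le_div_iff₀ hε0]; nlinarith
  have hR0 : 0 < R := by linarith [show (0:ℝ) < 10 ^ 4 by norm_num]
  have hNR : N = R ^ 4 := by rw [hN, hR, div_pow]; norm_num
  have hroot : N ^ ((1:ℝ) / 4) = R := by
    rw [hNR, ← Real.rpow_natCast, ← Real.rpow_mul hR0.le]; norm_num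
  set η : ℝ := 1 / R with hη
  have hη0 : 0 < η := by positivity
  have hη1 : η ≤ 1 / 10 ^ 4 := by
    rw [hη]; exact one_div_le_one_div_of_le (by norm_num) hRbig
  have hRη : R * η = 1 := by rw [hη]; field_simp
  have h1000 : 1000 / N ^ ((1:ℝ) / 4) = 1000 * η := by rw [hroot, hη]; ring
  rw [h1000]
  have hN0 : 0 < N := by rw [hNR]; positivity
  have hδ0 : 0 < δ := by rw [hδ]; positivity
  set M : ℕ := ⌊R⌋₊ with hM
  have hMR : (M:ℝ) ≤ R := Nat.floor_le hR0.le
  have hMR' : R < (M:ℝ) + 1 := Nat.lt_floor_add_one R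
  have hM2 : 2 ≤ M := by
    rw [hM, Nat.le_floor_iff hR0.le]; push_cast; linarith [show (2:ℝ) < 10 ^ 4 by norm_num]
  have hM2' : (2:ℝ) ≤ M := by exact_mod_cast hM2
  have hκ0 : 0 ≤ 1 / ((M:ℝ) - 1) := div_nonneg zero_le_one (by linarith)
  have hκ : 1 / ((M:ℝ) - 1) ≤ 2 * η := by
    rw [div_le_iff₀ (by linarith)]
    have : R / 2 ≤ (M:ℝ) - 1 := by linarith [show (4:ℝ) < 10 ^ 4 by norm_num]
    nlinarith
  -- buckets
  have hmemSig : ∀ i σ, σ ∈ Sig i ↔ δ / 2 ^ i < p σ ∧ p σ ≤ δ / 2 ^ (i - 1) := by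
    intro i σ; rw [hSig]; rfl
  have hpos_idx : ∀ i σ, σ ∈ Sig i → 1 ≤ i := by
    intro i σ h
    by_contra hi
    have : i = 0 := by omega
    subst this
    have := (hmemSig 0 σ).mp h
    simp at this
    linarith [this.1, this.2]
  have hlt_idx : ∀ i j σ, σ ∈ Sig i → σ ∈ Sig j → ¬ i < j := by
    intro i j σ hi hj hij
    have h1 := ((hmemSig i σ).mp hi).1
    have h2 := ((hmemSig j σ).mp hj).2
    have h3 : δ / 2 ^ (j - 1) ≤ δ / 2 ^ i := by
      apply div_le_div_of_nonneg_left hδ0.le (by positivity)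
      exact pow_le_pow_right₀ (by norm_num) (by omega)
    linarith
  have hexb : ∀ σ : SigI, ∃ i, i ∈ I ∧ (σ : α) ∈ Sig i := by
    have h : ∀ x, x ∈ SigI → ∃ i, i ∈ I ∧ x ∈ Sig i := by
      intro x hx
      rw [hSigI] at hx
      simpa using hx
    intro σ
    exact h σ σ.2
  choose b hbI hbS using hexb
  have hbuniq : ∀ (σ : SigI) i, (σ : α) ∈ Sig i → b σ = i := by
    intro σ i h
    rcases lt_trichotomy (b σ) i with h' | h' | h'
    · exact absurd h' (hlt_idx _ _ _ (hbS σ) h)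
    · exact h'
    · exact absurd h' (hlt_idx _ _ _ h (hbS σ))
  have hIN : ∀ i ∈ I, N < ((Sig i).ncard : ℝ) := by intro i hi; rw [hI] at hi; exact hi
  have hSigfin : ∀ i ∈ I, (Sig i).Finite := by
    intro i hi
    apply Set.finite_of_ncard_pos
    have := hN0.trans (hIN i hi)
    exact_mod_cast this
  have hfin : ∀ i, {σ : SigI | b σ = i}.Finite := by
    intro i
    by_cases hi : i ∈ I
    · apply Set.Finite.of_finite_image (f := Subtype.val)
      · apply (hSigfin i hi).subset
        rintro _ ⟨σ, hσ, rfl⟩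
        have := hbS σ
        rwa [hσ] at this
      · exact Subtype.val_injective.injOn
    · apply Set.Finite.subset Set.finite_empty
      intro σ hσ
      exact hi (hσ ▸ hbI σ)
  let S : ℕ → Finset SigI := fun i => (hfin i).toFinset
  have hS : ∀ i σ, σ ∈ S i ↔ b σ = i := by intro i σ; simp [S]
  have hScard : ∀ i ∈ I, N < ((S i).card : ℝ) := by
    intro i hi
    refine (hIN i hi).trans_le ?_
    have hsub : Sig i ⊆ ((S i).image Subtype.val : Finset α) := by
      intro σ hσ
      have hσI : σ ∈ SigI := by rw [hSigI]; simp only [Set.mem_iUnion]; exact ⟨i, hi, hσ⟩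
      rw [Finset.mem_coe, Finset.mem_image]
      exact ⟨⟨σ, hσI⟩, (hS i _).mpr (hbuniq _ _ hσ), rfl⟩
    have h1 := Set.ncard_le_ncard hsub (Finset.finite_toSet _)
    rw [Set.ncard_coe_finset] at h1
    exact_mod_cast h1.trans Finset.card_image_le
  -- densities
  have hpp : ∀ σ : SigI, 0 < p σ := by
    intro σ
    have := ((hmemSig _ _).mp (hbS σ)).1
    have h2 : 0 < δ / 2 ^ (b σ) := by positivity
    linarith
  have hsummable : Summable (fun σ : SigI => p σ) := hp1.summable.subtype SigI
  set P : ℝ := ∑' τ : SigI, p τ with hP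
  have hP0 : 0 < P := by
    obtain ⟨x, hx⟩ := hne
    exact hsummable.tsum_pos (fun σ => hp0 σ) ⟨x, hx⟩ (hpp ⟨x, hx⟩)
  set d : SigI → ℝ := fun σ => p σ / P with hdd
  have hd0 : ∀ σ, 0 < d σ := fun σ => div_pos (hpp σ) hP0
  have hdsum : HasSum d 1 := by
    have := hsummable.hasSum.div_const P
    rw [← hP, div_self hP0.ne'] at this
    exact this
  have hrange : ∀ i, ∀ σ ∈ S i, δ / 2 ^ i / P < d σ ∧ d σ ≤ 2 * (δ / 2 ^ i / P) := by
    intro i σ hσ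
    have hb := (hS i σ).mp hσ
    have hm := hbS σ
    rw [hb] at hm
    have hi1 := hpos_idx i _ hm
    obtain ⟨h1, h2⟩ := (hmemSig _ _).mp hm
    have h3 : δ / 2 ^ (i - 1) = 2 * (δ / 2 ^ i) := by
      obtain ⟨k, rfl⟩ : ∃ k, i = k + 1 := ⟨i - 1, by omega⟩
      rw [Nat.add_sub_cancel, pow_succ]
      field_simp
    rw [h3] at h2
    refine ⟨div_lt_div_of_pos_right h1 hP0, ?_⟩
    have := div_le_div_of_nonneg_right h2 hP0.le
    simp only [hdd]
    linarith [mul_div_assoc 2 (δ / 2 ^ i) P]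
  have hph : ∀ i, ∃ ψ : SigI → ℝ → ℝ, (∀ σ ∈ S i, GoodPhase (1 / ((M:ℝ) - 1)) (d σ) (ψ σ)) ∧
      ∀ t, 0 ≤ t → |∑ σ ∈ S i, (⌊ψ σ t⌋₊ : ℝ) - (∑ σ ∈ S i, d σ) * t| ≤
        2 * (S i).card / (M + 1) + M ^ 3 := fun i =>
    bucket_phase M hM2 d (δ / 2 ^ i / P) (by positivity) _ (S i) rfl (hrange i)
  choose ψ hψ1 hψ2 using hph
  let c : ℕ → ℝ := fun i => if (S i).Nonempty then
    (2 * (S i).card / (M + 1) + M ^ 3) / (∑ σ ∈ S i, d σ) else 1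
  have hWpos : ∀ i, (S i).Nonempty → 0 < ∑ σ ∈ S i, d σ := fun i hi =>
    Finset.sum_pos (fun σ _ => hd0 σ) hi
  have hc0 : ∀ i, 0 < c i := by
    intro i
    by_cases h : (S i).Nonempty
    · simp only [c, if_pos h]
      have := hWpos i h
      have : (0:ℝ) < M := by linarith
      positivity
    · simp [c, if_neg h]
  have hψS : ∀ i, ∀ σ ∈ S i, ψ (b σ) σ = ψ i σ := by
    intro i σ hσ; rw [(hS i σ).mp hσ]
  obtain ⟨τ, T, hT, hTτ⟩ := schedule_core b S hS d hd0 hdsum (1 / ((M:ℝ) - 1)) hκ0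
    (by linarith [show (2:ℝ) * (1 / 10 ^ 4) < 1 by norm_num]) (fun σ => ψ (b σ) σ)
    (fun σ => hψ1 (b σ) σ ((hS _ _).mpr rfl)) c hc0 (by
      intro i t ht
      have e : ∑ σ ∈ S i, (⌊ψ (b σ) σ t⌋₊ : ℝ) = ∑ σ ∈ S i, (⌊ψ i σ t⌋₊ : ℝ) :=
        Finset.sum_congr rfl (fun σ hσ => by rw [hψS i σ hσ])
      rw [e]
      by_cases h : (S i).Nonempty
      · simp only [c, if_pos h]
        rw [mul_div_cancel₀ _ (hWpos i h).ne']
        exact hψ2 i t ht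
      · rw [Finset.not_nonempty_iff_eq_empty] at h
        simp [h])
  -- numerical bounds
  have hnum : ∀ σ, c (b σ) * d σ ≤ 6 * η ∧ d σ * N ≤ 2 := by
    intro σ
    have hσS : σ ∈ S (b σ) := (hS _ _).mpr rfl
    have hne' : (S (b σ)).Nonempty := ⟨σ, hσS⟩
    have hW := hWpos _ hne'
    have hk := hScard (b σ) (hbI σ)
    have hW1 : ∑ σ ∈ S (b σ), d σ ≤ 1 := sum_le_hasSum _ (fun σ _ => (hd0 σ).le) hdsum
    have hWk : (S (b σ)).card * d σ ≤ 2 * ∑ σ ∈ S (b σ), d σ := by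
      rw [← nsmul_eq_mul, ← Finset.sum_const, Finset.mul_sum]
      apply Finset.sum_le_sum
      intro τ hτ
      have h1 := (hrange _ τ hτ).1
      have h2 := (hrange _ σ hσS).2
      linarith
    set W := ∑ σ ∈ S (b σ), d σ with hWdef
    set k : ℝ := ((S (b σ)).card : ℝ) with hkdef
    have hk0 : 0 < k := hN0.trans hk
    have hdσ := hd0 σ
    constructor
    · simp only [c, if_pos hne']
      rw [← hWdef, div_mul_eq_mul_div, div_le_iff₀ hW]
      have h3 : 2 * k / (M + 1) + (M:ℝ) ^ 3 ≤ 3 * η * k := by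
        have h4 : 2 * k / ((M:ℝ) + 1) ≤ 2 * η * k := by
          rw [div_le_iff₀ (by linarith)]
          have : 1 ≤ η * ((M:ℝ) + 1) := by nlinarith
          nlinarith
        have h5 : (M:ℝ) ^ 3 ≤ η * k := by
          have h6 : (M:ℝ) ^ 3 ≤ R ^ 3 := by gcongr
          have h7 : R ^ 3 = η * N := by
            rw [hNR, show η * R ^ 4 = (R * η) * R ^ 3 by ring, hRη, one_mul]
          have h8 : η * N ≤ η * k := by gcongr
          linarith
        linarith
      have h9 := mul_le_mul_of_nonneg_right h3 hdσ.le
      have h10 := mul_le_mul_of_nonneg_left hWk (show 0 ≤ 3 * η by positivity)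
      linarith
    · have : d σ * N ≤ d σ * k := by gcongr
      linarith
  have hdη : ∀ σ, d σ ≤ η := by
    intro σ
    have h1 := (hnum σ).2
    have h2 : 2 ≤ η * N := by
      rw [hNR, show η * R ^ 4 = (R * η) * R ^ 3 by ring, hRη, one_mul]
      have : (10:ℝ) ^ 4 ≤ R ^ 3 := hRbig.trans (le_self_pow₀ (by linarith [show (1:ℝ) < 10 ^ 4 by norm_num]) (by norm_num))
      linarith [show (2:ℝ) < 10 ^ 4 by norm_num]
    exact le_of_mul_le_mul_right (h1.trans h2) hN0
  have hgap : ∀ σ j, (1 - 15 * η) / d σ ≤ (T ⟨σ, j + 1⟩ : ℝ) - T ⟨σ, j⟩ ∧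
      (T ⟨σ, j + 1⟩ : ℝ) - T ⟨σ, j⟩ ≤ (1 + 17 * η) / d σ := by
    intro σ j
    exact gap_bounds (d σ) (1 / ((M:ℝ) - 1)) (c (b σ)) η (ψ (b σ) σ) (hd0 σ) hη0 hη1 hκ0 hκ
      (hψ1 (b σ) σ ((hS _ _).mpr rfl)) (hnum σ).1 (hdη σ) (τ σ) (fun j => T ⟨σ, j⟩) (hTτ σ) j
  have hη15 : 1 / 2 ≤ 1 - 15 * η := by linarith [show (15:ℝ) * (1 / 10 ^ 4) ≤ 1 / 2 by norm_num]
  have hA0 : ∀ σ, 0 < (1 - 15 * η) / d σ := fun σ => div_pos (by linarith) (hd0 σ)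
  have hmono : ∀ σ, StrictMono (fun j => T ⟨σ, j⟩) := by
    intro σ
    apply strictMono_nat_of_lt_succ
    intro j
    have h1 := (hgap σ j).1
    have h2 := hA0 σ
    have h3 : (T ⟨σ, j⟩ : ℝ) < T ⟨σ, j + 1⟩ := by linarith
    exact_mod_cast h3
  refine ⟨fun σ j => T ⟨σ, j⟩, ⟨hmono, ?_⟩, ?_⟩
  · intro m
    obtain ⟨⟨σ, j⟩, hx⟩ := hT.2 m
    refine ⟨(σ, j), hx, ?_⟩
    rintro ⟨σ', j'⟩ hx'
    have := hT.1 (hx'.trans hx.symm)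
    simp only [Sigma.mk.injEq, heq_eq_eq] at this
    rw [this.1, this.2]
  · intro σ
    refine ⟨?_, ?_, ?_⟩
    · exact density_of_phase (d σ) (1 / ((M:ℝ) - 1)) (c (b σ)) (ψ (b σ) σ) (hd0 σ)
        (hψ1 (b σ) σ ((hS _ _).mpr rfl)) (τ σ) _ (hmono σ) (hc0 _) (hTτ σ)
    · apply qr_of_gaps _ (hmono σ) _ _ _ (hA0 σ) (by positivity) _ (hgap σ)
      rw [div_mul_eq_mul_div]
      apply div_le_div_of_nonneg_right _ (hd0 σ).le
      nlinarith
    · intro n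
      rw [Nat.cast_sub (hmono σ (Nat.lt_succ_self n)).le]
      refine le_trans ?_ (hgap σ n).1
      rw [le_div_iff₀ (hd0 σ)]
      have := (hnum σ).2
      linarith
end

section
/- Let Σ be a finite alphabet, n : Σ → ℕ a frame defined on all of Σ, and p, p' ∈ PBA_n. For any (n,p)-uniform string s : {1,…,2^{M_n}} → Σ, there exist an (n,p')-uniform string s' : {1,…,2^{M_n}} → Σ, a k ∈ ℕ, and a string t : {1,…,k·2^{M_n}} → Σ such that s →_{n,t} s'. -/
open scoped Classical

/-- A frame on the alphabet `A`: a positive integer value for each character of a nonempty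
subset `supp` of `A`. -/
structure Frame (A : Type*) where
  supp : Finset A
  supp_nonempty : supp.Nonempty
  val : A → ℕ
  val_pos : ∀ a ∈ supp, 1 ≤ val a

/-- `M_n = max_{σ ∈ Σ_n} (n σ + 5)`. -/
def Frame.M {A : Type*} (F : Frame A) : ℕ := F.supp.sup fun a => F.val a + 5

/-- A (partial) string with characters from `A`: a partial function `ℕ → A`, `none` meaning
"not in the domain". -/
def PStr (A : Type*) := ℕ → Option A

/-- The domain of a string. -/
def PStr.dom {A : Type*} (s : PStr A) : Set ℕ := {i | (s i).isSome}

/-- The set of characters appearing in a string. -/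
def PStr.chars {A : Type*} (s : PStr A) : Set A := {σ | ∃ i, s i = some σ}

/-- `max_n I = ⌈(max I) / 2^{M_n}⌉` for the domain `I` of the string `s`. -/
noncomputable def PStr.maxn {A : Type*} (F : Frame A) (s : PStr A) : ℕ :=
  (sSup s.dom + 2 ^ F.M - 1) / 2 ^ F.M

/-- `s[n,k]`: the restriction of the translate of `s` by `−(k−1)·2^{M_n}` to `{1,…,2^{M_n}}`. -/
def PStr.shift {A : Type*} (F : Frame A) (k : ℕ) (s : PStr A) : PStr A :=
  fun i => if 1 ≤ i ∧ i ≤ 2 ^ F.M then s (i + (k - 1) * 2 ^ F.M) else none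

/-- `MaxGap(s,σ)` (in `ℕ∞`): the sup of all `m ≥ 1` such that for some `k` with
`k, k+m` in the domain, `σ` does not occur strictly between `k` and `k+m`. -/
noncomputable def PStr.maxGap {A : Type*} (s : PStr A) (σ : A) : ℕ∞ :=
  sSup ((fun m : ℕ => (m : ℕ∞)) ''
    {m | 1 ≤ m ∧ ∃ k : ℕ, k ∈ s.dom ∧ k + m ∈ s.dom ∧
      ∀ i ∈ s.dom, k < i → i < k + m → s i ≠ some σ})

/-- `MinGap(s,σ)` (in `ℕ∞`): the inf of all `m ≥ 1` with `s k = s (k+m) = σ` for some `k`. -/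
noncomputable def PStr.minGap {A : Type*} (s : PStr A) (σ : A) : ℕ∞ :=
  sInf ((fun m : ℕ => (m : ℕ∞)) ''
    {m | 1 ≤ m ∧ ∃ k : ℕ, s k = some σ ∧ s (k + m) = some σ})

/-- `s` is locally `n`-compatible: for every `σ ∈ Σ_n` appearing in `s`,
`2^{n σ − 1} ≤ MinGap(s,σ) ≤ MaxGap(s,σ) ≤ 2^{n σ}`. -/
def PStr.LocallyCompatible {A : Type*} (F : Frame A) (s : PStr A) : Prop :=
  ∀ σ ∈ F.supp, σ ∈ s.chars →
    (2 ^ (F.val σ - 1) : ℕ∞) ≤ s.minGap σ ∧ s.minGap σ ≤ s.maxGap σ ∧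
      s.maxGap σ ≤ (2 ^ F.val σ : ℕ∞)

/-- `s` is `n`-compatible: for every `σ ∈ Σ_n`,
`2^{n σ − 1} ≤ MinGap(s,σ) ≤ MaxGap(s,σ) ≤ 2^{n σ}`. -/
def PStr.Compatible {A : Type*} (F : Frame A) (s : PStr A) : Prop :=
  ∀ σ ∈ F.supp,
    (2 ^ (F.val σ - 1) : ℕ∞) ≤ s.minGap σ ∧ s.minGap σ ≤ s.maxGap σ ∧
      s.maxGap σ ≤ (2 ^ F.val σ : ℕ∞)

/-- `s ∨ t`: the common extension of strings with disjoint domains. -/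
def PStr.join {A : Type*} (s t : PStr A) : PStr A :=
  fun i => (s i).orElse fun _ => t i

/-- The translate `arr s m` of `s` by `m ≥ 0`. -/
def PStr.translate {A : Type*} (m : ℕ) (s : PStr A) : PStr A :=
  fun i => if m ≤ i then s (i - m) else none

/-- The restriction of `s` to a set of positions. -/
noncomputable def PStr.restrict {A : Type*} (s : PStr A) (I : Set ℕ) : PStr A :=
  fun i => if i ∈ I then s i else none

/-- The `n`-concatenation `s ∧_n t`. -/
noncomputable def PStr.concatN {A : Type*} (F : Frame A) (s t : PStr A) : PStr A :=
  s.join (PStr.translate (s.maxn F * 2 ^ F.M) t)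

/-- `s ⋄_n t`: glueing overlapping strings (assuming `s[n,−1] = t[n,+1]`). -/
noncomputable def PStr.diamondN {A : Type*} (F : Frame A) (s t : PStr A) : PStr A :=
  PStr.concatN F (s.restrict (Set.Icc 1 ((s.maxn F - 1) * 2 ^ F.M))) t

/-- `s →_{n,t} s'`: `t` is a locally `n`-compatible connecting string from `s` to `s'`,
i.e. `Σ_t = Σ_s = Σ_{s'}`, `t[n,+1] = s` and `t[n,−1] = s'`. -/
def PStr.StrArrow {A : Type*} (F : Frame A) (s s' t : PStr A) : Prop :=
  t.chars = s.chars ∧ s.chars = s'.chars ∧ t.LocallyCompatible F ∧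
    t.shift F 1 = s ∧ t.shift F (t.maxn F) = s'

/-- `p` is a probability distribution on the finite alphabet `A`. -/
def IsProbDist {A : Type*} [Fintype A] (p : A → ℝ) : Prop :=
  (∀ σ, 0 ≤ p σ) ∧ ∑ σ, p σ = 1

/-- `x` is one of the two binary values `2 ^ (−n σ)`, `2 ^ (−(n σ − 1))` allowed at `σ`. -/
def BinaryVal {A : Type*} (n : A → ℕ) (σ : A) (x : ℝ) : Prop :=
  x = (2 : ℝ) ^ (-(n σ : ℤ)) ∨ x = (2 : ℝ) ^ (-((n σ : ℤ) - 1))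

/-- `Π_n`: probability distributions `p` with `2^(−n σ) ≤ p σ ≤ 2^(−(n σ −1))` for all `σ`. -/
def PiN {A : Type*} [Fintype A] (n : A → ℕ) : Set (A → ℝ) :=
  {p | IsProbDist p ∧
    ∀ σ, (2 : ℝ) ^ (-(n σ : ℤ)) ≤ p σ ∧ p σ ≤ (2 : ℝ) ^ (-((n σ : ℤ) - 1))}

/-- `PBA_n`: pseudo-binary approximations for the frame `n`. -/
def PBA {A : Type*} [Fintype A] (n : A → ℕ) : Set (A → ℝ) :=
  {p | p ∈ PiN n ∧
    ∀ σ τ : A, ¬ BinaryVal n σ (p σ) → ¬ BinaryVal n τ (p τ) → σ = τ}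

/-- `J` is an `N`-saturated arithmetic progression in `{1,…,2^N}` with common difference `D`:
`D = 2^j` for some `j ≤ N`, and `J` consists of all elements of `{1,…,2^N}` congruent to its
first element `r ∈ {1,…,D}` modulo `D`. -/
def IsSatAP (N : ℕ) (J : Set ℕ) (D : ℕ) : Prop :=
  (∃ j : ℕ, j ≤ N ∧ D = 2 ^ j) ∧
  ∃ r : ℕ, 1 ≤ r ∧ r ≤ D ∧ J = {x | ∃ m : ℕ, m < 2 ^ N / D ∧ x = r + m * D}

/-- `s` is an `(n,p)`-uniform string on `{1,…,2^{M_n}}`: its density function is `p`, and for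
every `σ ∈ Σ_n` the occurrence set of `σ` is sandwiched between saturated arithmetic progressions
with common differences `2^{n σ}` and `2^{n σ − 1}`. -/
def PStr.Uniform {A : Type*} [Fintype A] (F : Frame A) (p : A → ℝ) (s : PStr A) : Prop :=
  s.dom = Set.Icc 1 (2 ^ F.M) ∧
  (∀ σ : A, ({i : ℕ | s i = some σ}.ncard : ℝ) = p σ * 2 ^ F.M) ∧
  ∀ σ ∈ F.supp, ∃ J₁ J₂ : Set ℕ,
    IsSatAP F.M J₁ (2 ^ F.val σ) ∧ IsSatAP F.M J₂ (2 ^ (F.val σ - 1)) ∧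
    J₁ ⊆ {i : ℕ | s i = some σ} ∧ {i : ℕ | s i = some σ} ⊆ J₂


section Helpers

/-! ### Congruences modulo powers of two -/

/-- `a ≡ b` modulo `2^k`. -/
def DD (k : ℕ) (a b : ℤ) : Prop := (2 : ℤ) ^ k ∣ a - b

namespace DD

theorem refl (k : ℕ) (a : ℤ) : DD k a a := by simp [DD]

theorem cg {k : ℕ} {a b c d : ℤ} (h : DD k c d) (e : a - b = c - d) : DD k a b := by
  unfold DD at *; rw [e]; exact h

theorem symm {k : ℕ} {a b : ℤ} (h : DD k a b) : DD k b a := by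
  unfold DD at *; exact (dvd_sub_comm).mp h

theorem trans {k : ℕ} {a b c : ℤ} (h : DD k a b) (h' : DD k b c) : DD k a c := by
  unfold DD at *; have := dvd_add h h'; simpa using this

theorem mono {j k : ℕ} {a b : ℤ} (h : DD k a b) (hj : j ≤ k) : DD j a b :=
  dvd_trans (pow_dvd_pow _ hj) h

theorem comb {k : ℕ} {a b c d x y : ℤ} (h : DD k a b) (h' : DD k c d)
    (e : x - y = (a - b) + (c - d)) : DD k x y := by
  unfold DD at *; rw [e]; exact dvd_add h h'

theorem addpow {j k : ℕ} (a : ℤ) (hj : j ≤ k) : DD j (a + 2 ^ k) a := by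
  unfold DD; simpa using pow_dvd_pow (2 : ℤ) hj

theorem subpow {j k : ℕ} (a : ℤ) (hj : j ≤ k) : DD j (a - 2 ^ k) a := by
  unfold DD; simpa using pow_dvd_pow (2 : ℤ) hj

theorem addmul (k : ℕ) (a c : ℤ) : DD k (a + 2 ^ k * c) a := by
  unfold DD; simp

theorem gap {k : ℕ} {a b : ℤ} (h : DD k a b) (hl : b < a) : b + 2 ^ k ≤ a := by
  have := Int.le_of_dvd (by omega) h
  linarith

theorem half {k : ℕ} {a b : ℤ} (h : DD k a b) : DD (k + 1) a b ∨ DD (k + 1) a (b + 2 ^ k) := by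
  obtain ⟨c, hc⟩ := h
  rcases Int.even_or_odd' c with ⟨e, he | he⟩
  · left; exact ⟨e, by rw [hc, he]; ring⟩
  · right; exact ⟨e, by rw [← sub_sub, hc, he]; ring⟩

theorem npow (k : ℕ) (a : ℤ) : ¬ DD (k + 1) a (a + 2 ^ k) := by
  intro h
  have h1 := h.symm.gap (by have : (0:ℤ) < 2 ^ k := by positivity
                            linarith)
  have : (0:ℤ) < 2 ^ k := by positivity
  rw [pow_succ] at h1; linarith

theorem nboth {k : ℕ} {a b : ℤ} (h : DD (k + 1) a b) : ¬ DD (k + 1) a (b + 2 ^ k) := fun h' =>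
  npow k b (h.symm.trans h')

theorem flip {k : ℕ} {a b : ℤ} (h : DD (k + 1) a (b + 2 ^ k)) : DD (k + 1) (a + 2 ^ k) b :=
  h.comb (addpow b (le_refl (k+1))) (by rw [pow_succ]; ring)

theorem flip' {k : ℕ} {a b : ℤ} (h : DD (k + 1) (a + 2 ^ k) b) : DD (k + 1) a (b + 2 ^ k) :=
  h.comb (subpow b (le_refl (k+1))) (by rw [pow_succ]; ring)

theorem nsmall {k : ℕ} {a g : ℤ} (h0 : 0 < g) (h1 : g < 2 ^ k) : ¬ DD k a (a - g) := by
  intro h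
  have := h.gap (by linarith)
  linarith

end DD

/-! ### Local validity of a bi-infinite string at a letter -/

variable {A : Type*}

/-- Gaps of `σ` in `s` are between `2^k` and `2^(k+1)`. -/
def Val (k : ℕ) (σ : A) (s : ℤ → A) : Prop :=
  (∀ t t', s t = σ → s t' = σ → t < t' → (2 : ℤ) ^ k ≤ t' - t) ∧
  ∀ t, ∃ t', t ≤ t' ∧ t' < t + 2 ^ (k + 1) ∧ s t' = σ

/-- `σ` is sandwiched between the class of `r` mod `2^(k+1)` and that mod `2^k`. -/
def San (k : ℕ) (σ : A) (s : ℤ → A) (r : ℤ) : Prop :=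
  (∀ t, DD (k + 1) t r → s t = σ) ∧ ∀ t, s t = σ → DD k t r

theorem exists_class (k : ℕ) (r t : ℤ) : ∃ t', t ≤ t' ∧ t' < t + 2 ^ k ∧ DD k t' r := by
  have hp : (0:ℤ) < 2 ^ k := by positivity
  refine ⟨t + (r - t) % 2 ^ k, ?_, ?_, ?_⟩
  · have := Int.emod_nonneg (r - t) hp.ne'; linarith
  · have := Int.emod_lt_of_pos (r - t) hp; linarith
  · refine DD.symm ?_
    unfold DD
    have := Int.dvd_self_sub_emod (x := r - t) (m := 2 ^ k)
    convert this using 1; ring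

theorem San.val {k : ℕ} {σ : A} {s : ℤ → A} {r : ℤ} (h : San k σ s r) : Val k σ s := by
  constructor
  · intro t t' h1 h2 hl
    have := ((h.2 t' h2).trans (h.2 t h1).symm).gap hl
    linarith
  · intro t
    obtain ⟨t', h1, h2, h3⟩ := exists_class (k + 1) r t
    exact ⟨t', h1, h2, h.1 t' h3⟩

/-- Glue two strings at time `T`. -/
noncomputable def glue (T : ℤ) (s s' : ℤ → A) : ℤ → A := fun t => if t < T then s t else s' t

theorem glueA {k : ℕ} {σ : A} {s s' : ℤ → A} {r : ℤ} (T : ℤ) (h : San k σ s r)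
    (h' : San k σ s' r) : Val k σ (glue T s s') := by
  apply San.val (r := r)
  constructor
  · intro t ht; unfold glue; split_ifs
    · exact h.1 t ht
    · exact h'.1 t ht
  · intro t; unfold glue; split_ifs
    · exact h.2 t
    · exact h'.2 t

theorem glueB {k : ℕ} {σ : A} {s s' : ℤ → A} (T l f : ℤ) (h : Val k σ s) (h' : Val k σ s')
    (hl : l < T) (hsl : s l = σ) (hlm : ∀ t, l < t → t < T → s t ≠ σ)
    (hf : T ≤ f) (hsf : s' f = σ) (hfm : ∀ t, T ≤ t → t < f → s' t ≠ σ)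
    (h1 : (2:ℤ) ^ k ≤ f - l) (h2 : f - l ≤ 2 ^ (k + 1)) : Val k σ (glue T s s') := by
  constructor
  · intro t t' ht ht' hlt
    unfold glue at ht ht'
    split_ifs at ht ht' with c1 c2 c2
    · exact h.1 t t' ht ht' hlt
    · have : t ≤ l := by
        by_contra hc; exact hlm t (by omega) c1 ht
      have : f ≤ t' := by
        by_contra hc; exact hfm t' (by omega) (by omega) ht'
      linarith
    · omega
    · exact h'.1 t t' ht ht' hlt
  · intro t
    by_cases c : t < T
    · obtain ⟨t', a, b, e⟩ := h.2 t
      by_cases c' : t' < T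
      · exact ⟨t', a, b, by simp [glue, c', e]⟩
      · by_cases cl : t ≤ l
        · exact ⟨l, cl, by linarith, by simp [glue, hl, hsl]⟩
        · exact ⟨f, by linarith, by linarith, by simp [glue, not_lt.mpr hf, hsf]⟩
    · obtain ⟨t', a, b, e⟩ := h'.2 t
      exact ⟨t', a, b, by simp [glue, show ¬ t' < T by omega, e]⟩

/-- Local criterion. -/
theorem Val.loc {k : ℕ} {σ : A} {s s' W : ℤ → A} (K P : ℤ) (hP : (2:ℤ) ^ (k + 1) ≤ P)
    (h : Val k σ s) (h' : Val k σ s') (e : ∀ t, t < K → W t = s t)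
    (e' : ∀ t, K - P ≤ t → W t = s' t) : Val k σ W := by
  have hp : (2:ℤ)^(k+1) = 2 * 2 ^ k := by rw [pow_succ]; ring
  have hp0 : (0:ℤ) < 2 ^ k := by positivity
  constructor
  · intro t t' ht ht' hlt
    by_cases c : K - P ≤ t
    · rw [e' _ c] at ht; rw [e' _ (by omega)] at ht'; exact h'.1 _ _ ht ht' hlt
    · by_cases c' : t' < K
      · rw [e _ c'] at ht'; rw [e _ (by omega)] at ht; exact h.1 _ _ ht ht' hlt
      · linarith
  · intro t
    by_cases c : K - P ≤ t
    · obtain ⟨t', a, b, f⟩ := h'.2 t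
      exact ⟨t', a, b, by rw [e' _ (by omega)]; exact f⟩
    · obtain ⟨t', a, b, f⟩ := h.2 t
      exact ⟨t', a, b, by rw [e _ (by linarith)]; exact f⟩

/-- `s` and `s'` can be connected by a valid bi-infinite string; the transition takes place
in the time interval `[a,b)`. -/
def ConnAt (m : A → ℕ) (s s' : ℤ → A) (a b : ℤ) : Prop :=
  ∃ W : ℤ → A, (∀ σ, Val (m σ) σ W) ∧ (∀ t, t < a → W t = s t) ∧ (∀ t, b ≤ t → W t = s' t)

def Conn (m : A → ℕ) (s s' : ℤ → A) : Prop := ∃ a b, ConnAt m s s' a b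

theorem ConnAt.of_glue {m : A → ℕ} {s s' : ℤ → A} (T : ℤ) (h : ∀ σ, Val (m σ) σ (glue T s s')) :
    ConnAt m s s' T T :=
  ⟨glue T s s', h, fun t ht => by simp [glue, ht], fun t ht => by simp [glue, not_lt.mpr ht]⟩

theorem ConnAt.trans {m : A → ℕ} {s s' s'' : ℤ → A} {a b c d P : ℤ}
    (hP : ∀ σ, (2:ℤ) ^ (m σ + 1) ≤ P)
    (h : ConnAt m s s' a b) (h' : ConnAt m s' s'' c d) (hbc : b + P ≤ c) :
    ConnAt m s s'' (min a c) (max d c) := by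
  obtain ⟨W, hW, h1, h2⟩ := h
  obtain ⟨W', hW', h1', h2'⟩ := h'
  refine ⟨glue c W W', fun σ => ?_, ?_, ?_⟩
  · refine Val.loc c P (hP σ) (hW σ) (hW' σ) (fun t ht => by simp [glue, ht]) (fun t ht => ?_)
    unfold glue; split_ifs with hc
    · rw [h2 t (by linarith), h1' t hc]
    · rfl
  · intro t ht
    rw [lt_min_iff] at ht
    simp [glue, ht.2, h1 t ht.1]
  · intro t ht
    rw [max_le_iff] at ht
    simp [glue, not_lt.mpr ht.2, h2' t ht.1]

theorem ConnAt.shift {m : A → ℕ} {s s' : ℤ → A} {a b : ℤ} (h : ConnAt m s s' a b) (d : ℤ)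
    (hs : ∀ t, s (t + d) = s t) (hs' : ∀ t, s' (t + d) = s' t) :
    ConnAt m s s' (a + d) (b + d) := by
  obtain ⟨W, hW, h1, h2⟩ := h
  refine ⟨fun t => W (t - d), fun σ => ⟨?_, ?_⟩, ?_, ?_⟩
  · intro t t' ht ht' hl
    have := (hW σ).1 _ _ ht ht' (by omega)
    linarith
  · intro t
    obtain ⟨t', e1, e2, e3⟩ := (hW σ).2 (t - d)
    exact ⟨t' + d, by omega, by linarith, by simpa using e3⟩
  · intro t ht
    show W (t - d) = s t
    rw [h1 _ (by omega), ← hs (t - d)]; congr 1; ring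
  · intro t ht
    show W (t - d) = s' t
    rw [h2 _ (by omega), ← hs' (t - d)]; congr 1; ring

theorem per_mul {s : ℤ → A} {P : ℤ} (h : ∀ t, s (t + P) = s t) (k : ℕ) (t : ℤ) :
    s (t + k * P) = s t := by
  induction k with
  | zero => simp
  | succ k ih => rw [← ih, ← h (t + k * P)]; congr 1; push_cast; ring

theorem Conn.trans {m : A → ℕ} {s s' s'' : ℤ → A} {P : ℤ} (hP0 : 0 < P)
    (hP : ∀ σ, (2:ℤ) ^ (m σ + 1) ≤ P) (hs' : ∀ t, s' (t + P) = s' t)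
    (hs'' : ∀ t, s'' (t + P) = s'' t)
    (h : Conn m s s') (h' : Conn m s' s'') : Conn m s s'' := by
  obtain ⟨a, b, h⟩ := h
  obtain ⟨c, d, h'⟩ := h'
  have h2 := h'.shift (((b + P - c).toNat : ℕ) * P) (per_mul hs' _) (per_mul hs'' _)
  refine ⟨_, _, h.trans hP h2 ?_⟩
  have := Int.self_le_toNat (b + P - c)
  nlinarith


/-! ### Uniform states and moves -/

def Uni (m : A → ℕ) (s : ℤ → A) (ρ : A → ℤ) : Prop := ∀ σ, San (m σ) σ s (ρ σ)

/-- Every occurrence of `w` may serve as a base point. -/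
def Per (m : A → ℕ) (s : ℤ → A) (w : A) : Prop := ∀ c, s c = w → San (m w) w s c

/-- Hypotheses of a move. -/
structure MoveH (m : A → ℕ) (s : ℤ → A) (ρ : A → ℤ) (i : ℕ) (u g : ℤ) (φ : A) : Prop where
  uni : Uni m s ρ
  g0 : 0 < g
  g1 : g < 2 ^ i
  H1 : ¬ DD (m (s u) + 1) u (ρ (s u))
  Ha : ∀ t, DD i t u → i ≤ m (s t) → s t = s u ∨ Per m s (s t)
  Hb : ∀ t, DD i t (u - g) → Per m s (s t) ∧ i ≤ m (s t) + 1 ∧ (2:ℤ) ^ i - g ≤ 2 ^ (m (s t)) ∧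
    ∀ t', s t' = s t → DD i t' (u - g)
  Hφ : m φ + 1 ≤ i
  Hφ' : DD (m φ + 1) (u - g) (ρ φ + 2 ^ (m φ))

def RA (m : A → ℕ) (ρ : A → ℤ) (i : ℕ) (u : ℤ) (w : A) : Prop := i ≤ m w ∧ DD i (ρ w) u

def RB (m : A → ℕ) (ρ : A → ℤ) (i : ℕ) (u g : ℤ) (w : A) : Prop :=
  i ≤ m w + 1 ∧ DD i (ρ w) (u - g)

/-- Generic moved string. -/
noncomputable def mvQ (s : ℤ → A) (i : ℕ) (u g : ℤ) (φ : A) (Q : ℤ → Prop) : ℤ → A := fun t =>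
  if DD i t u then s (t + (2 ^ i - g)) else
    if DD i t (u - g) then (if Q t then s (t + g) else φ) else s t

noncomputable def mv (m : A → ℕ) (s : ℤ → A) (i : ℕ) (u g : ℤ) (φ : A) : ℤ → A :=
  mvQ s i u g φ (fun t => i ≤ m (s (t + g)))

theorem Uni.base {m : A → ℕ} {s : ℤ → A} {ρ : A → ℤ} (h : Uni m s ρ) (w : A) : s (ρ w) = w :=
  (h w).1 _ (DD.refl _ _)

namespace MoveH

variable {m : A → ℕ} {s : ℤ → A} {ρ : A → ℤ} {i : ℕ} {u g : ℤ} {φ : A}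

theorem ab (h : MoveH m s ρ i u g φ) {t : ℤ} (ha : DD i t u) : ¬ DD i t (u - g) := fun hb =>
  DD.nsmall h.g0 h.g1 (ha.symm.trans hb)

theorem toB (t : ℤ) (ha : DD i t u) : DD i (t + (2 ^ i - g)) (u - g) :=
  ha.comb (DD.addpow 0 (le_refl i)) (by ring)

theorem toA (t : ℤ) (ha : DD i t (u - g)) : DD i (t + g) u := ha.cg (by ring)

theorem occB (h : MoveH m s ρ i u g φ) {t : ℤ} (hb : DD i t (u - g)) : RB m ρ i u g (s t) :=
  ⟨(h.Hb t hb).2.1, (h.Hb t hb).2.2.2 _ (h.uni.base _)⟩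

theorem occA (h : MoveH m s ρ i u g φ) {t : ℤ} (ha : DD i t u) (hi : i ≤ m (s t)) :
    RA m ρ i u (s t) :=
  ⟨hi, (((h.uni (s t)).2 t rfl).mono hi).symm.trans ha⟩

theorem inA (h : MoveH m s ρ i u g φ) {w : A} (hw : RA m ρ i u w) {t : ℤ} (ht : s t = w) :
    DD i t u := (((h.uni w).2 t ht).mono hw.1).trans hw.2

theorem rb (h : MoveH m s ρ i u g φ) {w : A} (hw : RB m ρ i u g w) :
    Per m s w ∧ i ≤ m w + 1 ∧ (2:ℤ) ^ i - g ≤ 2 ^ (m w) ∧ ∀ t', s t' = w → DD i t' (u - g) := by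
  have := h.Hb _ hw.2
  rwa [h.uni.base] at this

theorem rab (h : MoveH m s ρ i u g φ) {w : A} (hw : RA m ρ i u w) : ¬ RB m ρ i u g w := fun hb =>
  h.ab hw.2 hb.2

theorem phiA (h : MoveH m s ρ i u g φ) : ¬ RA m ρ i u φ := fun hw => by
  have := hw.1; have := h.Hφ; omega

theorem phiB (h : MoveH m s ρ i u g φ) : ¬ RB m ρ i u g φ := fun hw => by
  have e : m φ + 1 = i := le_antisymm h.Hφ hw.1
  have h1 := hw.2
  rw [← e] at h1
  exact DD.nboth (DD.refl _ _) (h1.trans h.Hφ')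

/-- bases of non-resident letters avoid `a` -/
theorem baseA (h : MoveH m s ρ i u g φ) {w : A} (hw : ¬ RA m ρ i u w) {t : ℤ}
    (ht : DD (m w + 1) t (ρ w)) : ¬ DD i t u := fun ha => by
  have e := (h.uni w).1 t ht
  by_cases hi : i ≤ m w
  · subst e; exact hw (h.occA ha hi)
  · have h2 : DD (m w + 1) u (ρ w) := (ha.mono (by omega)).symm.trans ht
    have e2 := (h.uni w).1 u h2
    have := h.H1
    rw [e2] at this
    exact this h2

theorem baseB (h : MoveH m s ρ i u g φ) {w : A} (hw : ¬ RB m ρ i u g w) {t : ℤ}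
    (ht : DD (m w + 1) t (ρ w)) : ¬ DD i t (u - g) := fun ha => by
  have e := (h.uni w).1 t ht
  subst e; exact hw (h.occB ha)

/-- letters that are not resident keep their base -/
theorem sanO (h : MoveH m s ρ i u g φ) {Q : ℤ → Prop} (hQ : ∀ t, Q t → i ≤ m (s (t + g)))
    {w : A} (hA : ¬ RA m ρ i u w) (hB : ¬ RB m ρ i u g w) :
    San (m w) w (mvQ s i u g φ Q) (ρ w) := by
  constructor
  · intro t ht
    simp only [mvQ, h.baseA hA ht, h.baseB hB ht, if_false]
    exact (h.uni w).1 t ht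
  · intro t ht
    unfold mvQ at ht
    split_ifs at ht with c1 c2 c3
    · subst ht; exact absurd (h.occB (toB _ c1)) hB
    · subst ht; exact absurd (h.occA (toA _ c2) (hQ _ c3)) hA
    · subst ht
      have h1 : DD (m φ) (u - g) (ρ φ) := (h.Hφ'.mono (Nat.le_succ _)).trans (DD.addpow _ le_rfl)
      have := h.Hφ
      exact (c2.mono (by omega)).trans h1
    · exact (h.uni w).2 t ht

theorem sanB (h : MoveH m s ρ i u g φ) {Q : ℤ → Prop} (hQ : ∀ t, Q t → i ≤ m (s (t + g)))
    {w : A} (hB : RB m ρ i u g w) {c : ℤ} (hc : San (m w) w s c) :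
    San (m w) w (mvQ s i u g φ Q) (c - (2 ^ i - g)) := by
  have hh := h.rb hB
  constructor
  · intro t ht
    have h1 : DD (m w + 1) (t + (2 ^ i - g)) c := ht.cg (by ring)
    have h2 := hc.1 _ h1
    have h3 := hh.2.2.2 _ h2
    have h4 : DD i t u := h3.comb (DD.subpow 0 (le_refl i)) (by ring)
    simp only [mvQ, h4, if_true]; exact h2
  · intro t ht
    unfold mvQ at ht
    split_ifs at ht with c1 c2 c3
    · exact (hc.2 _ ht).cg (by ring)
    · subst ht; exact absurd hB (h.rab (h.occA (toA _ c2) (hQ _ c3)))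
    · subst ht; exact absurd hB h.phiB
    · exact absurd (hh.2.2.2 _ ht) c2

theorem sanA (h : MoveH m s ρ i u g φ) {Q : ℤ → Prop}
    {w : A} (hA : RA m ρ i u w) {c : ℤ} (hc : San (m w) w s c)
    (hQ' : ∀ t, DD (m w + 1) (t + g) c → Q t) :
    San (m w) w (mvQ s i u g φ Q) (c - g) := by
  constructor
  · intro t ht
    have h1 : DD (m w + 1) (t + g) c := ht.cg (by ring)
    have h2 := hc.1 _ h1
    have h3 := h.inA hA h2
    have h4 : DD i t (u - g) := h3.cg (by ring)
    have h5 : ¬ DD i t u := fun h5 => h.ab h5 h4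
    simp only [mvQ, h4, h5, hQ' t h1, if_true, if_false]; exact h2
  · intro t ht
    unfold mvQ at ht
    split_ifs at ht with c1 c2 c3
    · have h3 := toB (g := g) _ c1
      rw [← ht] at hA
      exact absurd (h.occB h3) (h.rab hA)
    · exact (hc.2 _ ht).cg (by ring)
    · subst ht; exact absurd hA h.phiA
    · exact absurd (h.inA hA ht) c1

/-- The intermediate string `s1`. -/
noncomputable def s1 (m : A → ℕ) (s : ℤ → A) (i : ℕ) (u g : ℤ) (φ : A) (c : A → ℤ) : ℤ → A :=
  fun t => if DD i t (u - g) then (if DD (m (s t) + 1) t (c (s t)) then s t else φ) else s t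

theorem s1A (h : MoveH m s ρ i u g φ) (c : A → ℤ) {w : A} (hφ : w ≠ φ)
    (hB : ¬ RB m ρ i u g w) (t : ℤ) : s1 m s i u g φ c t = w ↔ s t = w := by
  unfold s1
  split_ifs with c1 c2
  · rfl
  · constructor
    · intro e; exact absurd e.symm hφ
    · intro e; subst e; exact absurd (h.occB c1) hB
  · rfl

theorem s1B (h : MoveH m s ρ i u g φ) (c : A → ℤ) {w : A} (hφ : w ≠ φ)
    (hB : RB m ρ i u g w) (hc : San (m w) w s (c w)) (t : ℤ) :
    s1 m s i u g φ c t = w ↔ DD (m w + 1) t (c w) := by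
  have hh := h.rb hB
  unfold s1
  split_ifs with c1 c2
  · constructor
    · intro e; subst e; exact c2
    · intro e; exact hc.1 _ e
  · constructor
    · intro e; exact absurd e.symm hφ
    · intro e; have := hc.1 _ e; rw [this] at c2; exact absurd e c2
  · constructor
    · intro e; exact absurd (hh.2.2.2 _ e) c1
    · intro e; exact hc.1 _ e

theorem s1φ (h : MoveH m s ρ i u g φ) (c : A → ℤ) : San (m φ) φ (s1 m s i u g φ c) (ρ φ) := by
  constructor
  · intro t ht
    simp only [s1, h.baseB h.phiB ht, if_false]
    exact (h.uni φ).1 t ht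
  · intro t ht
    unfold s1 at ht
    split_ifs at ht with c1 c2
    · exact (h.uni φ).2 t ht
    · have h1 : DD (m φ) (u - g) (ρ φ) := (h.Hφ'.mono (Nat.le_succ _)).trans (DD.addpow _ le_rfl)
      have := h.Hφ
      exact (c1.mono (by omega)).trans h1
    · exact (h.uni φ).2 t ht

/-- last occurrence before `u` -/
theorem exL (h : MoveH m s ρ i u g φ) (w : A) (hA : RA m ρ i u w) :
    ∃ l, l < u ∧ San (m w) w s l ∧ (∀ t, l < t → t < u → s t ≠ w) ∧ u < l + 2 ^ (m w + 1) := by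
  have hp : (2:ℤ) ^ (m w + 1) = 2 * 2 ^ m w := by rw [pow_succ]; ring
  have hp0 : (0:ℤ) < 2 ^ m w := by positivity
  by_cases hX : s u = w
  · refine ⟨u - 2 ^ (m w), by linarith, ?_, ?_, by linarith⟩
    · have h1 := h.H1
      rw [hX] at h1
      have h2 := (h.uni w).2 u hX
      have h3 := h2.half.resolve_left h1
      have h4 : DD (m w + 1) (u - 2 ^ (m w)) (ρ w) := h3.cg (by ring)
      exact ⟨fun t ht => (h.uni w).1 t (ht.trans h4),
        fun t ht => ((h.uni w).2 t ht).trans (h4.mono (Nat.le_succ _)).symm⟩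
    · intro t h1 h2 h3
      have := (h.uni w).val.1 t u h3 hX h2
      linarith
  · obtain ⟨t0, e1, e2, e3⟩ := exists_class (m w + 1) (ρ w) (u - 2 ^ (m w + 1))
    have e4 := (h.uni w).1 t0 e3
    have hPer : Per m s w := by
      have := h.Ha (ρ w) hA.2 (by rw [h.uni.base]; exact hA.1)
      rw [h.uni.base] at this
      exact this.resolve_left (fun e => hX e.symm)
    obtain ⟨l, hl⟩ := Int.exists_greatest_of_bdd (P := fun t => t < u ∧ s t = w)
      ⟨u, fun z hz => hz.1.le⟩ ⟨t0, by linarith, e4⟩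
    refine ⟨l, hl.1.1, hPer l hl.1.2, fun t h1 h2 h3 => ?_, ?_⟩
    · have := hl.2 t ⟨h2, h3⟩; omega
    · have h5 := hl.2 t0 ⟨by linarith, e4⟩
      rcases lt_or_eq_of_le (show u ≤ l + 2 ^ (m w + 1) by linarith) with h6 | h6
      · exact h6
      · exfalso; apply hX
        rw [h6]; exact (hPer l hl.1.2).1 _ (DD.addpow _ le_rfl)

/-- first occurrence after `u+h` -/
theorem exC (h : MoveH m s ρ i u g φ) (w : A) (hB : RB m ρ i u g w) :
    ∃ c, u + (2 ^ i - g) ≤ c ∧ San (m w) w s c ∧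
      (∀ t, u + (2 ^ i - g) ≤ t → t < c → s t ≠ w) := by
  obtain ⟨t0, e1, e2, e3⟩ := exists_class (m w + 1) (ρ w) (u + (2 ^ i - g))
  have e4 := (h.uni w).1 t0 e3
  obtain ⟨c, hc⟩ := Int.exists_least_of_bdd (P := fun t => u + (2 ^ i - g) ≤ t ∧ s t = w)
    ⟨_, fun z hz => hz.1⟩ ⟨t0, e1, e4⟩
  refine ⟨c, hc.1.1, (h.rb hB).1 c hc.1.2, fun t h1 h2 h3 => ?_⟩
  have := hc.2 t ⟨h1, h3⟩; omega

theorem connAt (h : MoveH m s ρ i u g φ) {P : ℤ} (hP : ∀ σ, (2:ℤ) ^ (m σ + 1) ≤ P) :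
    Conn m s (mv m s i u g φ) := by
  have hL : ∀ w, ∃ l, RA m ρ i u w → l < u ∧ San (m w) w s l ∧ (∀ t, l < t → t < u → s t ≠ w) ∧
      u < l + 2 ^ (m w + 1) := by
    intro w
    by_cases hA : RA m ρ i u w
    · obtain ⟨l, hl⟩ := h.exL w hA; exact ⟨l, fun _ => hl⟩
    · exact ⟨0, fun x => absurd x hA⟩
  have hC : ∀ w, ∃ c, RB m ρ i u g w → u + (2 ^ i - g) ≤ c ∧ San (m w) w s c ∧
      (∀ t, u + (2 ^ i - g) ≤ t → t < c → s t ≠ w) := by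
    intro w
    by_cases hA : RB m ρ i u g w
    · obtain ⟨l, hl⟩ := h.exC w hA; exact ⟨l, fun _ => hl⟩
    · exact ⟨0, fun x => absurd x hA⟩
  choose l hl using hL
  choose c hc using hC
  set S1 := s1 m s i u g φ c with hS1
  set Q2 : ℤ → Prop := fun t => i ≤ m (s (t + g)) ∧ DD (m (s (t+g)) + 1) (t + g) (l (s (t + g)))
    with hQ2
  set S2 := mvQ s i u g φ Q2 with hS2
  have hQ2i : ∀ t, Q2 t → i ≤ m (s (t + g)) := fun t ht => ht.1
  have hQ2A : ∀ w, RA m ρ i u w → ∀ t, DD (m w + 1) (t + g) (l w) → Q2 t := by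
    intro w hA t ht
    have e := (hl w hA).2.1.1 _ ht
    simp only [hQ2, e]
    exact ⟨hA.1, ht⟩
  have hQmA : ∀ w, RA m ρ i u w → ∀ t, DD (m w + 1) (t + g) (l w) → i ≤ m (s (t + g)) := by
    intro w hA t ht
    exact (hQ2A w hA t ht).1
  have k1 : ∀ T, ConnAt m s S1 T T := by
    intro T
    apply ConnAt.of_glue
    intro w
    by_cases hφ : w = φ
    · subst hφ; exact glueA T (h.uni _) (h.s1φ c)
    by_cases hB : RB m ρ i u g w
    · have hcw := (hc w hB).2.1
      refine glueA T hcw ⟨fun t ht => (h.s1B c hφ hB hcw t).2 ht, fun t ht => ?_⟩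
      exact ((h.s1B c hφ hB hcw t).1 ht).mono (Nat.le_succ _)
    · refine glueA T (h.uni w) ⟨fun t ht => (h.s1A c hφ hB t).2 ((h.uni w).1 t ht),
        fun t ht => (h.uni w).2 t ((h.s1A c hφ hB t).1 ht)⟩
  have k3 : ∀ T, ConnAt m S2 (mv m s i u g φ) T T := by
    intro T
    apply ConnAt.of_glue
    intro w
    by_cases hA : RA m ρ i u w
    · exact glueA T (h.sanA hA (hl w hA).2.1 (hQ2A w hA)) (h.sanA hA (hl w hA).2.1 (hQmA w hA))
    by_cases hB : RB m ρ i u g w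
    · exact glueA T (h.sanB hQ2i hB (hc w hB).2.1) (h.sanB (fun _ ht => ht) hB (hc w hB).2.1)
    · exact glueA T (h.sanO hQ2i hA hB) (h.sanO (fun _ ht => ht) hA hB)
  have k2 : ConnAt m S1 S2 u u := by
    apply ConnAt.of_glue
    intro w
    have hp : (2:ℤ) ^ (m w + 1) = 2 * 2 ^ m w := by rw [pow_succ]; ring
    have hp0 : (0:ℤ) < 2 ^ m w := by positivity
    have hg0 := h.g0
    have hg1 := h.g1
    by_cases hφ : w = φ
    · subst hφ; exact glueA u (h.s1φ c) (h.sanO hQ2i h.phiA h.phiB)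
    by_cases hA : RA m ρ i u w
    · obtain ⟨l1, l2, l3, l4⟩ := hl w hA
      have hB := h.rab hA
      have hi : (2:ℤ) ^ i ≤ 2 ^ m w := pow_le_pow_right₀ (by norm_num) hA.1
      have hS := h.sanA hA l2 (hQ2A w hA)
      have hv1 : San (m w) w S1 (ρ w) := ⟨fun t ht => (h.s1A c hφ hB t).2 ((h.uni w).1 t ht),
        fun t ht => (h.uni w).2 t ((h.s1A c hφ hB t).1 ht)⟩
      have hfa : DD i (l w + 2 ^ (m w + 1)) u := h.inA hA (l2.1 _ (DD.addpow _ le_rfl))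
      have hfg := hfa.gap l4
      refine glueB u (l w) (l w + 2 ^ (m w + 1) - g) hv1.val hS.val l1
        ((h.s1A c hφ hB _).2 (l2.1 _ (DD.refl _ _)))
        (fun t e1 e2 e3 => l3 t e1 e2 ((h.s1A c hφ hB t).1 e3)) (by linarith)
        (hS.1 _ ((DD.addpow (l w) le_rfl).cg (by ring))) ?_ (by linarith) (by linarith)
      intro t e1 e2 e3
      -- occurrences of `w` in `S2` are exactly one class
      have e4 : DD (m w + 1) (t + g) (l w) := by
        simp only [hS2, mvQ] at e3
        split_ifs at e3 with c1 c2 c3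
        · rw [← e3] at hB; exact absurd (h.occB (toB _ c1)) hB
        · have := c3.2; rwa [e3] at this
        · exact absurd e3.symm hφ
        · exact absurd (h.inA hA e3) c1
      have := e4.gap (by linarith)
      linarith
    by_cases hB : RB m ρ i u g w
    · obtain ⟨c1, c2, c3⟩ := hc w hB
      obtain ⟨r1, r2, r3, r4⟩ := h.rb hB
      have hS := h.sanB hQ2i hB c2
      have hv1 : San (m w) w S1 (c w) := ⟨fun t ht => (h.s1B c hφ hB c2 t).2 ht,
        fun t ht => ((h.s1B c hφ hB c2 t).1 ht).mono (Nat.le_succ _)⟩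
      have hcl : DD (m w + 1) (c w - 2 ^ (m w + 1)) (c w) := DD.subpow _ le_rfl
      have hb1 : c w - 2 ^ (m w + 1) < u + (2 ^ i - g) := by
        by_contra hcon
        exact c3 _ (by linarith) (by linarith) (c2.1 _ hcl)
      have hb2 : DD i (u + (2 ^ i - g)) (c w - 2 ^ (m w + 1)) :=
        (toB u (DD.refl _ _)).trans (r4 _ (c2.1 _ hcl)).symm
      have hb3 := hb2.gap hb1
      refine glueB u (c w - 2 ^ (m w + 1)) (c w - (2 ^ i - g)) hv1.val hS.val (by linarith)
        (hv1.1 _ hcl) ?_ (by linarith) (hS.1 _ (DD.refl _ _)) ?_ (by linarith) (by linarith)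
      · intro t e1 e2 e3
        have := (((h.s1B c hφ hB c2 t).1 e3).trans hcl.symm).gap e1
        linarith
      · intro t e1 e2 e3
        simp only [hS2, mvQ] at e3
        split_ifs at e3 with d1 d2 d3
        · exact c3 _ (by linarith) (by linarith) e3
        · subst e3; exact hA (h.occA (toA _ d2) (hQ2i _ d3))
        · exact hφ e3.symm
        · exact d2 (r4 _ e3)
    · have hv1 : San (m w) w S1 (ρ w) := ⟨fun t ht => (h.s1A c hφ hB t).2 ((h.uni w).1 t ht),
        fun t ht => (h.uni w).2 t ((h.s1A c hφ hB t).1 ht)⟩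
      exact glueA u hv1 (h.sanO hQ2i hA hB)
  have k12 := ConnAt.trans hP (k1 (u - P)) k2 (by linarith)
  exact ⟨_, _, ConnAt.trans hP k12 (k3 (max u u + P)) le_rfl⟩

noncomputable def newρ (m : A → ℕ) (ρ : A → ℤ) (i : ℕ) (u g : ℤ) (w : A) : ℤ :=
  if RA m ρ i u w then ρ w - g else if RB m ρ i u g w then ρ w - (2 ^ i - g) else ρ w

theorem uni' (h : MoveH m s ρ i u g φ) : Uni m (mv m s i u g φ) (newρ m ρ i u g) := by
  intro w
  unfold newρ mv
  split_ifs with hA hB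
  · refine h.sanA hA (h.uni w) (fun t ht => ?_)
    rw [(h.uni w).1 _ ht]; exact hA.1
  · exact h.sanB (fun _ ht => ht) hB (h.uni w)
  · exact h.sanO (fun _ ht => ht) hA hB

theorem per (h : MoveH m s ρ i u g φ) {M : ℕ} (hi : i ≤ M) (hs : ∀ t, s (t + 2 ^ M) = s t) (t : ℤ) :
    mv m s i u g φ (t + 2 ^ M) = mv m s i u g φ t := by
  have e1 : ∀ r, DD i (t + 2 ^ M) r ↔ DD i t r := fun r =>
    ⟨fun x => (DD.addpow t hi).symm.trans x, fun x => (DD.addpow t hi).trans x⟩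
  have e2 : ∀ r, s (t + 2 ^ M + r) = s (t + r) := fun r => by rw [← hs (t + r)]; congr 1; ring
  simp only [mv, mvQ, e1, e2, hs]
  split_ifs <;> rfl

theorem keepA (h : MoveH m s ρ i u g φ) {w : A} (hA : RA m ρ i u w) (t : ℤ) :
    mv m s i u g φ t = w ↔ s (t + g) = w := by
  constructor
  · intro ht
    unfold mv mvQ at ht
    split_ifs at ht with c1 c2 c3
    · rw [← ht] at hA; exact absurd (h.occB (toB _ c1)) (h.rab hA)
    · exact ht
    · subst ht; exact absurd hA h.phiA
    · exact absurd (h.inA hA ht) c1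
  · intro ht
    have h3 := h.inA hA ht
    have h4 : DD i t (u - g) := h3.cg (by ring)
    have h5 : ¬ DD i t u := fun h5 => h.ab h5 h4
    have h6 : i ≤ m (s (t + g)) := by rw [ht]; exact hA.1
    simp only [mv, mvQ, h4, h5, h6, if_true, if_false]; exact ht

theorem keepB (h : MoveH m s ρ i u g φ) {w : A} (hB : RB m ρ i u g w) (t : ℤ) :
    mv m s i u g φ t = w ↔ s (t + (2 ^ i - g)) = w := by
  constructor
  · intro ht
    unfold mv mvQ at ht
    split_ifs at ht with c1 c2 c3
    · exact ht
    · subst ht; exact absurd hB (h.rab (h.occA (toA _ c2) c3))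
    · subst ht; exact absurd hB h.phiB
    · exact absurd ((h.rb hB).2.2.2 _ ht) c2
  · intro ht
    have h3 := (h.rb hB).2.2.2 _ ht
    have h4 : DD i t u := h3.comb (DD.subpow 0 (le_refl i)) (by ring)
    simp only [mv, mvQ, h4, if_true]; exact ht

theorem keepO (h : MoveH m s ρ i u g φ) {w : A} (hφ : w ≠ φ) (hA : ¬ RA m ρ i u w)
    (hB : ¬ RB m ρ i u g w) (t : ℤ) :
    mv m s i u g φ t = w ↔ s t = w ∧ ¬ DD i t u := by
  constructor
  · intro ht
    unfold mv mvQ at ht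
    split_ifs at ht with c1 c2 c3
    · subst ht; exact absurd (h.occB (toB _ c1)) hB
    · subst ht; exact absurd (h.occA (toA _ c2) c3) hA
    · exact absurd ht.symm hφ
    · exact ⟨ht, c1⟩
  · rintro ⟨ht, h2⟩
    have h4 : ¬ DD i t (u - g) := fun h4 => by subst ht; exact hB (h.occB h4)
    simp only [mv, mvQ, h2, h4, if_false]; exact ht

end MoveH

/-! ### Counting -/

def Pd (M : ℕ) (s : ℤ → A) : Prop := ∀ t, s (t + 2 ^ M) = s t

noncomputable def cset (M : ℕ) (p : ℤ → Prop) : Finset ℤ := (Finset.Ico (0:ℤ) (2 ^ M)).filter p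

noncomputable def cnt (M : ℕ) (s : ℤ → A) (σ : A) : ℕ := (cset M (fun t => s t = σ)).card

theorem Pd.add_mul {M : ℕ} {s : ℤ → A} (h : Pd M s) (t c : ℤ) : s (t + 2 ^ M * c) = s t := by
  rcases Int.eq_nat_or_neg c with ⟨k, rfl | rfl⟩
  · rw [mul_comm]; exact per_mul h k t
  · rw [← per_mul h k (t + 2 ^ M * -(k:ℤ))]; congr 1; ring

theorem Pd.dd {M : ℕ} {s : ℤ → A} (h : Pd M s) {t t' : ℤ} (e : DD M t t') : s t = s t' := by
  obtain ⟨c, hc⟩ := e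
  rw [← h.add_mul t' c, ← hc]; congr 1; ring

theorem dd_emod (M : ℕ) (t : ℤ) : DD M (t % 2 ^ M) t := by
  apply DD.symm
  exact Int.dvd_self_sub_emod

theorem emod_mem (M : ℕ) (t : ℤ) : t % 2 ^ M ∈ Finset.Ico (0:ℤ) (2 ^ M) := by
  have hp : (0:ℤ) < 2 ^ M := by positivity
  rw [Finset.mem_Ico]
  exact ⟨Int.emod_nonneg _ hp.ne', Int.emod_lt_of_pos _ hp⟩

theorem dd_eq {M : ℕ} {t t' : ℤ} (h : DD M t t') (ht : t ∈ Finset.Ico (0:ℤ) (2 ^ M))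
    (ht' : t' ∈ Finset.Ico (0:ℤ) (2 ^ M)) : t = t' := by
  rw [Finset.mem_Ico] at ht ht'
  rcases lt_trichotomy t t' with hl | hl | hl
  · have := h.symm.gap hl; linarith
  · exact hl
  · have := h.gap hl; linarith

theorem cset_shift_le {M : ℕ} {p q : ℤ → Prop} (d : ℤ)
    (hq : ∀ t t', DD M t t' → q t → q t') (h : ∀ t, p t → q (t + d)) :
    (cset M p).card ≤ (cset M q).card := by
  apply Finset.card_le_card_of_injOn (fun t => (t + d) % 2 ^ M)
  · intro t ht
    simp only [cset, Finset.coe_filter, Set.mem_setOf_eq] at ht ⊢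
    exact ⟨emod_mem _ _, hq _ _ (dd_emod _ _).symm (h t ht.2)⟩
  · intro t ht t' ht' e
    simp only [cset, Finset.coe_filter, Set.mem_setOf_eq] at ht ht' e
    refine dd_eq ?_ ht.1 ht'.1
    have h1 := dd_emod M (t + d)
    rw [e] at h1
    exact (h1.symm.trans (dd_emod M (t' + d))).cg (by ring)

theorem Pd.pred {M : ℕ} {s : ℤ → A} (h : Pd M s) (σ : A) :
    ∀ t t', DD M t t' → s t = σ → s t' = σ := fun _ _ e f => by rw [← h.dd e]; exact f

theorem cnt_shift {M : ℕ} {s s' : ℤ → A} (h : Pd M s) (h' : Pd M s') {σ : A} (d : ℤ)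
    (e : ∀ t, s' t = σ ↔ s (t + d) = σ) : cnt M s' σ = cnt M s σ := by
  apply le_antisymm
  · exact cset_shift_le d (h.pred σ) (fun t ht => (e t).1 ht)
  · exact cset_shift_le (-d) (h'.pred σ) (fun t ht => (e _).2 (by simpa using ht))

theorem cnt_congr {M : ℕ} {s s' : ℤ → A} {σ : A}
    (e : ∀ t, s' t = σ ↔ s t = σ) : cnt M s' σ = cnt M s σ := by
  unfold cnt; simp only [e]

theorem cset_lt {M : ℕ} {p q : ℤ → Prop} (hp : ∀ t t', DD M t t' → p t → p t')
    (hq : ∀ t t', DD M t t' → q t → q t')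
    (h : ∀ t, p t → q t) {u : ℤ} (h1 : q u) (h2 : ¬ p u) : (cset M p).card < (cset M q).card := by
  apply Finset.card_lt_card
  rw [Finset.ssubset_iff_of_subset]
  · refine ⟨u % 2 ^ M, ?_, ?_⟩
    · simp only [cset, Finset.mem_filter]
      exact ⟨emod_mem _ _, hq _ _ (dd_emod _ _).symm h1⟩
    · simp only [cset, Finset.mem_filter]
      exact fun x => h2 (hp _ _ (dd_emod _ _) x.2)
  · intro t ht
    simp only [cset, Finset.mem_filter] at ht ⊢
    exact ⟨ht.1, h t ht.2⟩

theorem cnt_lt {M : ℕ} {s s' : ℤ → A} (h : Pd M s) (h' : Pd M s') {σ : A}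
    (e : ∀ t, s' t = σ → s t = σ) {u : ℤ} (h1 : s u = σ) (h2 : s' u ≠ σ) :
    cnt M s' σ < cnt M s σ :=
  cset_lt (h'.pred σ) (h.pred σ) e h1 h2

theorem card_class {M k : ℕ} (hk : k ≤ M) (r : ℤ) :
    (cset M (fun t => DD k t r)).card = 2 ^ (M - k) := by
  have h1 := Int.Ico_filter_modEq_card (0:ℤ) (2 ^ M) (r := 2 ^ k) (by positivity) r
  have h2 : cset M (fun t => DD k t r) = {x ∈ Finset.Ico (0:ℤ) (2 ^ M) | x ≡ r [ZMOD 2 ^ k]} := by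
    unfold cset; apply Finset.filter_congr
    intro x _
    rw [Int.modEq_comm, Int.modEq_iff_dvd]; rfl
  rw [h2]
  have h3 : ((((2:ℤ) ^ M : ℤ) - r : ℤ) / ((2 ^ k : ℤ) : ℚ) : ℚ)
      = ((0 - r : ℤ) / ((2 ^ k : ℤ) : ℚ) : ℚ) + ((2 ^ (M - k) : ℤ) : ℚ) := by
    have : (2:ℚ) ^ M = 2 ^ (M - k) * 2 ^ k := by rw [← pow_add]; congr 1; omega
    push_cast
    rw [this]
    field_simp
    ring
  have h4 : ⌈(((2:ℤ) ^ M : ℤ) - r : ℚ) / ((2 ^ k : ℤ) : ℚ)⌉ -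
      ⌈((0:ℤ) - r : ℚ) / ((2 ^ k : ℤ) : ℚ)⌉ = 2 ^ (M - k) := by
    have h3' : (((2:ℤ) ^ M : ℤ) - r : ℚ) / ((2 ^ k : ℤ) : ℚ)
      = ((0:ℤ) - r : ℚ) / ((2 ^ k : ℤ) : ℚ) + ((2 ^ (M - k) : ℤ) : ℚ) := by
      push_cast at h3 ⊢; exact h3
    rw [h3', Int.ceil_add_intCast]; ring
  rw [h4] at h1
  rw [max_eq_left (by positivity)] at h1
  exact_mod_cast h1

theorem sum_cnt [Fintype A] (M : ℕ) (s : ℤ → A) : ∑ σ, cnt M s σ = 2 ^ M := by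
  have h := Finset.card_eq_sum_card_fiberwise (s := Finset.Ico (0:ℤ) (2 ^ M)) (t := Finset.univ)
    (f := s) (fun _ _ => by simp)
  rw [Int.card_Ico] at h
  unfold cnt cset
  rw [← h]
  have : ((2:ℤ) ^ M - 0) = ((2 ^ M : ℕ) : ℤ) := by push_cast; ring
  rw [this, Int.toNat_natCast]

def lo (M : ℕ) (m : A → ℕ) (σ : A) : ℕ := 2 ^ (M - (m σ + 1))
def hi (M : ℕ) (m : A → ℕ) (σ : A) : ℕ := 2 ^ (M - m σ)

section
variable {M : ℕ} {m : A → ℕ} {s : ℤ → A} {ρ : A → ℤ}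

theorem dd_pred {M k : ℕ} (hk : k ≤ M) (r : ℤ) : ∀ t t', DD M t t' → DD k t r → DD k t' r :=
  fun _ _ e f => (e.mono hk).symm.trans f

theorem lo_le {σ : A} (hM : m σ + 1 ≤ M) (h : Uni m s ρ) : lo M m σ ≤ cnt M s σ := by
  unfold lo; rw [← card_class hM (ρ σ)]
  apply Finset.card_le_card
  intro t ht
  simp only [cset, Finset.mem_filter] at ht ⊢
  exact ⟨ht.1, (h σ).1 t ht.2⟩

theorem le_hi {σ : A} (hM : m σ + 1 ≤ M) (h : Uni m s ρ) : cnt M s σ ≤ hi M m σ := by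
  unfold hi; rw [← card_class (show m σ ≤ M by omega) (ρ σ)]
  apply Finset.card_le_card
  intro t ht
  simp only [cset, Finset.mem_filter] at ht ⊢
  exact ⟨ht.1, (h σ).2 t ht.2⟩

theorem low_of {σ : A} (hM : m σ + 1 ≤ M) (h : Uni m s ρ) (hs : Pd M s)
    (e : cnt M s σ = lo M m σ) (t : ℤ) (ht : s t = σ) : DD (m σ + 1) t (ρ σ) := by
  by_contra hc
  have := cset_lt (dd_pred hM (ρ σ)) (hs.pred σ) (h σ).1 ht hc
  rw [card_class hM] at this
  unfold cnt lo at e; omega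

theorem high_of {σ : A} (hM : m σ + 1 ≤ M) (h : Uni m s ρ) (hs : Pd M s)
    (e : cnt M s σ = hi M m σ) (t : ℤ) (ht : DD (m σ) t (ρ σ)) : s t = σ := by
  by_contra hc
  have := cset_lt (hs.pred σ) (dd_pred (show m σ ≤ M by omega) (ρ σ)) (h σ).2 ht hc
  rw [card_class (by omega)] at this
  unfold cnt hi at e; omega

theorem lohi_of {σ : A} (hM : m σ + 1 ≤ M) (h : Uni m s ρ) (hs : Pd M s)
    (e : cnt M s σ = lo M m σ ∨ cnt M s σ = hi M m σ) :
    (∀ t, s t = σ → DD (m σ + 1) t (ρ σ)) ∨ (∀ t, DD (m σ) t (ρ σ) → s t = σ) := by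
  rcases e with e | e
  · left; exact low_of hM h hs e
  · right; exact high_of hM h hs e

theorem per_of {σ : A} (hM : m σ + 1 ≤ M) (h : Uni m s ρ) (hs : Pd M s)
    (e : cnt M s σ = lo M m σ ∨ cnt M s σ = hi M m σ) : Per m s σ := by
  intro c hc
  rcases lohi_of hM h hs e with e | e
  · have h1 := e c hc
    exact ⟨fun t ht => (h σ).1 t (ht.trans h1), fun t ht => ((e t ht).trans h1.symm).mono (Nat.le_succ _)⟩
  · have h1 := (h σ).2 c hc
    exact ⟨fun t ht => e t ((ht.mono (Nat.le_succ _)).trans h1), fun t ht => ((h σ).2 t ht).trans h1.symm⟩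

theorem eq_lo_of {σ : A} (hM : m σ + 1 ≤ M) (h : Uni m s ρ)
    (e : ∀ t, s t = σ → DD (m σ + 1) t (ρ σ)) : cnt M s σ = lo M m σ := by
  apply le_antisymm _ (lo_le hM h)
  unfold lo; rw [← card_class hM (ρ σ)]
  apply Finset.card_le_card
  intro t ht
  simp only [cset, Finset.mem_filter] at ht ⊢
  exact ⟨ht.1, e t ht.2⟩

theorem eq_hi_of {σ : A} (hM : m σ + 1 ≤ M) (h : Uni m s ρ)
    (e : ∀ t, DD (m σ) t (ρ σ) → s t = σ) : cnt M s σ = hi M m σ := by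
  apply le_antisymm (le_hi hM h)
  unfold hi; rw [← card_class (show m σ ≤ M by omega) (ρ σ)]
  apply Finset.card_le_card
  intro t ht
  simp only [cset, Finset.mem_filter] at ht ⊢
  exact ⟨ht.1, e t ht.2⟩
end

/-! ### Elementary steps -/

def Bin (M : ℕ) (m : A → ℕ) (s : ℤ → A) (σ : A) : Prop :=
  cnt M s σ = lo M m σ ∨ cnt M s σ = hi M m σ

/-- Mass can be moved from `x` to `y`. -/
def Res (M : ℕ) (m : A → ℕ) (s : ℤ → A) (x y : A) : Prop :=
  ∃ s' ρ', Uni m s' ρ' ∧ Pd M s' ∧ Conn m s s' ∧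
    (∀ σ, σ ≠ x → σ ≠ y → cnt M s' σ = cnt M s σ) ∧ cnt M s' x < cnt M s x

theorem Conn.tr {M : ℕ} {m : A → ℕ} (hM : ∀ σ, m σ + 1 ≤ M) {s s' s'' : ℤ → A} (hs' : Pd M s')
    (hs'' : Pd M s'') (h : Conn m s s') (h' : Conn m s' s'') : Conn m s s'' :=
  Conn.trans (P := 2 ^ M) (by positivity) (fun σ => pow_le_pow_right₀ (by norm_num) (hM σ))
    hs' hs'' h h'

theorem Res.of_conn {M : ℕ} {m : A → ℕ} (hM : ∀ σ, m σ + 1 ≤ M) {s s1 : ℤ → A} {x y : A}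
    (hp : Pd M s1) (hc : Conn m s s1) (h1 : ∀ σ, σ ≠ x → σ ≠ y → cnt M s1 σ = cnt M s σ)
    (hx : cnt M s1 x ≤ cnt M s x) (h : Res M m s1 x y) : Res M m s x y := by
  obtain ⟨s', ρ', a, b, c, d, e⟩ := h
  exact ⟨s', ρ', a, b, hc.tr hM hp b c, fun σ h2 h3 => (d σ h2 h3).trans (h1 σ h2 h3), by omega⟩

theorem case0 {M : ℕ} {m : A → ℕ} (hM : ∀ σ, m σ + 1 ≤ M) {s : ℤ → A} {ρ : A → ℤ}
    (hu : Uni m s ρ) (hp : Pd M s) {x y : A} (hxy : x ≠ y) {u : ℤ} (hux : s u = x)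
    (hue : ¬ DD (m x + 1) u (ρ x)) (huy : DD (m y + 1) u (ρ y + 2 ^ m y)) : Res M m s x y := by
  set s' : ℤ → A := fun t => if s t = x ∧ ¬ DD (m x + 1) t (ρ x) ∧
    DD (m y + 1) t (ρ y + 2 ^ m y) then y else s t with hs'
  have hp' : Pd M s' := by
    intro t
    have e : ∀ w r, DD (m w + 1) (t + 2 ^ M) r ↔ DD (m w + 1) t r := fun w r =>
      ⟨fun x => (DD.addpow t (hM w)).symm.trans x, fun x => (DD.addpow t (hM w)).trans x⟩
    simp only [hs', e, hp t]
  have hx' : ∀ t, s' t = x → s t = x := by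
    intro t ht
    simp only [hs'] at ht
    split_ifs at ht with c
    · exact c.1
    · exact ht
  have ho : ∀ σ, σ ≠ x → σ ≠ y → ∀ t, s' t = σ ↔ s t = σ := by
    intro σ h1 h2 t
    simp only [hs']
    split_ifs with c
    · constructor
      · intro e; exact absurd e.symm h2
      · intro e; exact absurd (e.symm.trans c.1) h1
    · rfl
  have hu' : Uni m s' ρ := by
    intro σ
    by_cases h1 : σ = x
    · subst h1
      constructor
      · intro t ht
        have : s t = σ := (hu σ).1 t ht
        simp only [hs', ht, not_true, false_and, and_false, if_false]; exact this
      · intro t ht; exact (hu σ).2 t (hx' t ht)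
    by_cases h2 : σ = y
    · subst h2
      constructor
      · intro t ht
        have : s t = σ := (hu σ).1 t ht
        have h3 : ¬ s t = x := by rw [this]; exact h1
        simp only [hs', h3, false_and, if_false]; exact this
      · intro t ht
        simp only [hs'] at ht
        split_ifs at ht with c
        · exact (c.2.2.mono (Nat.le_succ _)).trans (DD.addpow _ le_rfl)
        · exact (hu σ).2 t ht
    · exact ⟨fun t ht => (ho σ h1 h2 t).2 ((hu σ).1 t ht), fun t ht => (hu σ).2 t ((ho σ h1 h2 t).1 ht)⟩
  refine ⟨s', ρ, hu', hp', ⟨0, 0, ConnAt.of_glue 0 (fun σ => glueA 0 (hu σ) (hu' σ))⟩,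
    fun σ h1 h2 => cnt_congr (ho σ h1 h2), ?_⟩
  refine cnt_lt hp hp' hx' hux ?_
  simp only [hs', hux, hue, huy, not_false_iff, true_and, if_true]
  exact hxy.symm

theorem MoveH.conn {M : ℕ} {m : A → ℕ} {s : ℤ → A} {ρ : A → ℤ} {i : ℕ} {u g : ℤ} {φ : A}
    (h : MoveH m s ρ i u g φ) (hM : ∀ σ, m σ + 1 ≤ M) : Conn m s (mv m s i u g φ) :=
  h.connAt (P := 2 ^ M) (fun σ => pow_le_pow_right₀ (by norm_num) (hM σ))

/-- A `Per` letter in class `a` different from `s u` is resident. -/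
theorem MoveH.foreign {m : A → ℕ} {s : ℤ → A} {ρ : A → ℤ} {i : ℕ} {u g : ℤ} {φ : A}
    (_h : MoveH m s ρ i u g φ) {w : A} (hw : Per m s w) (hu : w ≠ s u) {t : ℤ} (ht : s t = w)
    (ha : DD i t u) : i ≤ m w := by
  by_contra hc
  exact hu ((hw t ht).1 u (ha.symm.mono (by omega))).symm

theorem MoveH.other_cnt {M : ℕ} {m : A → ℕ} {s : ℤ → A} {ρ : A → ℤ} {i : ℕ} {u g : ℤ} {φ : A}
    (h : MoveH m s ρ i u g φ) (hi : i ≤ M) (hp : Pd M s) {w : A} (hφ : w ≠ φ) (hu : w ≠ s u)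
    (hw : Per m s w) : cnt M (mv m s i u g φ) w = cnt M s w := by
  have hp' : Pd M (mv m s i u g φ) := h.per hi hp
  by_cases hA : RA m ρ i u w
  · exact cnt_shift hp hp' _ (h.keepA hA)
  by_cases hB : RB m ρ i u g w
  · exact cnt_shift hp hp' _ (h.keepB hB)
  · apply cnt_congr
    intro t
    rw [h.keepO hφ hA hB]
    refine ⟨fun x => x.1, fun x => ⟨x, fun ha => hA ?_⟩⟩
    have := h.foreign hw hu x ha
    subst x; exact h.occA ha this

theorem step1 {M : ℕ} {m : A → ℕ} (hM : ∀ σ, m σ + 1 ≤ M) {s : ℤ → A} {ρ : A → ℤ}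
    (hu : Uni m s ρ) (hp : Pd M s) {x y : A} (hxy : x ≠ y)
    (hPer : ∀ σ, σ ≠ x → σ ≠ y → Per m s σ) {u : ℤ} (hux : s u = x)
    (hue : ¬ DD (m x + 1) u (ρ x)) {i : ℕ} {g : ℤ} (hi : i ≤ M) (g0 : 0 < g) (g1 : g < 2 ^ i)
    (hyi : m y + 1 ≤ i) (hyb : DD (m y + 1) (u - g) (ρ y + 2 ^ m y))
    (Hb : ∀ t, DD i t (u - g) → Per m s (s t) ∧ i ≤ m (s t) + 1 ∧
      (2:ℤ) ^ i - g ≤ 2 ^ (m (s t)) ∧ ∀ t', s t' = s t → DD i t' (u - g)) :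
    Res M m s x y := by
  have h : MoveH m s ρ i u g y := by
    refine ⟨hu, g0, g1, by rw [hux]; exact hue, ?_, Hb, hyi, hyb⟩
    intro t _ hit
    by_cases hx : s t = x
    · left; rw [hx, hux]
    · right; exact hPer _ hx (fun e => by rw [e] at hit; omega)
  have hp' : Pd M (mv m s i u g y) := h.per hi hp
  have hcn := h.conn hM
  have hB : ¬ RB m ρ i u g x := fun hB => h.ab (DD.refl i u) ((h.rb hB).2.2.2 u hux)
  have ho : ∀ σ, σ ≠ x → σ ≠ y → cnt M (mv m s i u g y) σ = cnt M s σ := fun σ h1 h2 =>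
    h.other_cnt hi hp h2 (by rw [hux]; exact h1) (hPer σ h1 h2)
  by_cases hA : RA m ρ i u x
  · refine Res.of_conn hM hp' hcn ho (le_of_eq (cnt_shift hp hp' _ (h.keepA hA))) ?_
    refine case0 hM h.uni' hp' hxy (u := u - g) ((h.keepA hA _).2 (by simpa using hux)) ?_ ?_
    · simp only [MoveH.newρ, hA, if_true]
      exact fun e => hue (e.cg (by ring))
    · simp only [MoveH.newρ, h.phiA, h.phiB, if_false]
      exact hyb
  · refine ⟨_, _, h.uni', hp', hcn, ho, ?_⟩
    refine cnt_lt hp hp' (fun t ht => ((h.keepO hxy hA hB t).1 ht).1) hux (fun e => ?_)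
    exact ((h.keepO hxy hA hB u).1 e).2 (DD.refl _ _)

theorem stepL1 {M : ℕ} {m : A → ℕ} (hM : ∀ σ, m σ + 1 ≤ M) {s : ℤ → A} {ρ : A → ℤ}
    (hu : Uni m s ρ) (hp : Pd M s) {x y z : A} (hxy : x ≠ y) (hzx : z ≠ x) (hzy : z ≠ y)
    (hPer : ∀ σ, σ ≠ x → σ ≠ y → Per m s σ) {u q : ℤ} (hux : s u = x)
    (hue : ¬ DD (m x + 1) u (ρ x)) (hlow : ∀ t, s t = z → DD (m z + 1) t (ρ z))
    (hq : s q = z) (hqy : DD (m y + 1) q (ρ y + 2 ^ m y)) (hyz : m y ≤ m z)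
    (g0 : (2:ℤ) ^ m z ≤ u - q) (g1 : u - q < 2 ^ (m z + 1)) : Res M m s x y := by
  have hp0 : (0:ℤ) < 2 ^ m z := by positivity
  have hpp : (2:ℤ) ^ (m z + 1) = 2 * 2 ^ m z := by rw [pow_succ]; ring
  have eq : u - (u - q) = q := by ring
  refine step1 hM hu hp hxy hPer hux hue (i := m z + 1) (g := u - q) (hM z) (by linarith) g1
    (by omega) (by rw [eq]; exact hqy) ?_
  rw [eq]
  intro t ht
  have e : s t = z := (hPer z hzx hzy q hq).1 t ht
  rw [e]
  exact ⟨hPer z hzx hzy, le_rfl, by linarith, fun t' ht' => (hlow t' ht').trans (hlow q hq).symm⟩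

/-! ### One step: moving mass from `x` to `y` -/

theorem window (i : ℕ) (u q : ℤ) : ∃ q', DD i q' q ∧ q' ≤ u ∧ u < q' + 2 ^ i := by
  obtain ⟨t, h1, h2, h3⟩ := exists_class i q (u - 2 ^ i + 1)
  exact ⟨t, h3, by linarith, by linarith⟩

section
variable {M : ℕ} {m : A → ℕ} {s : ℤ → A} {ρ : A → ℤ} {x y z : A} {u q : ℤ}

/-- `x` does not meet `B_y` unless an extra of `x` does. -/
theorem noX (hu : Uni m s ρ) (hxy : x ≠ y) (hux : s u = x) (hue : ¬ DD (m x + 1) u (ρ x))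
    (hn : ∀ t, s t = x → ¬ DD (m x + 1) t (ρ x) → ¬ DD (m y + 1) t (ρ y + 2 ^ m y))
    (t : ℤ) (ht : DD (m y + 1) t (ρ y + 2 ^ m y)) : s t ≠ x := by
  intro hx
  have hb : DD (m x + 1) t (ρ x) := by
    by_contra hc; exact hn t hx hc ht
  have hut : DD (m x) u t := ((hu x).2 u hux).trans (hb.mono (Nat.le_succ _)).symm
  rcases lt_trichotomy (m x) (m y) with hl | hl | hl
  · have h1 : s (t + 2 ^ m y) = y := (hu y).1 _ ht.flip
    have h2 : s (t + 2 ^ m y) = x := (hu x).1 _ ((DD.addpow t (by omega)).trans hb)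
    exact hxy (h2.symm.trans h1)
  · have h1 := hut.half.resolve_left (fun h => hue (h.trans hb))
    rw [hl] at h1
    have h2 : s u = y := (hu y).1 _ (h1.trans ht.flip)
    exact hxy (hux.symm.trans h2)
  · exact hn u hux hue ((hut.mono (by omega)).trans ht)

theorem le_of_inB (hu : Uni m s ρ) (hzy : z ≠ y) (hPer : Per m s z) (hq : s q = z)
    (hqy : DD (m y + 1) q (ρ y + 2 ^ m y)) : m y ≤ m z := by
  by_contra hc
  have h1 : s (q + 2 ^ m y) = y := (hu y).1 _ hqy.flip
  have h2 : s (q + 2 ^ m y) = z := (hPer q hq).1 _ (DD.addpow q (by omega))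
  exact hzy (h2.symm.trans h1)

theorem stepHigh (hM : ∀ σ, m σ + 1 ≤ M) (hu : Uni m s ρ) (hp : Pd M s) (hxy : x ≠ y)
    (hzx : z ≠ x) (hzy : z ≠ y) (hPer : ∀ σ, σ ≠ x → σ ≠ y → Per m s σ) (hux : s u = x)
    (hue : ¬ DD (m x + 1) u (ρ x)) (hhigh : ∀ t, DD (m z) t (ρ z) → s t = z)
    (hq : s q = z) (hqy : DD (m y + 1) q (ρ y + 2 ^ m y)) : Res M m s x y := by
  have hle := le_of_inB hu hzy (hPer z hzx hzy) hq hqy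
  have hlt : m y < m z := by
    rcases lt_or_eq_of_le hle with h | h
    · exact h
    · exfalso
      have h1 : s (q + 2 ^ m y) = y := (hu y).1 _ hqy.flip
      have h2 : s (q + 2 ^ m y) = z :=
        hhigh _ ((DD.addpow q (by omega)).trans ((hu z).2 q hq))
      exact hzy (h2.symm.trans h1)
  obtain ⟨q', e1, e2, e3⟩ := window (m z) u q
  have hq' : DD (m z) q' (ρ z) := e1.trans ((hu z).2 q hq)
  have hne : q' ≠ u := by
    rintro rfl; exact hzx ((hhigh _ hq').symm.trans hux)
  have eq : u - (u - q') = q' := by ring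
  have hMz := hM z
  refine step1 hM hu hp hxy hPer hux hue (i := m z) (g := u - q') (by omega) (by omega)
    (by linarith) hlt (by rw [eq]; exact (e1.mono (by omega)).trans hqy) ?_
  rw [eq]
  intro t ht
  have e : s t = z := hhigh _ (ht.trans hq')
  rw [e]
  exact ⟨hPer z hzx hzy, Nat.le_succ _, by linarith [show q' < u by omega],
    fun t' ht' => ((hu z).2 t' ht').trans hq'.symm⟩

/-- case `L2a`: the flip -/
theorem stepL2a (hM : ∀ σ, m σ + 1 ≤ M) (hu : Uni m s ρ) (hp : Pd M s) (hxy : x ≠ y)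
    (hzx : z ≠ x) (hzy : z ≠ y) (hBin : ∀ σ, σ ≠ x → σ ≠ y → Bin M m s σ) (hux : s u = x)
    (hue : ¬ DD (m x + 1) u (ρ x)) (hlow : ∀ t, s t = z → DD (m z + 1) t (ρ z))
    (hq : s q = z) (hqy : DD (m y + 1) q (ρ y + 2 ^ m y)) (hyz : m y < m z)
    (hnoX : ∀ t, DD (m y + 1) t (ρ y + 2 ^ m y) → s t ≠ x)
    (g0 : q < u) (g1 : u - q < 2 ^ m z) {v : ℤ} (hv : s v = y)
    (hvq : DD (m z + 1) v (q + 2 ^ m z)) : Res M m s x y := by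
  have hp0 : (0:ℤ) < 2 ^ m z := by positivity
  have hpp : (2:ℤ) ^ (m z + 1) = 2 * 2 ^ m z := by rw [pow_succ]; ring
  have hPer : ∀ σ, σ ≠ x → σ ≠ y → Per m s σ := fun σ h1 h2 => per_of (hM σ) hu hp (hBin σ h1 h2)
  have hvq' : DD (m z + 1) (v - 2 ^ m z) q := hvq.cg (by ring)
  have hvB : DD (m y + 1) v (ρ y + 2 ^ m y) :=
    ((hvq.mono (by omega)).trans (DD.addpow q (by omega))).trans hqy
  have h : MoveH m s ρ (m z + 1) v (2 ^ m z) y := by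
    refine ⟨hu, hp0, by linarith, ?_, ?_, ?_, by omega, (hvq'.mono (by omega)).trans hqy⟩
    · rw [hv]; intro h; exact DD.nboth h hvB
    · intro t ht hit
      right
      refine hPer _ (hnoX t ((ht.mono (by omega)).trans hvB)) (fun e => by rw [e] at hit; omega)
    · intro t ht
      have e : s t = z := (hPer z hzx hzy q hq).1 t (ht.trans hvq')
      rw [e]
      exact ⟨hPer z hzx hzy, le_rfl, by linarith,
        fun t' ht' => ((hlow t' ht').trans (hlow q hq).symm).trans hvq'.symm⟩
  set s1 := mv m s (m z + 1) v (2 ^ m z) y with hs1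
  have hp' : Pd M s1 := h.per (hM z) hp
  have hxA : ¬ RA m ρ (m z + 1) v x := fun hA =>
    hnoX (ρ x) ((hA.2.mono (by omega)).trans hvB) (hu.base x)
  have hzB : RB m ρ (m z + 1) v (2 ^ m z) z := by
    have := h.occB (DD.refl _ (v - 2 ^ m z))
    rwa [(hPer z hzx hzy q hq).1 _ hvq'] at this
  have hxB : ¬ RB m ρ (m z + 1) v (2 ^ m z) x := fun hB =>
    hzx (((hPer z hzx hzy q hq).1 _ (hB.2.trans hvq')).symm.trans (hu.base x))
  have hx1 : ∀ t, s1 t = x ↔ s t = x := by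
    intro t
    rw [hs1, h.keepO hxy hxA hxB]
    exact ⟨fun e => e.1, fun e => ⟨e, fun hd => hnoX t ((hd.mono (by omega)).trans hvB) e⟩⟩
  have ho : ∀ σ, σ ≠ x → σ ≠ y → cnt M s1 σ = cnt M s σ := fun σ h1 h2 =>
    h.other_cnt (hM z) hp h2 (by rw [hv]; exact h2) (hPer σ h1 h2)
  refine Res.of_conn hM hp' (h.conn hM) ho (le_of_eq (cnt_congr hx1)) ?_
  have hz1 : s1 (q - 2 ^ m z) = z := by
    rw [hs1, h.keepB hzB]
    rw [hpp, show q - 2 ^ m z + (2 * 2 ^ m z - 2 ^ m z) = q by ring]; exact hq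
  have hlow1 : cnt M s z = lo M m z := eq_lo_of (hM z) hu hlow
  refine stepL1 hM h.uni' hp' hxy hzx hzy (u := u) (q := q - 2 ^ m z)
    (fun σ h1 h2 => per_of (hM σ) h.uni' hp' ?_) ((hx1 u).2 hux) ?_ ?_ hz1 ?_ hyz.le
    (by linarith) (by linarith)
  · rw [← hs1, ho σ h1 h2]; exact hBin σ h1 h2
  · simp only [MoveH.newρ, hxA, hxB, if_false]; exact hue
  · exact low_of (hM z) h.uni' hp' (by rw [← hs1, ho z hzx hzy]; exact hlow1)
  · simp only [MoveH.newρ, h.phiA, h.phiB, if_false]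
    exact (DD.subpow q (by omega)).trans hqy

/-- case `L2b` -/
theorem stepL2b (hM : ∀ σ, m σ + 1 ≤ M) (hu : Uni m s ρ) (hp : Pd M s) (hxy : x ≠ y)
    (hzx : z ≠ x) (hzy : z ≠ y) (hPer : ∀ σ, σ ≠ x → σ ≠ y → Per m s σ) (hux : s u = x)
    (hue : ¬ DD (m x + 1) u (ρ x)) 
    (hq : s q = z) (hqy : DD (m y + 1) q (ρ y + 2 ^ m y)) (hyz : m y < m z)
    (hnoX : ∀ t, DD (m y + 1) t (ρ y + 2 ^ m y) → s t ≠ x)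
    (hlow : ∀ t, s t = z → DD (m z + 1) t (ρ z))
    (g0 : q < u) (g1 : u - q < 2 ^ m z) (hny : ∀ v, DD (m z + 1) v (q + 2 ^ m z) → s v ≠ y) :
    Res M m s x y := by
  have hp0 : (0:ℤ) < 2 ^ m z := by positivity
  have hpp : (2:ℤ) ^ (m z + 1) = 2 * 2 ^ m z := by rw [pow_succ]; ring
  have eq : u - (u - q + 2 ^ m z) = q - 2 ^ m z := by ring
  refine step1 hM hu hp hxy hPer hux hue (i := m z + 1) (g := u - q + 2 ^ m z) (hM z) (by linarith)
    (by linarith) (by omega) (by rw [eq]; exact (DD.subpow q (by omega)).trans hqy) ?_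
  rw [eq]
  intro t ht
  have ht2 : DD (m z + 1) t (q + 2 ^ m z) := ht.comb (DD.subpow 0 (le_refl (m z + 1)))
    (by rw [hpp]; ring)
  have htq : DD (m z) t q := (ht.mono (Nat.le_succ _)).trans (DD.subpow q le_rfl)
  have hy : s t ≠ y := hny t ht2
  have hx : s t ≠ x := hnoX t ((htq.mono (by omega)).trans hqy)
  have hz : s t ≠ z := fun e => DD.nboth ((hlow t e).trans (hlow q hq).symm) ht2
  have hP := hPer _ hx hy
  have hle : m z ≤ m (s t) := by
    by_contra hc
    exact hz (((hP t rfl).1 q (htq.symm.mono (by omega))).symm.trans hq)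
  have hple : (2:ℤ) ^ m z ≤ 2 ^ m (s t) := pow_le_pow_right₀ (by norm_num) hle
  refine ⟨hP, by omega, by linarith, fun t' ht' => ?_⟩
  have h1 := (((hu (s t)).2 t' ht').trans ((hu (s t)).2 t rfl).symm).mono hle
  rcases h1.half with h2 | h2
  · exact h2.trans ht
  · exfalso
    have h3 : DD (m z + 1) t' q := h2.comb ht (by ring)
    exact hz (ht'.symm.trans ((hPer z hzx hzy q hq).1 t' h3))
end

/-- case `L3b` -/
theorem stepL3b {M : ℕ} {m : A → ℕ} {s : ℤ → A} {ρ : A → ℤ} {x y z : A} {u q : ℤ}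
    (hM : ∀ σ, m σ + 1 ≤ M) (hu : Uni m s ρ) (hp : Pd M s) (hxy : x ≠ y)
    (hzx : z ≠ x) (hzy : z ≠ y) (hBin : ∀ σ, σ ≠ x → σ ≠ y → Bin M m s σ) (hux : s u = x)
    (hue : ¬ DD (m x + 1) u (ρ x)) (hlow : ∀ t, s t = z → DD (m z + 1) t (ρ z))
    (hq : s q = z) (hqy : DD (m y + 1) q (ρ y + 2 ^ m y)) {k : ℕ} (hyk : m y = k) (hzk : m z = k)
    (g0 : q < u) (g1 : u - q < 2 ^ k)
    (hno : ∀ t, DD (k + 1) t (u + 2 ^ k) → s t = x → DD (m x + 1) t (ρ x)) : Res M m s x y := by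
  have hp0 : (0:ℤ) < 2 ^ k := by positivity
  have hpp : (2:ℤ) ^ (k + 1) = 2 * 2 ^ k := by rw [pow_succ]; ring
  have hPer : ∀ σ, σ ≠ x → σ ≠ y → Per m s σ := fun σ h1 h2 => per_of (hM σ) hu hp (hBin σ h1 h2)
  have hkM : k + 1 ≤ M := by have := hM y; omega
  rw [hyk] at hqy
  have hqz : DD (k + 1) q (ρ z) := by have := hlow q hq; rwa [hzk] at this
  have clz : ∀ t, s t = z ↔ DD (k + 1) t q := by
    intro t
    constructor
    · intro e; have := hlow t e; rw [hzk] at this; exact this.trans hqz.symm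
    · intro e; apply (hPer z hzx hzy q hq).1 t; rw [hzk]; exact e
  have hqy' : DD (k + 1) (q - 2 ^ k) (ρ y) := hqy.cg (by ring)
  have cly : ∀ t, s t = y ↔ DD (k + 1) t (q - 2 ^ k) := by
    intro t
    constructor
    · intro e
      have h1 := (hu y).2 t e
      rw [hyk] at h1
      rcases h1.half with h2 | h2
      · exact h2.trans hqy'.symm
      · exfalso; exact hzy (((clz t).2 (h2.trans hqy.symm)).symm.trans e)
    · intro e; apply (hu y).1 t; rw [hyk]; exact e.trans hqy'
  have perY : Per m s y := by
    intro c hc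
    constructor
    · intro t ht; rw [hyk] at ht; exact (cly t).2 (ht.trans ((cly c).1 hc))
    · intro t ht; rw [hyk]; exact (((cly t).1 ht).trans ((cly c).1 hc).symm).mono (Nat.le_succ _)
  -- first move
  have e1 : u - (u - q + 2 ^ k) = q - 2 ^ k := by ring
  have h : MoveH m s ρ (k + 1) u (u - q + 2 ^ k) z := by
    refine ⟨hu, by linarith, by linarith, by rw [hux]; exact hue, ?_, ?_, by omega, ?_⟩
    · intro t _ hit
      by_cases hx : s t = x
      · left; rw [hx, hux]
      · right; exact hPer _ hx (fun e => by rw [e] at hit; omega)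
    · rw [e1]
      intro t ht
      have e := (cly t).2 ht
      rw [e]
      exact ⟨perY, by omega, by rw [hyk]; linarith, fun t' ht' => (cly t').1 ht'⟩
    · rw [e1, hzk]
      exact hqz.comb (DD.subpow 0 (le_refl (k+1))) (by rw [hpp]; ring)
  set g1' := u - q + 2 ^ k with hg1'
  set s1 := mv m s (k + 1) u g1' z with hs1
  set ρ1 := MoveH.newρ m ρ (k + 1) u g1' with hρ1
  have hu1 : Uni m s1 ρ1 := h.uni'
  have hp1 : Pd M s1 := h.per hkM hp
  have hc1 : Conn m s s1 := h.conn hM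
  have rbY : ∀ w, RB m ρ (k + 1) u g1' w → w = y := by
    intro w hw
    have h2 := hw.2
    rw [e1] at h2
    rw [← hu.base w]; exact (cly _).2 h2
  have rbYY : RB m ρ (k + 1) u g1' y := by
    refine ⟨by omega, ?_⟩
    rw [e1]; exact hqy'.symm
  have hy1 : ∀ t, s1 t = y ↔ s (t + (2 ^ (k+1) - g1')) = y := h.keepB rbYY
  have hρy : ρ1 y = ρ y - (2 ^ (k+1) - g1') := by
    have : ¬ RA m ρ (k + 1) u y := fun hA => by have := hA.1; omega
    simp only [hρ1, MoveH.newρ, this, rbYY, if_true, if_false]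
  have hρz : ρ1 z = ρ z := by simp only [hρ1, MoveH.newρ, h.phiA, h.phiB, if_false]
  have hxB : ¬ RB m ρ (k + 1) u g1' x := fun hB => hxy (rbY x hB)
  have ho1 : ∀ σ, σ ≠ x → σ ≠ y → σ ≠ z → cnt M s1 σ = cnt M s σ := fun σ h1 h2 h3 =>
    h.other_cnt hkM hp h3 (by rw [hux]; exact h1) (hPer σ h1 h2)
  have hPer1 : ∀ σ, σ ≠ x → σ ≠ y → σ ≠ z → Per m s1 σ := fun σ h1 h2 h3 =>
    per_of (hM σ) hu1 hp1 (by
      have := hBin σ h1 h2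
      unfold Bin at this; rw [← ho1 σ h1 h2 h3] at this; exact this)
  -- the second block
  have hρyu : DD (k + 1) (ρ1 y) u := by
    rw [hρy]
    exact hqy'.symm.comb (DD.subpow 0 (le_refl (k+1))) (by rw [hg1', hpp]; ring)
  have e2 : q - 2 ^ k - (2 ^ (k+1) - (u - q)) = u + 2 ^ k - 2 ^ (k + 1) - 2 ^ (k + 1) := by
    rw [hpp]; ring
  have hb2 : DD (k + 1) (q - 2 ^ k - (2 ^ (k+1) - (u - q))) (u + 2 ^ k) := by
    rw [e2]; exact (DD.subpow _ le_rfl).trans (DD.subpow _ le_rfl)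
  have nab : ∀ t, DD (k + 1) t (u + 2 ^ k) → ¬ DD (k + 1) t u := fun t h1 h2 => DD.nboth h2 h1
  have nbb : ∀ t, DD (k + 1) t (u + 2 ^ k) → ¬ DD (k + 1) t (q - 2 ^ k) := fun t h1 h2 => by
    have h3 : DD (k + 1) u (u - (u - q)) :=
      (h1.symm.trans h2).comb (DD.subpow 0 (le_refl (k+1))) (by rw [hpp]; ring)
    exact DD.nsmall (by linarith) (by linarith) h3
  have nzz : ∀ t, DD (k + 1) t (u + 2 ^ k) → ¬ DD (k + 1) t q := fun t h1 h2 => by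
    have h3 : DD (k + 1) (u + 2 ^ k) (u + 2 ^ k - (u - q + 2 ^ k)) := (h1.symm.trans h2).cg (by ring)
    exact DD.nsmall (by linarith) (by linarith) h3
  have hs1s : ∀ t, DD (k + 1) t (u + 2 ^ k) → s1 t = s t := by
    intro t ht
    have h2 := nbb t ht
    rw [← e1] at h2
    simp only [hs1, mv, mvQ, nab t ht, h2, if_false]
  have Hb2 : ∀ t, DD (k + 1) t (q - 2 ^ k - (2 ^ (k+1) - (u - q))) → Per m s1 (s1 t) ∧
      k + 1 ≤ m (s1 t) + 1 ∧ (2:ℤ) ^ (k + 1) - (2 ^ (k+1) - (u - q)) ≤ 2 ^ (m (s1 t)) ∧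
      ∀ t', s1 t' = s1 t → DD (k + 1) t' (q - 2 ^ k - (2 ^ (k+1) - (u - q))) := by
    intro t ht
    have ht2 := ht.trans hb2
    rw [hs1s t ht2]
    have htu : DD k t u := (ht2.mono (Nat.le_succ _)).trans (DD.addpow u le_rfl)
    by_cases hx : s t = x
    · have hbx := hno t ht2 hx
      have hux' := (hu x).2 u hux
      have hmx : m x = k := by
        rcases lt_trichotomy (m x) k with hl | hl | hl
        · exfalso; exact hue ((htu.symm.mono (by omega)).trans hbx)
        · exact hl
        · exfalso
          exact nab t ht2 (((hbx.mono (Nat.le_succ _)).trans hux'.symm).mono (by omega))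
      have hxA : ¬ RA m ρ (k + 1) u x := fun hA => by have := hA.1; omega
      have hx1 : ∀ t', s1 t' = x → DD (k + 1) t' t := by
        intro t' ht'
        obtain ⟨f1, f2⟩ := (h.keepO (Ne.symm hzx) hxA hxB t').1 ht'
        have f3 := ((hu x).2 t' f1).trans (hbx.mono (Nat.le_succ _)).symm
        rw [hmx] at f3
        rcases f3.half with f4 | f4
        · exact f4
        · exact absurd ((f4.comb ht2 (y := u + 2 ^ (k + 1)) (by rw [hpp]; ring)).trans
            (DD.addpow u le_rfl)) f2
      have hρx : ρ1 x = ρ x := by simp only [hρ1, MoveH.newρ, hxA, hxB, if_false]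
      have hlo : cnt M s1 x = lo M m x := by
        refine eq_lo_of (hM x) hu1 (fun t' ht' => ?_)
        rw [hρx, hmx]; rw [hmx] at hbx; exact (hx1 t' ht').trans hbx
      rw [hx]
      refine ⟨per_of (hM x) hu1 hp1 (Or.inl hlo), by omega, by rw [hmx]; linarith,
        fun t' ht' => (hx1 t' ht').trans ht⟩
    · have hy : s t ≠ y := fun e => nbb t ht2 ((cly t).1 e)
      have hz : s t ≠ z := fun e => nzz t ht2 ((clz t).1 e)
      have hP := hPer _ hx hy
      have hle : k ≤ m (s t) := by
        by_contra hc
        exact hx (((hP t rfl).1 u (htu.symm.mono (by omega))).symm.trans hux)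
      have hple : (2:ℤ) ^ k ≤ 2 ^ m (s t) := pow_le_pow_right₀ (by norm_num) hle
      have hall : ∀ t', s t' = s t → DD (k + 1) t' t := by
        intro t' ht'
        have f1 := (((hu (s t)).2 t' ht').trans ((hu (s t)).2 t rfl).symm)
        rcases lt_or_eq_of_le hle with hl | hl
        · exact f1.mono (by omega)
        · rw [← hl] at f1
          rcases f1.half with f4 | f4
          · exact f4
          · exfalso
            have f5 : DD (k + 1) t' u :=
              (f4.comb ht2 (y := u + 2 ^ (k + 1)) (by rw [hpp]; ring)).trans (DD.addpow u le_rfl)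
            have := h.foreign hP (by rw [hux]; exact hx) ht' f5
            omega
      have hA : ¬ RA m ρ (k + 1) u (s t) := fun hA =>
        nab t ht2 ((hall _ (hu.base _)).symm.trans hA.2)
      have hB : ¬ RB m ρ (k + 1) u g1' (s t) := fun hB => hy (rbY _ hB)
      refine ⟨hPer1 _ hx hy hz, by omega, by linarith, fun t' ht' => ?_⟩
      exact (hall t' ((h.keepO hz hA hB t').1 ht').1).trans ht
  have hyb2 : DD (m y + 1) (q - 2 ^ k - (2 ^ (k+1) - (u - q))) (ρ1 y + 2 ^ m y) := by
    rw [hyk]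
    exact hb2.trans (hρyu.symm.cg (by ring))
  by_cases hA : RA m ρ (k + 1) u x
  · -- `x` is resident: the hole is followed by `x`
    have hz1 : ∀ t, s1 t = z ↔ s t = z := by
      intro t
      constructor
      · intro ht
        simp only [hs1, mv, mvQ] at ht
        split_ifs at ht with c1 c2 c3
        · have := (cly _).2 (by have := MoveH.toB (g := g1') t c1; rwa [e1] at this)
          exact absurd (ht.symm.trans this) hzy
        · rw [ht] at c3; omega
        · exfalso
          have f1 := MoveH.toA _ c2
          by_cases fx : s (t + g1') = x
          · rw [fx] at c3; exact c3 hA.1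
          by_cases fy : s (t + g1') = y
          · have := (cly _).1 fy
            rw [← e1] at this
            exact h.ab f1 this
          · exact c3 (h.foreign (hPer _ fx fy) (by rw [hux]; exact fx) rfl f1)
        · exact ht
      · intro ht
        have f1 := (clz t).1 ht
        have f2 : ¬ DD (k + 1) t u := fun f2 => DD.nsmall (a := u) (g := u - q) (k := k + 1)
          (by linarith) (by linarith) ((f2.symm.trans f1).cg (by ring))
        have f3 : ¬ DD (k + 1) t (u - g1') := fun f3 => by
          rw [e1] at f3
          have f4 : DD (k + 1) t (q + 2 ^ k) := f3.comb (DD.subpow 0 (le_refl (k+1)))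
            (by rw [hpp]; ring)
          exact DD.nboth f1 f4
        simp only [hs1, mv, mvQ, f2, f3, if_false]; exact ht
    have ho1' : ∀ σ, σ ≠ x → σ ≠ y → cnt M s1 σ = cnt M s σ := by
      intro σ h1 h2
      by_cases h3 : σ = z
      · subst h3; exact cnt_congr hz1
      · exact ho1 σ h1 h2 h3
    refine Res.of_conn hM hp1 hc1 ho1' (le_of_eq (cnt_shift hp hp1 _ (h.keepA hA))) ?_
    refine step1 hM hu1 hp1 hxy (fun σ h1 h2 => per_of (hM σ) hu1 hp1 ?_) (u := q - 2 ^ k)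
      ?_ ?_ hkM (g := 2 ^ (k+1) - (u - q)) (by linarith) (by linarith) (by omega) hyb2 Hb2
    · have := hBin σ h1 h2
      unfold Bin at this; rw [← ho1' σ h1 h2] at this; exact this
    · rw [hs1, h.keepA hA, hg1', show q - 2 ^ k + (u - q + 2 ^ k) = u by ring]; exact hux
    · simp only [hρ1, MoveH.newρ, hA, if_true]
      exact fun e => hue (e.cg (by rw [hg1']; ring))
  · -- `x` is foreign
    have hmx : m x < k + 1 := by
      by_contra hc
      exact hA (by have := h.occA (DD.refl _ u) (by rw [hux]; omega); rwa [hux] at this)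
    have hX : s1 (q - 2 ^ k) = z := by
      have f0 : DD (k + 1) (q - 2 ^ k) (u - g1') := by rw [e1]; exact DD.refl _ _
      have f1 : ¬ DD (k + 1) (q - 2 ^ k) u := fun f => h.ab f f0
      have f2 : ¬ (k + 1 ≤ m (s (q - 2 ^ k + g1'))) := by
        rw [hg1', show q - 2 ^ k + (u - q + 2 ^ k) = u by ring, hux]; omega
      simp only [hs1, mv, mvQ, f0, f1, f2, if_true, if_false]
    have hzne : ¬ DD (k + 1) (q - 2 ^ k) (ρ z) := fun f => by
      have f1 : DD (k + 1) q (q - 2 ^ k) := hqz.trans f.symm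
      exact DD.nsmall hp0 (by linarith) f1
    have h2 : MoveH m s1 ρ1 (k + 1) (q - 2 ^ k) (2 ^ (k+1) - (u - q)) y := by
      refine ⟨hu1, by linarith, by linarith, ?_, ?_, Hb2, by omega, hyb2⟩
      · rw [hX, hzk, hρz]; exact hzne
      · intro t ht hit
        right
        refine hPer1 _ ?_ ?_ ?_ <;> (intro e; rw [e] at hit; omega)
    set s2 := mv m s1 (k + 1) (q - 2 ^ k) (2 ^ (k+1) - (u - q)) y with hs2
    have hp2 : Pd M s2 := h2.per hkM hp1
    have hz2A : ¬ RA m ρ1 (k + 1) (q - 2 ^ k) z := fun f => by have := f.1; omega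
    have hz2B : ¬ RB m ρ1 (k + 1) (q - 2 ^ k) (2 ^ (k+1) - (u - q)) z := fun f => by
      have f1 := f.2
      rw [hρz] at f1
      exact nzz _ (f1.trans hb2) hqz.symm
    have hz2 : ∀ t, s2 t = z ↔ s t = z := by
      intro t
      rw [hs2, h2.keepO hzy hz2A hz2B]
      constructor
      · rintro ⟨ht, hn⟩
        simp only [hs1, mv, mvQ] at ht
        rw [e1] at ht
        split_ifs at ht with c1
        · have := (cly _).2 (by have := MoveH.toB (g := g1') t c1; rwa [e1] at this)
          exact absurd (ht.symm.trans this) hzy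
        · exact ht
      · intro ht
        have f1 := (clz t).1 ht
        have f2 : ¬ DD (k + 1) t u := fun f2 => DD.nsmall (a := u) (g := u - q) (k := k + 1)
          (by linarith) (by linarith) ((f2.symm.trans f1).cg (by ring))
        have f3 : ¬ DD (k + 1) t (q - 2 ^ k) := fun f3 => hzne (f3.symm.trans (f1.trans hqz))
        refine ⟨?_, f3⟩
        rw [← e1] at f3
        simp only [hs1, mv, mvQ, f2, f3, if_false]; exact ht
    have hx1 : cnt M s1 x < cnt M s x := by
      refine cnt_lt hp hp1 (fun t ht => ((h.keepO hzx.symm hA hxB t).1 ht).1) hux (fun e => ?_)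
      exact ((h.keepO hzx.symm hA hxB u).1 e).2 (DD.refl _ _)
    have hx2 : cnt M s2 x ≤ cnt M s1 x := by
      have hA2 : ¬ RA m ρ1 (k + 1) (q - 2 ^ k) x := fun f => by have := f.1; omega
      by_cases hB2 : RB m ρ1 (k + 1) (q - 2 ^ k) (2 ^ (k+1) - (u - q)) x
      · exact le_of_eq (cnt_shift hp1 hp2 _ (h2.keepB hB2))
      · exact cset_shift_le 0 (hp1.pred x)
          (fun t ht => by rw [add_zero]; exact ((h2.keepO hxy hA2 hB2 t).1 ht).1)
    refine ⟨s2, _, h2.uni', hp2, hc1.tr hM hp1 hp2 (h2.conn hM), fun σ f1 f2 => ?_, by omega⟩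
    by_cases f3 : σ = z
    · subst f3; exact cnt_congr hz2
    · exact (h2.other_cnt hkM hp1 f2 (by rw [hX]; exact f3) (hPer1 σ f1 f2 f3)).trans
        (ho1 σ f1 f2 f3)

theorem step {M : ℕ} {m : A → ℕ} {s : ℤ → A} {ρ : A → ℤ} {x y : A} {u q : ℤ}
    (hM : ∀ σ, m σ + 1 ≤ M) (hu : Uni m s ρ) (hp : Pd M s) (hxy : x ≠ y)
    (hBin : ∀ σ, σ ≠ x → σ ≠ y → Bin M m s σ) (hux : s u = x)
    (hue : ¬ DD (m x + 1) u (ρ x)) (hqy : DD (m y + 1) q (ρ y + 2 ^ m y)) (hq : s q ≠ y) :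
    Res M m s x y := by
  have hPer : ∀ σ, σ ≠ x → σ ≠ y → Per m s σ := fun σ h1 h2 => per_of (hM σ) hu hp (hBin σ h1 h2)
  by_cases h0 : ∃ t, s t = x ∧ ¬ DD (m x + 1) t (ρ x) ∧ DD (m y + 1) t (ρ y + 2 ^ m y)
  · obtain ⟨t, h1, h2, h3⟩ := h0
    exact case0 hM hu hp hxy h1 h2 h3
  have hn : ∀ t, s t = x → ¬ DD (m x + 1) t (ρ x) → ¬ DD (m y + 1) t (ρ y + 2 ^ m y) :=
    fun t h1 h2 h3 => h0 ⟨t, h1, h2, h3⟩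
  have hnoX := noX hu hxy hux hue hn
  obtain ⟨z, hz⟩ : ∃ z, s q = z := ⟨_, rfl⟩
  have hzx : z ≠ x := by rw [← hz]; exact hnoX q hqy
  have hzy : z ≠ y := by rw [← hz]; exact hq
  rcases lohi_of (hM z) hu hp (hBin z hzx hzy) with hlow | hhigh
  swap
  · exact stepHigh hM hu hp hxy hzx hzy hPer hux hue hhigh hz hqy
  have hle := le_of_inB hu hzy (hPer z hzx hzy) hz hqy
  obtain ⟨q', e1, e2, e3⟩ := window (m z + 1) u q
  have hq' : s q' = z := (hPer z hzx hzy q hz).1 q' e1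
  have hqy' : DD (m y + 1) q' (ρ y + 2 ^ m y) := (e1.mono (by omega)).trans hqy
  have hne : q' ≠ u := by rintro rfl; exact hzx (hq'.symm.trans hux)
  by_cases hg : (2:ℤ) ^ m z ≤ u - q'
  · exact stepL1 hM hu hp hxy hzx hzy hPer hux hue hlow hq' hqy' hle hg (by linarith)
  have hlt : q' < u := lt_of_le_of_ne e2 hne
  rcases lt_or_eq_of_le hle with hl | hl
  · by_cases hv : ∃ v, s v = y ∧ DD (m z + 1) v (q' + 2 ^ m z)
    · obtain ⟨v, v1, v2⟩ := hv
      exact stepL2a hM hu hp hxy hzx hzy hBin hux hue hlow hq' hqy' hl hnoX hlt (by linarith) v1 v2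
    · exact stepL2b hM hu hp hxy hzx hzy hPer hux hue hq' hqy' hl hnoX hlow hlt (by linarith)
        (fun v v1 v2 => hv ⟨v, v2, v1⟩)
  · by_cases hx2 : ∃ t, DD (m z + 1) t (u + 2 ^ m z) ∧ s t = x ∧ ¬ DD (m x + 1) t (ρ x)
    · obtain ⟨t, t1, t2, t3⟩ := hx2
      have hpp : (2:ℤ) ^ (m z + 1) = 2 * 2 ^ m z := by rw [pow_succ]; ring
      have f1 : DD (m z + 1) (t - (u - q' + 2 ^ m z)) q' := t1.cg (by ring)
      refine stepL1 hM hu hp hxy hzx hzy hPer t2 t3 hlow (q := t - (u - q' + 2 ^ m z))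
        ((hPer z hzx hzy q' hq').1 _ f1) ((f1.mono (by omega)).trans hqy') hle (by linarith)
        (by linarith)
    · refine stepL3b hM hu hp hxy hzx hzy hBin hux hue hlow hq' hqy' hl rfl hlt (by linarith) ?_
      intro t t1 t2
      by_contra t3
      exact hx2 ⟨t, t1, t2, t3⟩

/-! ### Redistribution of mass -/

theorem edge [Fintype A] {M : ℕ} {m : A → ℕ} (hM : ∀ σ, m σ + 1 ≤ M) {x y : A} (hxy : x ≠ y) :
    ∀ (N : ℕ) (s : ℤ → A) (ρ : A → ℤ), cnt M s x = N → Uni m s ρ → Pd M s →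
    (∀ σ, σ ≠ x → σ ≠ y → Bin M m s σ) → cnt M s x ≠ lo M m x → cnt M s y ≠ hi M m y →
    ∃ s' ρ', Uni m s' ρ' ∧ Pd M s' ∧ Conn m s s' ∧
      (∀ σ, σ ≠ x → σ ≠ y → cnt M s' σ = cnt M s σ) ∧ cnt M s' x < cnt M s x ∧
      (cnt M s' x = lo M m x ∨ cnt M s' y = hi M m y) := by
  intro N
  induction N using Nat.strong_induction_on with
  | _ N ih =>
    intro s ρ hN hu hp hBin hx hy
    have h1 : ∃ u, s u = x ∧ ¬ DD (m x + 1) u (ρ x) := by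
      by_contra hc
      push Not at hc
      exact hx (eq_lo_of (hM x) hu hc)
    have h2 : ∃ t, DD (m y) t (ρ y) ∧ s t ≠ y := by
      by_contra hc
      push Not at hc
      exact hy (eq_hi_of (hM y) hu hc)
    obtain ⟨u, hux, hue⟩ := h1
    obtain ⟨q, hq1, hq⟩ := h2
    have hqy := hq1.half.resolve_left (fun h => hq ((hu y).1 q h))
    obtain ⟨s1, ρ1, hu1, hp1, hc1, ho1, hx1⟩ := step hM hu hp hxy hBin hux hue hqy hq
    by_cases hd : cnt M s1 x = lo M m x ∨ cnt M s1 y = hi M m y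
    · exact ⟨s1, ρ1, hu1, hp1, hc1, ho1, hx1, hd⟩
    · push Not at hd
      obtain ⟨s2, ρ2, hu2, hp2, hc2, ho2, hx2, hd2⟩ := ih _ (by omega) s1 ρ1 rfl hu1 hp1
        (fun σ f1 f2 => by
          have := hBin σ f1 f2
          unfold Bin at this ⊢; rw [ho1 σ f1 f2]; exact this) hd.1 hd.2
      exact ⟨s2, ρ2, hu2, hp2, hc1.tr hM hp1 hp2 hc2,
        fun σ f1 f2 => (ho2 σ f1 f2).trans (ho1 σ f1 f2), by omega, hd2⟩

theorem sum_two [Fintype A] {f f' : A → ℕ} {x y : A} (hxy : x ≠ y) (h : ∑ σ, f σ = ∑ σ, f' σ)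
    (e : ∀ σ, σ ≠ x → σ ≠ y → f' σ = f σ) : f' x + f' y = f x + f y := by
  have k : ∀ F : A → ℕ, ∑ σ, F σ = F x + (F y + ∑ σ ∈ (Finset.univ.erase x).erase y, F σ) := by
    intro F
    rw [Finset.add_sum_erase _ _ (by simp [hxy.symm]), Finset.add_sum_erase _ _ (by simp)]
  rw [k f, k f'] at h
  have : ∑ σ ∈ (Finset.univ.erase x).erase y, f' σ = ∑ σ ∈ (Finset.univ.erase x).erase y, f σ := by
    apply Finset.sum_congr rfl
    intro σ hσ
    simp only [Finset.mem_erase, Finset.mem_univ, and_true] at hσ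
    exact e σ hσ.2 hσ.1
  omega

theorem redistribute [Fintype A] {M : ℕ} {m : A → ℕ} (hM : ∀ σ, m σ + 1 ≤ M) {z : A} {tgt : A → ℕ}
    (htl : ∀ σ, lo M m σ ≤ tgt σ) (hth : ∀ σ, tgt σ ≤ hi M m σ) (hts : ∑ σ, tgt σ = 2 ^ M)
    (htz : ∀ σ, σ ≠ z → tgt σ = lo M m σ ∨ tgt σ = hi M m σ) :
    ∀ (N : ℕ) (s : ℤ → A) (ρ : A → ℤ),
    ∑ σ ∈ Finset.univ.erase z, ((cnt M s σ : ℤ) - tgt σ).natAbs = N → Uni m s ρ → Pd M s →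
    (∃ m0, ∀ σ, σ ≠ m0 → Bin M m s σ) →
    ∃ s' ρ', Uni m s' ρ' ∧ Pd M s' ∧ Conn m s s' ∧ ∀ σ, cnt M s' σ = tgt σ := by
  intro N
  induction N using Nat.strong_induction_on with
  | _ N ih =>
    intro s ρ hN hu hp hm0
    obtain ⟨m0, hm0⟩ := hm0
    by_cases hdone : ∀ σ, cnt M s σ = tgt σ
    · exact ⟨s, ρ, hu, hp, ⟨0, 0, s, fun σ => (hu σ).val, fun _ _ => rfl, fun _ _ => rfl⟩, hdone⟩
    have hsum : ∑ σ, cnt M s σ = ∑ σ, tgt σ := by rw [sum_cnt, hts]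
    have hover : ∃ X, tgt X < cnt M s X := by
      by_contra hc
      push Not at hc
      apply hdone
      intro σ
      exact (Finset.sum_eq_sum_iff_of_le (fun i _ => hc i)).1 hsum σ (Finset.mem_univ _)
    have hunder : ∃ Y, cnt M s Y < tgt Y := by
      by_contra hc
      push Not at hc
      apply hdone
      intro σ
      exact ((Finset.sum_eq_sum_iff_of_le (fun i _ => hc i)).1 hsum.symm σ (Finset.mem_univ _)).symm
    obtain ⟨X, hX⟩ := hover
    obtain ⟨Y, hY⟩ := hunder
    have hX1 : cnt M s X ≠ lo M m X := by have := htl X; omega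
    have hY1 : cnt M s Y ≠ hi M m Y := by have := hth Y; omega
    have hsel : ∃ x y, x ≠ y ∧ cnt M s x ≠ lo M m x ∧ cnt M s y ≠ hi M m y ∧
        (x ≠ z → tgt x < cnt M s x) ∧ (y ≠ z → cnt M s y < tgt y) ∧
        ∀ σ, σ ≠ x → σ ≠ y → Bin M m s σ := by
      have hXY : X ≠ Y := by rintro rfl; omega
      by_cases hb : Bin M m s m0
      · refine ⟨X, Y, hXY, hX1, hY1, fun _ => hX, fun _ => hY, fun σ _ _ => ?_⟩
        by_cases h : σ = m0
        · rw [h]; exact hb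
        · exact hm0 σ h
      have hb' := hb
      unfold Bin at hb'
      push Not at hb'
      by_cases hz : m0 = z
      · by_cases hXm : X = m0
        · exact ⟨X, Y, hXY, hX1, hY1, fun _ => hX, fun _ => hY,
            fun σ h _ => hm0 σ (by rw [← hXm]; exact h)⟩
        · exact ⟨X, m0, hXm, hX1, hb'.2, fun _ => hX, fun h => absurd hz h, fun σ _ h => hm0 σ h⟩
      · rcases lt_trichotomy (cnt M s m0) (tgt m0) with h | h | h
        · exact ⟨X, m0, by rintro rfl; omega, hX1, hb'.2, fun _ => hX, fun _ => h,
            fun σ _ h => hm0 σ h⟩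
        · have := htz m0 hz
          rw [← h] at this
          exact absurd this hb
        · exact ⟨m0, Y, by rintro rfl; omega, hb'.1, hY1, fun _ => h, fun _ => hY,
            fun σ h _ => hm0 σ h⟩
    obtain ⟨x, y, hxy, hx, hy, hxt, hyt, hBin⟩ := hsel
    obtain ⟨s1, ρ1, hu1, hp1, hc1, ho1, hx1, hd1⟩ := edge hM hxy _ s ρ rfl hu hp hBin hx hy
    have htwo := sum_two (f := cnt M s) (f' := cnt M s1) hxy (by rw [sum_cnt, sum_cnt]) ho1
    have hxd : x ≠ z → ((cnt M s1 x : ℤ) - tgt x).natAbs < ((cnt M s x : ℤ) - tgt x).natAbs := by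
      intro h
      have h1 := hxt h
      have h2 := htz x h
      have h3 := le_hi (hM x) hu
      have h4 := lo_le (hM x) hu1
      omega
    have hyd : y ≠ z → ((cnt M s1 y : ℤ) - tgt y).natAbs < ((cnt M s y : ℤ) - tgt y).natAbs := by
      intro h
      have h1 := hyt h
      have h2 := htz y h
      have h3 := lo_le (hM y) hu
      have h4 := le_hi (hM y) hu1
      omega
    have hlt : ∑ σ ∈ Finset.univ.erase z, ((cnt M s1 σ : ℤ) - tgt σ).natAbs < N := by
      rw [← hN]
      apply Finset.sum_lt_sum
      · intro σ hσ
        have hσz : σ ≠ z := (Finset.mem_erase.1 hσ).1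
        by_cases h1 : σ = x
        · subst h1; exact (hxd hσz).le
        by_cases h2 : σ = y
        · subst h2; exact (hyd hσz).le
        rw [ho1 σ h1 h2]
      · by_cases h1 : x = z
        · have : y ≠ z := fun h => hxy (h1.trans h.symm)
          exact ⟨y, by simp [this], hyd this⟩
        · exact ⟨x, by simp [h1], hxd h1⟩
    have hm1 : ∃ m1, ∀ σ, σ ≠ m1 → Bin M m s1 σ := by
      have hoB : ∀ σ, σ ≠ x → σ ≠ y → Bin M m s1 σ := fun σ f1 f2 => by
        have := hBin σ f1 f2
        unfold Bin at this ⊢; rw [ho1 σ f1 f2]; exact this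
      rcases hd1 with h | h
      · refine ⟨y, fun σ hσ => ?_⟩
        by_cases h1 : σ = x
        · subst h1; exact Or.inl h
        · exact hoB σ h1 hσ
      · refine ⟨x, fun σ hσ => ?_⟩
        by_cases h1 : σ = y
        · subst h1; exact Or.inr h
        · exact hoB σ hσ h1
    obtain ⟨s2, ρ2, hu2, hp2, hc2, ho2⟩ := ih _ hlt s1 ρ1 rfl hu1 hp1 hm1
    exact ⟨s2, ρ2, hu2, hp2, hc1.tr hM hp1 hp2 hc2, ho2⟩

/-! ### Conversion between finite strings and periodic strings -/

def PRep (M : ℕ) (s : PStr A) (S : ℤ → A) : Prop :=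
  (∀ i : ℕ, 1 ≤ i → i ≤ 2 ^ M → s i = some (S i)) ∧
  (∀ i : ℕ, ¬ (1 ≤ i ∧ i ≤ 2 ^ M) → s i = none) ∧ Pd M S

theorem PRep.iff {M : ℕ} {s : PStr A} {S : ℤ → A} (h : PRep M s S) (i : ℕ) (σ : A) :
    s i = some σ ↔ 1 ≤ i ∧ i ≤ 2 ^ M ∧ S i = σ := by
  by_cases hi : 1 ≤ i ∧ i ≤ 2 ^ M
  · rw [h.1 i hi.1 hi.2]; simp [hi]
  · rw [h.2.1 i hi]
    constructor
    · intro h; simp at h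
    · rintro ⟨a, b, _⟩; exact absurd ⟨a, b⟩ hi

theorem PRep.dom {M : ℕ} {s : PStr A} {S : ℤ → A} (h : PRep M s S) :
    s.dom = Set.Icc 1 (2 ^ M) := by
  ext i
  show (s i).isSome = true ↔ _
  rw [Set.mem_Icc]
  by_cases hi : 1 ≤ i ∧ i ≤ 2 ^ M
  · rw [h.1 i hi.1 hi.2]; simp [hi]
  · rw [h.2.1 i hi]; simp only [Option.isSome_none, Bool.false_eq_true, false_iff]; exact hi

theorem PRep.ncard {M : ℕ} {s : PStr A} {S : ℤ → A} (h : PRep M s S) (σ : A) :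
    {i : ℕ | s i = some σ}.ncard = cnt M S σ := by
  have hp' : Pd M (fun t => S (t + 1)) := fun t => by
    have := h.2.2 (t + 1)
    show S (t + 2 ^ M + 1) = S (t + 1)
    rw [← this]; congr 1; ring
  rw [← cnt_shift h.2.2 hp' (σ := σ) 1 (fun t => Iff.rfl)]
  have e : {i : ℕ | s i = some σ} =
      ((cset M (fun t => S (t + 1) = σ)).image (fun t => t.toNat + 1) : Set ℕ) := by
    ext i
    simp only [Set.mem_setOf_eq, h.iff, cset, Finset.coe_image, Set.mem_image, Finset.mem_coe,
      Finset.mem_filter, Finset.mem_Ico]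
    constructor
    · rintro ⟨a, b, c⟩
      refine ⟨(i:ℤ) - 1, ⟨⟨by omega, ?_⟩, by simpa using c⟩, by omega⟩
      have : (i:ℤ) ≤ 2 ^ M := by exact_mod_cast b
      linarith
    · rintro ⟨t, ⟨⟨a, b⟩, c⟩, rfl⟩
      have e : ((t.toNat + 1 : ℕ) : ℤ) = t + 1 := by omega
      refine ⟨by omega, ?_, by rw [e]; exact c⟩
      have : ((t.toNat + 1 : ℕ) : ℤ) ≤ 2 ^ M := by rw [e]; linarith
      exact_mod_cast this
  rw [e, Set.ncard_coe_finset, Finset.card_image_of_injOn]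
  · rfl
  · intro t ht t' ht' hh
    simp only [cset, Finset.coe_filter, Finset.mem_Ico, Set.mem_setOf_eq] at ht ht' hh
    omega

theorem sat_core {N j r i : ℕ} (hj : j ≤ N) (h1 : 1 ≤ r) (h2 : r ≤ 2 ^ j) :
    (∃ m : ℕ, m < 2 ^ N / 2 ^ j ∧ i = r + m * 2 ^ j) ↔ 1 ≤ i ∧ i ≤ 2 ^ N ∧ DD j i r := by
  have hpow : 2 ^ N = 2 ^ (N - j) * 2 ^ j := by rw [← pow_add]; congr 1; omega
  have hpos : 0 < 2 ^ j := by positivity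
  have hdiv : 2 ^ N / 2 ^ j = 2 ^ (N - j) := by rw [hpow]; exact Nat.mul_div_cancel _ hpos
  rw [hdiv]
  constructor
  · rintro ⟨m, hm, rfl⟩
    refine ⟨by omega, ?_, ⟨m, by push_cast; ring⟩⟩
    rw [hpow]; nlinarith
  · rintro ⟨a, b, c, hc⟩
    have hposZ : (0:ℤ) < 2 ^ j := by positivity
    have h2Z : (r:ℤ) ≤ 2 ^ j := by exact_mod_cast h2
    have hc0 : 0 ≤ c := by
      by_contra hneg
      have : (2:ℤ) ^ j * c ≤ 2 ^ j * (-1) := mul_le_mul_of_nonneg_left (by omega) hposZ.le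
      have : (1:ℤ) ≤ i := by exact_mod_cast a
      linarith
    obtain ⟨m, rfl⟩ := Int.eq_ofNat_of_zero_le hc0
    have e : i = r + m * 2 ^ j := by
      have : (i:ℤ) = r + m * 2 ^ j := by linarith
      exact_mod_cast this
    refine ⟨m, ?_, e⟩
    by_contra hc
    push Not at hc
    have : 2 ^ (N - j) * 2 ^ j ≤ m * 2 ^ j := Nat.mul_le_mul_right _ hc
    omega

theorem sat_mem {N : ℕ} {J : Set ℕ} {j : ℕ} (hj : j ≤ N) (h : IsSatAP N J (2 ^ j)) :
    ∃ r : ℕ, 1 ≤ r ∧ r ≤ 2 ^ j ∧ ∀ i : ℕ, i ∈ J ↔ 1 ≤ i ∧ i ≤ 2 ^ N ∧ DD j i r := by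
  obtain ⟨_, r, h1, h2, h3⟩ := h
  refine ⟨r, h1, h2, fun i => ?_⟩
  rw [h3]; exact sat_core hj h1 h2

theorem sat_mk {N j : ℕ} (hj : j ≤ N) (r : ℤ) :
    IsSatAP N {i : ℕ | 1 ≤ i ∧ i ≤ 2 ^ N ∧ DD j i r} (2 ^ j) := by
  refine ⟨⟨j, hj, rfl⟩, ?_⟩
  obtain ⟨t, h1, h2, h3⟩ := exists_class j r 1
  obtain ⟨r', rfl⟩ := Int.eq_ofNat_of_zero_le (show 0 ≤ t by omega)
  have h1' : 1 ≤ r' := by exact_mod_cast h1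
  have h2' : r' ≤ 2 ^ j := by
    have : (r':ℤ) ≤ 2 ^ j := by linarith
    exact_mod_cast this
  refine ⟨r', h1', h2', ?_⟩
  ext i
  show (1 ≤ i ∧ i ≤ 2 ^ N ∧ DD j i r) ↔ ∃ m : ℕ, m < 2 ^ N / 2 ^ j ∧ i = r' + m * 2 ^ j
  rw [sat_core hj h1' h2']
  exact ⟨fun ⟨a, b, c⟩ => ⟨a, b, c.trans h3.symm⟩, fun ⟨a, b, c⟩ => ⟨a, b, c.trans h3⟩⟩

theorem exists_rep {M : ℕ} {s : PStr A} (a0 : A) (h : s.dom = Set.Icc 1 (2 ^ M)) :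
    ∃ S, PRep M s S := by
  have hpos : (0:ℤ) < 2 ^ M := by positivity
  refine ⟨fun t => (s (((t - 1) % 2 ^ M).toNat + 1)).getD a0, ?_, ?_, ?_⟩
  · intro i h1 h2
    have e : (((i:ℤ) - 1) % 2 ^ M).toNat + 1 = i := by
      have h2' : (i:ℤ) ≤ 2 ^ M := by exact_mod_cast h2
      rw [Int.emod_eq_of_lt (by omega) (by linarith)]; omega
    have hd : i ∈ s.dom := by rw [h]; exact ⟨h1, h2⟩
    have hd' : (s i).isSome = true := hd
    simp only [e]
    obtain ⟨w, hw⟩ := Option.isSome_iff_exists.1 hd'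
    rw [hw]; rfl
  · intro i hi
    have hd : ¬ (s i).isSome = true := by
      intro hd
      have : i ∈ s.dom := hd
      rw [h] at this
      exact hi this
    simpa using hd
  · intro t
    have : (t + 2 ^ M - 1) % 2 ^ M = (t - 1) % 2 ^ M := by
      rw [show t + 2 ^ M - 1 = (t - 1) + 2 ^ M by ring, Int.add_emod_right]
    simp only [this]

theorem idx (M : ℕ) (t : ℤ) : ∃ i : ℕ, 1 ≤ i ∧ i ≤ 2 ^ M ∧ DD M i t := by
  obtain ⟨t', h1, h2, h3⟩ := exists_class M t 1
  obtain ⟨i, rfl⟩ := Int.eq_ofNat_of_zero_le (show 0 ≤ t' by omega)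
  refine ⟨i, by exact_mod_cast h1, ?_, h3⟩
  have : (i:ℤ) ≤ 2 ^ M := by linarith
  exact_mod_cast this

theorem san_of_sat {M k : ℕ} (hk : k + 1 ≤ M) {s : PStr A} {S : ℤ → A} (h : PRep M s S) {σ : A}
    {J₁ J₂ : Set ℕ} (h1 : IsSatAP M J₁ (2 ^ (k + 1))) (h2 : IsSatAP M J₂ (2 ^ k))
    (h3 : J₁ ⊆ {i : ℕ | s i = some σ}) (h4 : {i : ℕ | s i = some σ} ⊆ J₂) :
    ∃ r, San k σ S r := by
  obtain ⟨r1, a1, a2, a3⟩ := sat_mem hk h1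
  obtain ⟨r2, b1, b2, b3⟩ := sat_mem (by omega) h2
  refine ⟨r1, ?_, ?_⟩
  · intro t ht
    obtain ⟨i, i1, i2, i3⟩ := idx M t
    have : i ∈ J₁ := (a3 i).2 ⟨i1, i2, (i3.mono hk).trans ht⟩
    have := h3 this
    have := ((h.iff i σ).1 this).2.2
    rw [← h.2.2.dd i3]; exact this
  · intro t ht
    obtain ⟨i, i1, i2, i3⟩ := idx M t
    have f1 : s i = some σ := (h.iff i σ).2 ⟨i1, i2, by rw [h.2.2.dd i3]; exact ht⟩
    have f2 := ((b3 i).1 (h4 f1)).2.2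
    have hr : r1 ≤ 2 ^ M := a2.trans (Nat.pow_le_pow_right (by norm_num) hk)
    have f3 : r1 ∈ J₁ := (a3 r1).2 ⟨a1, hr, DD.refl _ _⟩
    have f4 := ((b3 r1).1 (h4 (h3 f3))).2.2
    exact ((i3.mono (by omega)).symm.trans f2).trans f4.symm

theorem uniform_of [Fintype A] {F : Frame A} {m : A → ℕ} (hm : ∀ σ, F.val σ = m σ + 1)
    (hM : ∀ σ, m σ + 1 ≤ F.M) {p : A → ℝ} {s : PStr A} {S : ℤ → A} {ρ : A → ℤ} (h : PRep F.M s S)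
    (hu : Uni m S ρ) (hc : ∀ σ, (cnt F.M S σ : ℝ) = p σ * 2 ^ F.M) : s.Uniform F p := by
  refine ⟨h.dom, fun σ => by rw [h.ncard, hc], fun σ _ => ?_⟩
  refine ⟨_, _, sat_mk (N := F.M) (j := F.val σ) (by rw [hm]; exact hM σ) (ρ σ),
    sat_mk (N := F.M) (j := F.val σ - 1) (by have := hm σ; have := hM σ; omega) (ρ σ), ?_, ?_⟩
  · rintro i ⟨i1, i2, i3⟩
    rw [hm] at i3
    exact (h.iff i σ).2 ⟨i1, i2, (hu σ).1 _ i3⟩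
  · intro i hi
    obtain ⟨i1, i2, i3⟩ := (h.iff i σ).1 hi
    refine ⟨i1, i2, ?_⟩
    rw [hm]; exact (hu σ).2 _ i3

theorem lo_real {M : ℕ} {m : A → ℕ} {σ : A} (h : m σ + 1 ≤ M) :
    (2:ℝ) ^ (-((m σ + 1 : ℕ) : ℤ)) * 2 ^ M = (lo M m σ : ℝ) := by
  unfold lo
  push_cast
  rw [← zpow_natCast, ← zpow_natCast, ← zpow_add₀ (by norm_num)]
  congr 1; omega

theorem hi_real {M : ℕ} {m : A → ℕ} {σ : A} (h : m σ + 1 ≤ M) :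
    (2:ℝ) ^ (-(((m σ + 1 : ℕ) : ℤ) - 1)) * 2 ^ M = (hi M m σ : ℝ) := by
  unfold hi
  push_cast
  rw [← zpow_natCast, ← zpow_natCast, ← zpow_add₀ (by norm_num)]
  congr 1; omega

theorem binary_iff {F : Frame A} {M : ℕ} {m : A → ℕ} {σ : A} (hm : F.val σ = m σ + 1)
    (h : m σ + 1 ≤ M) {x : ℝ} {c : ℕ} (hc : (c : ℝ) = x * 2 ^ M) :
    BinaryVal F.val σ x → c = lo M m σ ∨ c = hi M m σ := by
  unfold BinaryVal
  rw [hm]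
  rintro (e | e)
  · left; rw [e, lo_real h] at hc; exact_mod_cast hc
  · right; rw [e, hi_real h] at hc; exact_mod_cast hc

theorem exists_tgt [Fintype A] {F : Frame A} {m : A → ℕ} (hm : ∀ σ, F.val σ = m σ + 1)
    (hM : ∀ σ, m σ + 1 ≤ F.M) {p : A → ℝ} (hp : p ∈ PBA F.val) :
    ∃ z : A, ∃ tgt : A → ℕ, (∀ σ, (tgt σ : ℝ) = p σ * 2 ^ F.M) ∧
      ∀ σ, σ ≠ z → tgt σ = lo F.M m σ ∨ tgt σ = hi F.M m σ := by
  obtain ⟨⟨⟨hp0, hp1⟩, hpi⟩, hpb⟩ := hp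
  obtain ⟨a0, _⟩ := F.supp_nonempty
  obtain ⟨z, hz⟩ : ∃ z, ∀ σ, σ ≠ z → BinaryVal F.val σ (p σ) := by
    by_cases h : ∃ z, ¬ BinaryVal F.val z (p z)
    · obtain ⟨z, hz⟩ := h
      exact ⟨z, fun σ hσ => by by_contra hc; exact hσ (hpb σ z hc hz)⟩
    · push Not at h
      exact ⟨a0, fun σ _ => h σ⟩
  have h1 : ∀ σ, ∃ k : ℕ, σ ≠ z → (k : ℝ) = p σ * 2 ^ F.M := by
    intro σ
    by_cases hσ : σ = z
    · exact ⟨0, fun h => absurd hσ h⟩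
    have hb := hz σ hσ
    unfold BinaryVal at hb
    rw [hm] at hb
    rcases hb with e | e
    · exact ⟨lo F.M m σ, fun _ => by rw [e, lo_real (hM σ)]⟩
    · exact ⟨hi F.M m σ, fun _ => by rw [e, hi_real (hM σ)]⟩
  choose k hk using h1
  have h2 : p z * 2 ^ F.M = ((2 ^ F.M - ∑ σ ∈ Finset.univ.erase z, (k σ : ℤ) : ℤ) : ℝ) := by
    have e1 : p z + ∑ σ ∈ Finset.univ.erase z, p σ = 1 := by
      rw [Finset.add_sum_erase _ _ (by simp)]; exact hp1
    have e2 : ∑ σ ∈ Finset.univ.erase z, (k σ : ℝ) = (∑ σ ∈ Finset.univ.erase z, p σ) * 2 ^ F.M := by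
      rw [Finset.sum_mul]
      exact Finset.sum_congr rfl (fun σ hσ => hk σ (Finset.mem_erase.1 hσ).1)
    push_cast
    rw [e2]
    have : p z = 1 - ∑ σ ∈ Finset.univ.erase z, p σ := by linarith
    rw [this]; ring
  have h3 : 0 ≤ (2 ^ F.M - ∑ σ ∈ Finset.univ.erase z, (k σ : ℤ) : ℤ) := by
    have : (0:ℝ) ≤ p z * 2 ^ F.M := mul_nonneg (hp0 z) (by positivity)
    rw [h2] at this
    exact_mod_cast this
  obtain ⟨kz, hkz⟩ := Int.eq_ofNat_of_zero_le h3
  have h4 : ∀ σ, ((if σ = z then kz else k σ : ℕ) : ℝ) = p σ * 2 ^ F.M := by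
    intro σ
    split_ifs with h
    · rw [h, h2, hkz]; simp
    · exact hk σ h
  refine ⟨z, fun σ => if σ = z then kz else k σ, h4, fun σ hσ => ?_⟩
  exact binary_iff (hm σ) (hM σ) (h4 σ) (hz σ hσ)

/-! ### Local compatibility of windows of valid bi-infinite strings -/

def TRep (L : ℕ) (t : PStr A) (V : ℤ → A) : Prop :=
  ∀ (i : ℕ) (σ : A), t i = some σ ↔ 1 ≤ i ∧ i ≤ L ∧ V i = σ

theorem TRep.mk_ite (L : ℕ) (V : ℤ → A) :
    TRep L (fun i => if 1 ≤ i ∧ i ≤ L then some (V i) else none) V := by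
  intro i σ
  by_cases h : 1 ≤ i ∧ i ≤ L
  · simp only [if_pos h, Option.some.injEq]
    exact ⟨fun e => ⟨h.1, h.2, e⟩, fun e => e.2.2⟩
  · simp only [if_neg h]
    exact ⟨fun e => by simp at e, fun e => absurd ⟨e.1, e.2.1⟩ h⟩

theorem TRep.dom {L : ℕ} {t : PStr A} {V : ℤ → A} (h : TRep L t V) : t.dom = Set.Icc 1 L := by
  ext i
  show (t i).isSome = true ↔ _
  rw [Option.isSome_iff_exists, Set.mem_Icc]
  constructor
  · rintro ⟨σ, hσ⟩
    have := (h i σ).1 hσ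
    exact ⟨this.1, this.2.1⟩
  · rintro ⟨a, b⟩
    exact ⟨V i, (h i _).2 ⟨a, b, rfl⟩⟩

theorem TRep.window {k L : ℕ} {t : PStr A} {V : ℤ → A} {σ : A} (h : TRep L t V) (hv : Val k σ V)
    (x : ℕ) (hx : x + 2 ^ (k + 1) ≤ L) :
    ∃ i : ℕ, x < i ∧ i ≤ x + 2 ^ (k + 1) ∧ t i = some σ := by
  obtain ⟨t', h1, h2, h3⟩ := hv.2 (x + 1)
  obtain ⟨i, rfl⟩ := Int.eq_ofNat_of_zero_le (show 0 ≤ t' by omega)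
  have h2' : (i:ℤ) ≤ x + 2 ^ (k + 1) := by linarith
  have h2'' : i ≤ x + 2 ^ (k + 1) := by exact_mod_cast h2'
  exact ⟨i, by omega, h2'', (h i σ).2 ⟨by omega, by omega, h3⟩⟩

theorem TRep.chars {L : ℕ} {t : PStr A} {V : ℤ → A} {m : A → ℕ} (h : TRep L t V)
    (hv : ∀ σ, Val (m σ) σ V) (hL : ∀ σ, 2 ^ (m σ + 1) ≤ L) : t.chars = Set.univ := by
  ext σ
  refine ⟨fun _ => trivial, fun _ => ?_⟩
  obtain ⟨i, _, _, hi⟩ := h.window (hv σ) 0 (by have := hL σ; omega)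
  exact ⟨i, hi⟩

theorem TRep.compat {k L : ℕ} {t : PStr A} {V : ℤ → A} {σ : A} (h : TRep L t V) (hv : Val k σ V)
    (hL : 2 ^ (k + 1) + 2 ^ (k + 1) ≤ L) :
    (2 ^ k : ℕ∞) ≤ t.minGap σ ∧ t.minGap σ ≤ t.maxGap σ ∧ t.maxGap σ ≤ (2 ^ (k + 1) : ℕ∞) := by
  refine ⟨?_, ?_, ?_⟩
  · unfold PStr.minGap
    refine le_sInf ?_
    rintro _ ⟨g, ⟨hg, x, h1, h2⟩, rfl⟩
    have f1 := (h _ _).1 h1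
    have f2 := (h _ _).1 h2
    have f3 := hv.1 _ _ f1.2.2 f2.2.2 (by push_cast; omega)
    have f4 : (2:ℤ) ^ k ≤ g := by push_cast at f3; linarith
    have f5 : 2 ^ k ≤ g := by exact_mod_cast f4
    show (2 ^ k : ℕ∞) ≤ (g : ℕ∞)
    exact_mod_cast f5
  · obtain ⟨x, x1, x2, x3⟩ := h.window hv 0 (by omega)
    have hex : ∃ i : ℕ, x < i ∧ t i = some σ := by
      obtain ⟨i, i1, i2, i3⟩ := h.window hv x (by omega)
      exact ⟨i, i1, i3⟩
    obtain ⟨y1, y2⟩ := Nat.find_spec hex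
    have ymin : ∀ i, i < Nat.find hex → ¬ (x < i ∧ t i = some σ) := fun i hi => Nat.find_min hex hi
    set y := Nat.find hex
    have hxy : x + (y - x) = y := by omega
    have hxd := (h _ _).1 x3
    have hyd := (h _ _).1 y2
    refine le_trans (b := ((y - x : ℕ) : ℕ∞)) ?_ ?_
    · unfold PStr.minGap
      refine sInf_le ⟨y - x, ⟨by omega, x, x3, ?_⟩, rfl⟩
      rw [hxy]; exact y2
    · unfold PStr.maxGap
      refine le_sSup ⟨y - x, ⟨by omega, x, ?_, ?_, ?_⟩, rfl⟩
      · rw [h.dom]; exact ⟨hxd.1, hxd.2.1⟩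
      · rw [h.dom, hxy]; exact ⟨hyd.1, hyd.2.1⟩
      · intro i _ h1 h2 h3
        exact ymin i (by omega) ⟨h1, h3⟩
  · unfold PStr.maxGap
    refine sSup_le ?_
    rintro _ ⟨g, ⟨hg, x, h1, h2, h3⟩, rfl⟩
    have f : g ≤ 2 ^ (k + 1) := by
      by_contra hc
      push Not at hc
      rw [h.dom] at h1 h2
      have h1' := h1.1
      have h2' := h2.2
      obtain ⟨i, i1, i2, i3⟩ := h.window hv x (by omega)
      refine h3 i ?_ i1 (by omega) i3
      rw [h.dom]; exact ⟨by omega, by omega⟩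
    show (g : ℕ∞) ≤ (2 ^ (k + 1) : ℕ∞)
    exact_mod_cast f

theorem PRep.trep {M : ℕ} {s : PStr A} {S : ℤ → A} (h : PRep M s S) : TRep (2 ^ M) s S :=
  fun i σ => h.iff i σ

/-- The finite string read off from a connecting bi-infinite string. -/
theorem arrow_of_conn [Fintype A] {F : Frame A} {m : A → ℕ} (hm : ∀ σ, F.val σ = m σ + 1)
    (hM : ∀ σ, m σ + 2 ≤ F.M) {s s' : PStr A} {S S' : ℤ → A} (hs : PRep F.M s S)
    (hs' : PRep F.M s' S') (hv : ∀ σ, Val (m σ) σ S) (hv' : ∀ σ, Val (m σ) σ S')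
    (hc : Conn m S S') :
    ∃ k : ℕ, 1 ≤ k ∧ ∃ t : PStr A,
        t.dom = Set.Icc 1 (k * 2 ^ F.M) ∧ PStr.StrArrow F s s' t := by
  obtain ⟨a, b, W, hW, hWa, hWb⟩ := hc
  set P : ℕ := 2 ^ F.M with hP
  have hP1 : 1 ≤ P := Nat.one_le_two_pow
  have hPz : (2:ℤ) ^ F.M = (P : ℤ) := by rw [hP]; push_cast; rfl
  obtain ⟨N0, hN0⟩ : ∃ N0 : ℤ, (P:ℤ) + P * N0 < a ∧ N0 ≤ 0 := by
    refine ⟨-((P:ℤ) - a + 1).toNat, ?_, by omega⟩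
    have h1 : ((P:ℤ) - a + 1) ≤ (((P:ℤ) - a + 1).toNat : ℤ) := Int.self_le_toNat _
    have h0 : (0:ℤ) ≤ (((P:ℤ) - a + 1).toNat : ℤ) := by positivity
    have h2 : (1:ℤ) ≤ P := by exact_mod_cast hP1
    nlinarith
  obtain ⟨k', hk'⟩ : ∃ k' : ℕ, b ≤ (k':ℤ) * P + P * N0 := by
    refine ⟨(b - P * N0).toNat, ?_⟩
    have h1 : (b - P * N0) ≤ ((b - P * N0).toNat : ℤ) := Int.self_le_toNat _
    have h0 : (0:ℤ) ≤ ((b - P * N0).toNat : ℤ) := by positivity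
    have h2 : (1:ℤ) ≤ P := by exact_mod_cast hP1
    nlinarith
  set V : ℤ → A := fun i => W (i + P * N0) with hV
  have hVv : ∀ σ, Val (m σ) σ V := by
    intro σ
    refine ⟨fun t t' h1 h2 hl => ?_, fun t => ?_⟩
    · have := (hW σ).1 _ _ h1 h2 (by linarith)
      linarith
    · obtain ⟨t', h1, h2, h3⟩ := (hW σ).2 (t + P * N0)
      refine ⟨t' - P * N0, by linarith, by linarith, ?_⟩
      show W (t' - P * N0 + P * N0) = σ
      rw [sub_add_cancel]; exact h3
  have hT := TRep.mk_ite ((k' + 1) * P) V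
  set t : PStr A := fun i => if 1 ≤ i ∧ i ≤ (k' + 1) * P then some (V i) else none with ht
  have hPL : P ≤ (k' + 1) * P := Nat.le_mul_of_pos_left _ (by omega)
  have hpow : ∀ σ, 2 ^ (m σ + 1) + 2 ^ (m σ + 1) ≤ P := by
    intro σ
    have : 2 ^ (m σ + 2) ≤ P := Nat.pow_le_pow_right (by norm_num) (hM σ)
    rw [pow_succ] at this; omega
  have hpow' : ∀ σ, 2 ^ (m σ + 1) ≤ P := fun σ => by have := hpow σ; omega
  refine ⟨k' + 1, by omega, t, hT.dom, ?_, ?_, ?_, ?_, ?_⟩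
  · rw [hT.chars hVv (fun σ => (hpow' σ).trans hPL), hs.trep.chars hv hpow']
  · rw [hs.trep.chars hv hpow', hs'.trep.chars hv' hpow']
  · intro σ _ _
    rw [hm σ]
    exact hT.compat (hVv σ) ((hpow σ).trans hPL)
  · funext i
    unfold PStr.shift
    rw [← hP]
    by_cases h : 1 ≤ i ∧ i ≤ P
    · rw [if_pos h, hs.1 i h.1 h.2]
      refine (hT _ _).2 ⟨by omega, by omega, ?_⟩
      have e : ((i + (1 - 1) * P : ℕ) : ℤ) = i := by simp
      have hi : (i:ℤ) ≤ P := by exact_mod_cast h.2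
      rw [e]
      show W (i + P * N0) = S i
      rw [hWa _ (by linarith [hN0.1]), ← hPz, hs.2.2.add_mul]
    · rw [if_neg h, hs.2.1 i h]
  · have hmax : t.maxn F = k' + 1 := by
      unfold PStr.maxn
      rw [hT.dom, csSup_Icc (by omega), ← hP]
      rw [show (k' + 1) * P + P - 1 = (P - 1) + P * (k' + 1) by rw [mul_comm]; omega,
        Nat.add_mul_div_left _ _ (by omega), Nat.div_eq_of_lt (by omega)]
      omega
    rw [hmax]
    funext i
    unfold PStr.shift
    rw [← hP]
    by_cases h : 1 ≤ i ∧ i ≤ P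
    · rw [if_pos h, hs'.1 i h.1 h.2]
      have e0 : i + (k' + 1 - 1) * P = i + k' * P := by simp
      rw [e0]
      refine (hT _ _).2 ⟨by omega, by rw [add_mul]; omega, ?_⟩
      show W (((i + k' * P : ℕ) : ℤ) + P * N0) = S' i
      have e : ((i + k' * P : ℕ) : ℤ) + P * N0 = i + P * (k' + N0) := by push_cast; ring
      have hi : (1:ℤ) ≤ i := by exact_mod_cast h.1
      rw [e, hWb _ (by linarith), ← hPz, hs'.2.2.add_mul]
    · rw [if_neg h, hs'.2.1 i h]

end Helpers

/-- **Lemma (connecting uniform strings).** For a finite alphabet `A`, a frame `F` defined on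
all of `A`, pseudo-binary approximations `p, p' ∈ PBA_n`, and any `(n,p)`-uniform string `s`,
there exist an `(n,p')`-uniform string `s'`, a `k ≥ 1`, and a connecting string `t` on
`{1,…,k·2^{M_n}}` with `s →_{n,t} s'`. -/
theorem exists_uniform_string_arrow {A : Type*} [Fintype A] (F : Frame A)
    (hsupp : F.supp = Finset.univ) (p p' : A → ℝ)
    (hp : p ∈ PBA F.val) (hp' : p' ∈ PBA F.val)
    (s : PStr A) (hs : s.Uniform F p) :
    ∃ s' : PStr A, s'.Uniform F p' ∧
      ∃ k : ℕ, 1 ≤ k ∧ ∃ t : PStr A,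
        t.dom = Set.Icc 1 (k * 2 ^ F.M) ∧ PStr.StrArrow F s s' t := by
  set m : A → ℕ := fun σ => F.val σ - 1 with hmdef
  have hm : ∀ σ, F.val σ = m σ + 1 := by
    intro σ
    have := F.val_pos σ (by rw [hsupp]; exact Finset.mem_univ σ)
    simp only [hmdef]; omega
  have hM5 : ∀ σ, m σ + 6 ≤ F.M := by
    intro σ
    have : F.val σ + 5 ≤ F.M :=
      Finset.le_sup (f := fun a => F.val a + 5) (by rw [hsupp]; exact Finset.mem_univ σ)
    have := hm σ
    omega
  have hM : ∀ σ, m σ + 1 ≤ F.M := fun σ => by have := hM5 σ; omega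
  obtain ⟨a0, _⟩ := F.supp_nonempty
  obtain ⟨S, hS⟩ := exists_rep a0 hs.1
  have hρ : ∀ σ, ∃ r, San (m σ) σ S r := by
    intro σ
    obtain ⟨J₁, J₂, h1, h2, h3, h4⟩ := hs.2.2 σ (by rw [hsupp]; exact Finset.mem_univ σ)
    rw [hm σ] at h1 h2
    exact san_of_sat (hM σ) hS h1 h2 h3 h4
  choose ρ hρ using hρ
  have hcnt : ∀ σ, (cnt F.M S σ : ℝ) = p σ * 2 ^ F.M := fun σ => by
    rw [← hS.ncard]; exact hs.2.1 σ
  have hm0 : ∃ m0, ∀ σ, σ ≠ m0 → Bin F.M m S σ := by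
    obtain ⟨z, tg, h1, h2⟩ := exists_tgt hm hM hp
    refine ⟨z, fun σ hσ => ?_⟩
    have e : cnt F.M S σ = tg σ := by
      have := (hcnt σ).trans (h1 σ).symm
      exact_mod_cast this
    have := h2 σ hσ
    rw [← e] at this
    exact this
  obtain ⟨z, tgt, ht1, ht2⟩ := exists_tgt hm hM hp'
  have hpos : (0:ℝ) ≤ 2 ^ F.M := by positivity
  have htl : ∀ σ, lo F.M m σ ≤ tgt σ := by
    intro σ
    have h := mul_le_mul_of_nonneg_right (hp'.1.2 σ).1 hpos
    rw [hm σ, lo_real (hM σ), ← ht1 σ] at h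
    exact_mod_cast h
  have hth : ∀ σ, tgt σ ≤ hi F.M m σ := by
    intro σ
    have h := mul_le_mul_of_nonneg_right (hp'.1.2 σ).2 hpos
    rw [hm σ, hi_real (hM σ), ← ht1 σ] at h
    exact_mod_cast h
  have hts : ∑ σ, tgt σ = 2 ^ F.M := by
    have h : ∑ σ, (tgt σ : ℝ) = 2 ^ F.M := by
      rw [Finset.sum_congr rfl (fun σ _ => ht1 σ), ← Finset.sum_mul, hp'.1.1.2, one_mul]
    exact_mod_cast h
  obtain ⟨S', ρ', hu', hp'', hc, hct⟩ :=
    redistribute hM htl hth hts ht2 _ S ρ rfl hρ hS.2.2 hm0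
  have hS' : PRep F.M (fun i => if 1 ≤ i ∧ i ≤ 2 ^ F.M then some (S' i) else none : PStr A) S' :=
    ⟨fun i h1 h2 => if_pos ⟨h1, h2⟩, fun i h => if_neg h, hp''⟩
  refine ⟨_, uniform_of hm hM hS' hu' (fun σ => by rw [hct, ht1]), ?_⟩
  exact arrow_of_conn hm (fun σ => by have := hM5 σ; omega) hS hS' (fun σ => (hρ σ).val)
    (fun σ => (hu' σ).val) hc
end
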